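/- arXiv:1112.3800 — 4 statements merged into one kernel-verified Lean document; each statement's English description precedes it below -/
import Mathlib

section
/- Let n, k be natural numbers and let F ⊆ ℝⁿ be a set that is closed for the Euclidean topology and Zariski constructible, i.e. F is a finite union of sets of the form {x : a(x) = 0} \ {x : b(x) = 0} with a, b real polynomials in n variables. Then there exists a k-regulous function f : ℝⁿ → ℝ with Z(f) = F. Consequently, the k-regulously closed subsets of ℝⁿ are exactly the Euclidean-closed Zariski constructible subsets of ℝⁿ. -/
section

open MvPolynomial

/-- A function `f : ℝⁿ → ℝ` is `k`-regulous if it is of class `C^k` on all of `ℝⁿ` and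
agrees with a rational function: there are polynomials `p`, `q` with `q ≠ 0` and
`q(x) * f(x) = p(x)` for every `x`. -/
def IsRegulous (n k : ℕ) (f : (Fin n → ℝ) → ℝ) : Prop :=
  ContDiff ℝ k f ∧ ∃ p q : MvPolynomial (Fin n) ℝ, q ≠ 0 ∧
    ∀ x : Fin n → ℝ, eval x q * f x = eval x p

/-- A subset of `ℝⁿ` is Zariski constructible if it is a finite union of differences of
real polynomial zero sets. -/
def ZariskiConstructible (n : ℕ) (F : Set (Fin n → ℝ)) : Prop :=
  ∃ (m : ℕ) (a b : Fin m → MvPolynomial (Fin n) ℝ),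
    F = ⋃ i : Fin m,
      ({x : Fin n → ℝ | eval x (a i) = 0} \ {x : Fin n → ℝ | eval x (b i) = 0})

/-- A subset of `ℝⁿ` is `k`-regulously closed if it is an intersection of zero sets of
`k`-regulous functions. -/
def RegulouslyClosed (n k : ℕ) (F : Set (Fin n → ℝ)) : Prop :=
  ∃ E : Set ((Fin n → ℝ) → ℝ), (∀ g ∈ E, IsRegulous n k g) ∧
    F = ⋂ g ∈ E, {x : Fin n → ℝ | g x = 0}

end

section
open Polynomial

namespace QE

/-- local sign change of `f` at `t` -/
noncomputable def sc (t : ℝ) (f : ℝ[X]) : ℤ :=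
  if Odd (f.rootMultiplicity t) then
    ((SignType.sign ((f /ₘ (X - C t) ^ f.rootMultiplicity t).eval t) : SignType) : ℤ) else 0

theorem rm_eq {t : ℝ} {k : ℕ} {u : ℝ[X]} (hu : u.eval t ≠ 0) :
    ((X - C t) ^ k * u).rootMultiplicity t = k := by
  have hu0 : u ≠ 0 := by rintro rfl; simp at hu
  have h1 : ((X - C t) ^ k : ℝ[X]) ≠ 0 := pow_ne_zero _ (X_sub_C_ne_zero t)
  rw [rootMultiplicity_mul (mul_ne_zero h1 hu0), rootMultiplicity_X_sub_C_pow,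
    rootMultiplicity_eq_zero hu, add_zero]

theorem sc_eq {t : ℝ} {k : ℕ} {u : ℝ[X]} (hu : u.eval t ≠ 0) :
    sc t ((X - C t) ^ k * u) =
      if Odd k then ((SignType.sign (u.eval t) : SignType) : ℤ) else 0 := by
  unfold sc
  rw [rm_eq hu, mul_divByMonic_cancel_left _ ((monic_X_sub_C t).pow k)]

theorem sc_zero (t : ℝ) : sc t 0 = 0 := by simp [sc]

theorem exists_fac {f : ℝ[X]} (hf : f ≠ 0) (t : ℝ) :
    ∃ u : ℝ[X], u.eval t ≠ 0 ∧ f = (X - C t) ^ f.rootMultiplicity t * u := by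
  obtain ⟨u, h, h2⟩ := exists_eq_pow_rootMultiplicity_mul_and_not_dvd f hf t
  exact ⟨u, fun h3 => h2 (dvd_iff_isRoot.2 h3), h⟩

noncomputable def J (P Q : ℝ[X]) : ℤ := by
  classical
  exact ∑ t ∈ P.roots.toFinset,
    if (X - C t) ^ P.rootMultiplicity t ∣ Q then 0 else sc t (P * Q)

theorem J_zero_right (P : ℝ[X]) : J P 0 = 0 := by simp [J]
theorem J_zero_left (P : ℝ[X]) : J 0 P = 0 := by simp [J]

/-- twice the total variation of sign -/
noncomputable def B (f : ℝ[X]) : ℤ :=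
  ((SignType.sign f.leadingCoeff : SignType) : ℤ) -
    (-1) ^ f.natDegree * ((SignType.sign f.leadingCoeff : SignType) : ℤ)

theorem sign_of_no_root_gt {g : ℝ[X]} {t : ℝ} (h : ∀ s, t ≤ s → g.eval s ≠ 0) :
    SignType.sign (g.eval t) = SignType.sign g.leadingCoeff := by
  have key : ∀ g : ℝ[X], (∀ s, t ≤ s → g.eval s ≠ 0) → 0 < g.leadingCoeff → 0 < g.eval t := by
    intro g h hl
    by_contra hc
    have hc : g.eval t ≤ 0 := not_lt.1 hc
    have hc' : g.eval t < 0 := lt_of_le_of_ne hc (h t le_rfl)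
    have hd : 0 < g.degree := by
      by_contra hd
      have := eq_C_of_degree_le_zero (not_lt.1 hd)
      rw [this] at hl hc'
      simp at hl hc'
      linarith
    have := g.tendsto_atTop_of_leadingCoeff_nonneg hd hl.le
    obtain ⟨s, hs⟩ := ((this.eventually_gt_atTop 0).and (Filter.eventually_ge_atTop t)).exists
    obtain ⟨r, hr, hr2⟩ := intermediate_value_Icc hs.2 (f := fun x => g.eval x)
      g.continuous.continuousOn ⟨hc, hs.1.le⟩
    exact h r hr.1 hr2
  have hg : g ≠ 0 := by rintro rfl; simpa using h t le_rfl
  rcases lt_or_gt_of_ne (leadingCoeff_ne_zero.2 hg) with h1 | h1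
  · have := key (-g) (by simpa using h) (by simpa using h1)
    rw [sign_neg h1, sign_neg (by simpa using this)]
  · rw [sign_pos h1, sign_pos (key g h h1)]

theorem sum_sc (f : ℝ[X]) (s : Finset ℝ) (hs : ∀ t, f ≠ 0 → f.IsRoot t → t ∈ s) :
    2 * ∑ t ∈ s, sc t f = B f := by
  classical
  induction hn : f.natDegree using Nat.strong_induction_on generalizing f s with
  | _ n ih =>
  by_cases hf : f = 0
  · subst hf; simp [sc_zero, B]
  have hsc : ∀ t, ¬ f.IsRoot t → sc t f = 0 := by
    intro t ht; unfold sc; rw [rootMultiplicity_eq_zero ht]; simp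
  have hsum : ∑ t ∈ s, sc t f = ∑ t ∈ f.roots.toFinset, sc t f := by
    symm
    apply Finset.sum_subset
    · intro t ht
      simp at ht
      exact hs t hf ht.2
    · intro t _ ht
      apply hsc
      intro h; apply ht; simp [hf]; exact h
  rw [hsum]
  by_cases he : f.roots.toFinset.Nonempty
  swap
  · rw [Finset.not_nonempty_iff_eq_empty] at he
    have hnr : ∀ t, f.eval t ≠ 0 := by
      intro t ht
      have : t ∈ f.roots.toFinset := by simp [hf]; exact ht
      rw [he] at this; simp at this
    rw [he]
    have h1 := sign_of_no_root_gt (g := f) (t := 0) (fun s _ => hnr s)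
    have h2 := sign_of_no_root_gt (g := f.comp (-X)) (t := 0) (fun s _ => by simp [hnr])
    simp only [eval_comp, eval_neg, eval_X, neg_zero] at h2
    rw [h1] at h2
    rw [leadingCoeff_comp (by simp)] at h2
    unfold B
    simp
    rcases Nat.even_or_odd f.natDegree with h | h
    · simp [h.neg_one_pow]
    · exfalso
      simp [h.neg_one_pow, Left.sign_neg] at h2
      exact hf h2
  obtain ⟨t0, ht0, hmax⟩ := Finset.exists_max_image f.roots.toFinset id he
  simp only [id] at hmax
  obtain ⟨g, hg, hfg⟩ := exists_fac hf t0
  set m := f.rootMultiplicity t0 with hm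
  have hroot : f.IsRoot t0 := by simp at ht0; exact ht0.2
  have hmpos : 0 < m := (rootMultiplicity_pos hf).2 hroot
  have hg0 : g ≠ 0 := by rintro rfl; simp at hg
  have hdeg : f.natDegree = m + g.natDegree := by
    rw [hfg, natDegree_mul (pow_ne_zero _ (X_sub_C_ne_zero t0)) hg0]; simp
  have hlead : f.leadingCoeff = g.leadingCoeff := by
    rw [hfg]; simp
  have hgroots : ∀ t, g.eval t = 0 → t < t0 := by
    intro t ht
    have : t ∈ f.roots.toFinset := by
      simp [hf]; rw [hfg]; simp [ht]
    refine lt_of_le_of_ne (hmax t this) ?_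
    rintro rfl; exact hg ht
  have hsg : SignType.sign (g.eval t0) = SignType.sign g.leadingCoeff :=
    sign_of_no_root_gt (fun s hs h => absurd (hgroots s h) (not_lt.2 hs))
  have h1 := ih g.natDegree (by omega) g (f.roots.toFinset.erase t0) (by
    intro t _ ht
    rw [Finset.mem_erase]
    refine ⟨(hgroots t ht).ne, ?_⟩
    simp [hf]; rw [hfg]; simp [ht.eq_zero]) rfl
  rw [← Finset.add_sum_erase _ _ ht0]
  have h2 : ∀ t ∈ f.roots.toFinset.erase t0, sc t f = (-1) ^ m * sc t g := by
    intro t ht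
    rw [Finset.mem_erase] at ht
    have hlt : t < t0 := lt_of_le_of_ne (hmax t ht.2) ht.1
    obtain ⟨u, hu, hgu⟩ := exists_fac hg0 t
    set j := g.rootMultiplicity t
    have hf' : f = (X - C t) ^ j * ((X - C t0) ^ m * u) := by
      rw [hfg, hgu]; ring
    have hne : t - t0 < 0 := by linarith
    have hu' : ((X - C t0) ^ m * u).eval t ≠ 0 := by
      simp [hu, hne.ne]
    rw [hf', sc_eq hu', hgu, sc_eq hu]
    simp only [eval_mul, eval_pow, eval_sub, eval_X, eval_C, sign_mul, sign_pow, sign_neg hne]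
    split_ifs
    · push_cast; rfl
    · simp
  rw [Finset.sum_congr rfl h2, ← Finset.mul_sum]
  have h3 : sc t0 f = if Odd m then ((SignType.sign g.leadingCoeff : SignType) : ℤ) else 0 := by
    rw [← hsg, hfg, sc_eq hg]
  rw [h3]
  unfold B at h1 ⊢
  rw [hdeg, hlead, pow_add]
  rcases Nat.even_or_odd m with h | h
  · simp [h.neg_one_pow, Nat.not_odd_iff_even.2 h]
    simpa using h1
  · simp [h.neg_one_pow, h]
    linarith

end QE

end

section
open Polynomial

namespace QE

theorem recip (P Q : ℝ[X]) (hQ : Q ≠ 0) : 2 * (J P Q + J Q P) = B (P * Q) := by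
  classical
  by_cases hP : P = 0
  · subst hP; simp [J_zero_left, J_zero_right, B]
  have hPQ := mul_ne_zero hP hQ
  rw [← sum_sc (P * Q) (P.roots.toFinset ∪ Q.roots.toFinset) (by
    intro t _ ht
    simp [IsRoot] at ht
    simp [hP, hQ]
    exact ht)]
  congr 1
  have e1 : J P Q = ∑ t ∈ P.roots.toFinset ∪ Q.roots.toFinset,
      if (X - C t) ^ P.rootMultiplicity t ∣ Q then 0 else sc t (P * Q) := by
    unfold J
    apply Finset.sum_subset Finset.subset_union_left
    intro t _ ht
    have : ¬ P.IsRoot t := by intro h; apply ht; simp [hP]; exact h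
    simp [rootMultiplicity_eq_zero this]
  have e2 : J Q P = ∑ t ∈ P.roots.toFinset ∪ Q.roots.toFinset,
      if (X - C t) ^ Q.rootMultiplicity t ∣ P then 0 else sc t (Q * P) := by
    unfold J
    apply Finset.sum_subset Finset.subset_union_right
    intro t _ ht
    have : ¬ Q.IsRoot t := by intro h; apply ht; simp [hQ]; exact h
    simp [rootMultiplicity_eq_zero this]
  rw [e1, e2, ← Finset.sum_add_distrib]
  refine Finset.sum_congr rfl fun t _ => ?_
  rw [← le_rootMultiplicity_iff hQ, ← le_rootMultiplicity_iff hP, mul_comm Q P]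
  rcases lt_trichotomy (P.rootMultiplicity t) (Q.rootMultiplicity t) with h | h | h
  · simp [h.le, h]
  · simp [h]
    unfold sc
    rw [rootMultiplicity_mul hPQ, h]
    simp
  · simp [h.le, h]

theorem J_add (Q R S : ℝ[X]) : J Q (Q * S + R) = J Q R := by
  classical
  by_cases hQ : Q = 0
  · subst hQ; simp [J_zero_left]
  unfold J
  refine Finset.sum_congr rfl fun t _ => ?_
  have hd : (X - C t) ^ Q.rootMultiplicity t ∣ Q * S + R ↔
      (X - C t) ^ Q.rootMultiplicity t ∣ R :=
    dvd_add_right ((pow_rootMultiplicity_dvd Q t).mul_right S)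
  rw [hd]
  split_ifs with h
  · rfl
  have hR : R ≠ 0 := by rintro rfl; simp at h
  rw [← le_rootMultiplicity_iff hR, not_le] at h
  obtain ⟨u, hu, hQu⟩ := exists_fac hQ t
  obtain ⟨v, hv, hRv⟩ := exists_fac hR t
  obtain ⟨d, hd⟩ := Nat.exists_eq_add_of_lt h
  set m := Q.rootMultiplicity t
  set k := R.rootMultiplicity t
  have f1 : Q * R = (X - C t) ^ (m + k) * (u * v) := by
    rw [hQu, hRv]; ring
  have f2 : Q * (Q * S + R) =
      (X - C t) ^ (m + k) * (u * (v + (X - C t) ^ (d + 1) * (u * S))) := by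
    have : (X - C t) ^ m = (X - C t) ^ k * (X - C t) ^ (d + 1) := by
      rw [← pow_add]; congr 1
    conv_lhs => rw [hQu, hRv]
    rw [pow_add, this]
    ring
  have g2 : (u * (v + (X - C t) ^ (d + 1) * (u * S))).eval t = (u * v).eval t := by simp
  have g1 : (u * v).eval t ≠ 0 := by simp [hu, hv]
  rw [f1, f2, sc_eq g1, sc_eq (by rw [g2]; exact g1), g2]

theorem J_smul (Q P : ℝ[X]) {k : ℝ} (hk : 0 < k) : J Q (C k * P) = J Q P := by
  classical
  unfold J
  refine Finset.sum_congr rfl fun t _ => ?_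
  have hd : (X - C t) ^ Q.rootMultiplicity t ∣ C k * P ↔
      (X - C t) ^ Q.rootMultiplicity t ∣ P :=
    (isUnit_C.2 hk.ne'.isUnit).dvd_mul_left
  rw [hd]
  split_ifs with h
  · rfl
  by_cases hQP : Q * P = 0
  · rw [hQP, show Q * (C k * P) = C k * (Q * P) by ring, hQP, mul_zero]
  obtain ⟨u, hu, hf⟩ := exists_fac hQP t
  have f2 : Q * (C k * P) = (X - C t) ^ (rootMultiplicity t (Q * P)) * (C k * u) := by
    rw [show Q * (C k * P) = C k * (Q * P) by ring]
    conv_lhs => rw [hf]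
    ring
  rw [f2]
  conv_rhs => rw [hf]
  rw [sc_eq hu, sc_eq (by simp [hu, hk.ne'])]
  simp [sign_mul, sign_pos hk]

theorem J_deriv (P Q : ℝ[X]) :
    J P (derivative P * Q) =
      ∑ t ∈ P.roots.toFinset, ((SignType.sign (Q.eval t) : SignType) : ℤ) := by
  classical
  by_cases hP : P = 0
  · subst hP; simp [J_zero_left]
  unfold J
  refine Finset.sum_congr rfl fun t ht => ?_
  have hroot : P.IsRoot t := by simp at ht; exact ht.2
  have hmpos : 0 < P.rootMultiplicity t := (rootMultiplicity_pos hP).2 hroot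
  obtain ⟨u, hu, hPu⟩ := exists_fac hP t
  set m := P.rootMultiplicity t
  obtain ⟨d, hd⟩ : ∃ d, m = d + 1 := ⟨m - 1, by omega⟩
  set w : ℝ[X] := C (m : ℝ) * u + (X - C t) * derivative u with hw
  have hder : derivative P = (X - C t) ^ d * w := by
    conv_lhs => rw [hPu]
    rw [derivative_mul, derivative_X_sub_C_pow, hd, hw, hd]
    simp
    ring
  have hwt : w.eval t = m * u.eval t := by simp [hw]
  by_cases hQ : Q.eval t = 0
  · have : (X - C t) ^ m ∣ derivative P * Q := by
      obtain ⟨Q', hQ'⟩ := dvd_iff_isRoot.2 hQ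
      rw [hder, hQ', hd]
      exact ⟨w * Q', by ring⟩
    rw [if_pos this, hQ]
    simp
  have hm0 : (m : ℝ) ≠ 0 := by exact_mod_cast hmpos.ne'
  have hwQ : (w * Q).eval t ≠ 0 := by
    simp only [eval_mul, hwt]
    exact mul_ne_zero (mul_ne_zero hm0 hu) hQ
  have hn : ¬ (X - C t) ^ m ∣ derivative P * Q := by
    rw [hder, mul_assoc]
    intro h
    have h0 : (X - C t) ^ d * (w * Q) ≠ 0 := by
      refine mul_ne_zero (pow_ne_zero _ (X_sub_C_ne_zero t)) ?_
      intro h; rw [h] at hwQ; simp at hwQ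
    have := (le_rootMultiplicity_iff h0).2 h
    rw [rm_eq hwQ] at this
    omega
  rw [if_neg hn]
  have f : P * (derivative P * Q) = (X - C t) ^ (d + d + 1) * (u * (w * Q)) := by
    rw [hder]
    conv_lhs => rw [hPu, hd]
    ring
  rw [f, sc_eq (by rw [eval_mul]; exact mul_ne_zero hu hwQ), if_pos (by use d; ring)]
  congr 1
  simp only [eval_mul, hwt]
  rw [show eval t u * (m * eval t u * eval t Q) = (m * (eval t u) ^ 2) * eval t Q by ring, sign_mul,
    sign_pos (by positivity), one_mul]

/-! ### Sign-determined functions -/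

variable {Y A : Type*} [CommRing A] (ev : Y → A →+* ℝ)

/-- `f` is determined by the signs of finitely many elements of `A`. -/
def Det {α : Type*} (f : Y → α) : Prop :=
  ∃ s : Finset A, ∀ x y, (∀ a ∈ s, SignType.sign (ev x a) = SignType.sign (ev y a)) → f x = f y

variable {ev}

theorem Det.const {α : Type*} (c : α) : Det ev (fun _ => c) := ⟨∅, fun _ _ _ => rfl⟩

theorem Det.sign (a : A) : Det ev (fun x => SignType.sign (ev x a)) :=
  ⟨{a}, fun x y h => h a (by simp)⟩

theorem Det.comp {α β : Type*} {f : Y → α} (hf : Det ev f) (g : α → β) :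
    Det ev (fun x => g (f x)) := by
  obtain ⟨s, hs⟩ := hf
  exact ⟨s, fun x y h => by simp only [hs x y h]⟩

theorem Det.map₂ {α β γ : Type*} {f : Y → α} {g : Y → β} (hf : Det ev f) (hg : Det ev g)
    (F : α → β → γ) : Det ev (fun x => F (f x) (g x)) := by
  classical
  obtain ⟨s, hs⟩ := hf
  obtain ⟨t, ht⟩ := hg
  refine ⟨s ∪ t, fun x y h => ?_⟩
  simp only [hs x y fun a ha => h a (Finset.mem_union_left _ ha),
    ht x y fun a ha => h a (Finset.mem_union_right _ ha)]

theorem Det.pi {ι : Type*} {α : ι → Type*} (s : Finset ι) {f : ∀ i, Y → α i}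
    (hf : ∀ i, Det ev (f i)) : Det ev (fun x => fun i : s => f i x) := by
  classical
  choose t ht using hf
  refine ⟨s.biUnion t, fun x y h => ?_⟩
  funext i
  exact ht i x y fun a ha => h a (Finset.mem_biUnion.2 ⟨i, i.2, ha⟩)

theorem Det.eq_zero (a : A) : Det ev (fun x => ev x a = 0) := by
  have := (Det.sign (ev := ev) a).comp (fun s => s = 0)
  simpa using this

theorem Det.pos (a : A) : Det ev (fun x => 0 < ev x a) := by
  have := (Det.sign (ev := ev) a).comp (fun s => s = 1)
  simpa [sign_eq_one_iff] using this

theorem Det.and {p q : Y → Prop} (hp : Det ev p) (hq : Det ev q) : Det ev (fun x => p x ∧ q x) :=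
  hp.map₂ hq And
theorem Det.or {p q : Y → Prop} (hp : Det ev p) (hq : Det ev q) : Det ev (fun x => p x ∨ q x) :=
  hp.map₂ hq Or
theorem Det.imp {p q : Y → Prop} (hp : Det ev p) (hq : Det ev q) : Det ev (fun x => p x → q x) :=
  hp.map₂ hq (fun a b => a → b)
theorem Det.not {p : Y → Prop} (hp : Det ev p) : Det ev (fun x => ¬ p x) :=
  hp.comp Not

theorem Det.ite {α : Type*} {p : Y → Prop} {f g h : Y → α} (hp : Det ev p) (hf : Det ev f)
    (hg : Det ev g) (h1 : ∀ x, p x → h x = f x) (h2 : ∀ x, ¬ p x → h x = g x) : Det ev h := by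
  classical
  have := (hp.map₂ (hf.map₂ hg Prod.mk) (fun a b => if a then b.1 else b.2))
  convert this using 2 with x
  split_ifs with hx
  · exact h1 x hx
  · exact h2 x hx

theorem Det.congr {α : Type*} {f g : Y → α} (hf : Det ev f) (h : ∀ x, g x = f x) : Det ev g := by
  rwa [show g = f from funext h]

/-- signs of leading coefficients and degrees are determined -/
theorem Det.lead (f : A[X]) : Det ev (fun x => ((f.map (ev x)).natDegree,
    SignType.sign (f.map (ev x)).leadingCoeff)) := by
  classical
  refine ⟨f.support.image f.coeff, fun x y h => ?_⟩
  have h1 : ∀ i, SignType.sign ((f.map (ev x)).coeff i) = SignType.sign ((f.map (ev y)).coeff i) := by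
    intro i
    simp only [coeff_map]
    by_cases hi : i ∈ f.support
    · exact h _ (Finset.mem_image_of_mem _ hi)
    · rw [notMem_support_iff.1 hi]; simp
  have h2 : (f.map (ev x)).support = (f.map (ev y)).support := by
    ext i
    rw [mem_support_iff, mem_support_iff, ← sign_ne_zero, h1, sign_ne_zero]
  have h3 : (f.map (ev x)).natDegree = (f.map (ev y)).natDegree := by
    unfold natDegree degree
    rw [h2]
  have h4 : SignType.sign (f.map (ev x)).leadingCoeff =
      SignType.sign (f.map (ev y)).leadingCoeff := by
    unfold leadingCoeff
    rw [h1, h3]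
  exact Prod.ext h3 h4

end QE

end

section
open Polynomial

namespace QE

theorem pseudo {A : Type*} [CommRing A] (Q : A[X]) (d : ℕ) (hQ : Q.degree < (d + 1 : ℕ)) :
    ∀ (N : ℕ) (P : A[X]), P.degree < N →
      ∃ (e : ℕ) (S R : A[X]), C (Q.coeff d) ^ e * P = Q * S + R ∧ R.degree < d := by
  intro N
  induction N with
  | zero => 
    intro P hP
    exact ⟨0, 0, P, by simp, hP.trans_le (by simp)⟩
  | succ N ih =>
    intro P hP
    by_cases hN : N < d
    · exact ⟨0, 0, P, by simp, hP.trans_le (by exact_mod_cast hN)⟩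
    obtain ⟨j, rfl⟩ := Nat.exists_eq_add_of_le (not_lt.1 hN)
    have hdeg : (C (Q.coeff d) * P - C (P.coeff (d + j)) * X ^ j * Q).degree < ((d + j : ℕ) : WithBot ℕ) := by
      rw [degree_lt_iff_coeff_zero]
      intro m hm
      rw [degree_lt_iff_coeff_zero] at hP hQ
      rw [coeff_sub, coeff_C_mul, mul_assoc, coeff_C_mul]
      obtain ⟨i, rfl⟩ := Nat.exists_eq_add_of_le hm
      rw [show d + j + i = d + i + j by ring, coeff_X_pow_mul]
      rcases Nat.eq_zero_or_pos i with rfl | hi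
      · simp; ring
      · rw [hP (d + i + j) (by omega), hQ (d + i) (by omega)]; simp
    obtain ⟨e, S, R, h1, h2⟩ := ih _ hdeg
    refine ⟨e + 1, S + C (Q.coeff d) ^ e * C (P.coeff (d + j)) * X ^ j, R, ?_, h2⟩
    linear_combination h1

variable {Y A : Type*} [CommRing A] {ev : Y → A →+* ℝ}

theorem Det.B (f : A[X]) : Det ev (fun x => B (f.map (ev x))) :=
  (Det.lead f).comp (fun p => ((p.2 : SignType) : ℤ) - (-1) ^ p.1 * ((p.2 : SignType) : ℤ))

theorem Det.J : ∀ (d : ℕ) (P Q : A[X]), Q.degree < d →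
    Det ev (fun x => J (P.map (ev x)) (Q.map (ev x))) := by
  intro d
  induction d with
  | zero =>
    intro P Q hQ
    have : Q = 0 := by
      rw [← degree_eq_bot]
      simpa using hQ
    subst this
    exact (Det.const 0).congr (by simp [J_zero_right])
  | succ d ih =>
    intro P Q hQ
    have h0 : (Q - C (Q.coeff d) * X ^ d).degree < (d : WithBot ℕ) := by
      rw [degree_lt_iff_coeff_zero] at hQ ⊢
      intro m hm
      rw [coeff_sub, coeff_C_mul, coeff_X_pow]
      split_ifs with h
      · subst h; simp
      · rw [hQ m (by omega)]; simp
    obtain ⟨e, S, R, h1, h2⟩ := pseudo Q d hQ (P.natDegree + 1) P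
      (degree_le_natDegree.trans_lt (by exact_mod_cast Nat.lt_succ_self _))
    have hR := ih Q (C (Q.coeff d) ^ e * R) (by
      rw [degree_lt_iff_coeff_zero] at h2 ⊢
      intro m hm
      rw [← C_pow, coeff_C_mul, h2 m hm, mul_zero])
    refine Det.ite (Det.eq_zero (Q.coeff d)) (ih P _ h0)
      ((Det.B (P * Q)).map₂ hR (fun b j => (b - 2 * j) / 2)) ?_ ?_
    · intro x hx
      simp [hx]
    · intro x hx
      have hQx : Q.map (ev x) ≠ 0 := by
        intro h
        apply hx
        rw [← coeff_map, h, coeff_zero]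
      have e1 := recip (P.map (ev x)) (Q.map (ev x)) hQx
      have hpos : 0 < (ev x (Q.coeff d)) ^ (e + e) := by
        rw [← two_mul, pow_mul]; positivity
      have e2 : QE.J (Q.map (ev x)) (P.map (ev x)) =
          QE.J (Q.map (ev x)) ((C (Q.coeff d) ^ e * R).map (ev x)) := by
        rw [← J_smul _ (P.map (ev x)) hpos, ← J_add (Q.map (ev x)) ((C (Q.coeff d) ^ e * R).map (ev x))
          ((C (Q.coeff d) ^ e * S).map (ev x))]
        congr 1
        have : C (Q.coeff d) ^ (e + e) * P = Q * (C (Q.coeff d) ^ e * S) +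
          C (Q.coeff d) ^ e * R := by linear_combination C (Q.coeff d) ^ e * h1
        have := congrArg (Polynomial.map (ev x)) this
        simpa using this
      rw [e2] at e1
      rw [Polynomial.map_mul (ev x) (p := P) (q := Q), ← e1]
      omega

theorem Det.J' (P Q : A[X]) : Det ev (fun x => QE.J (P.map (ev x)) (Q.map (ev x))) :=
  Det.J (Q.natDegree + 1) P Q
    (degree_le_natDegree.trans_lt (by exact_mod_cast Nat.lt_succ_self _))

theorem Det.count {ι : Type*} (P : A[X]) (s : Finset ι) (q : ι → A[X]) : ∀ Q : A[X],
    Det ev (fun x => ∑ t ∈ (P.map (ev x)).roots.toFinset,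
      (((SignType.sign ((Q.map (ev x)).eval t) : SignType) : ℤ) *
        ∏ i ∈ s, (((SignType.sign (((q i).map (ev x)).eval t) : SignType) : ℤ) ^ 2 +
          ((SignType.sign (((q i).map (ev x)).eval t) : SignType) : ℤ)))) := by
  classical
  induction s using Finset.induction_on with
  | empty =>
    intro Q
    refine (Det.J' P (derivative P * Q)).congr fun x => ?_
    rw [Polynomial.map_mul, ← derivative_map, J_deriv]
    simp
  | insert i s hi ih =>
    intro Q
    refine ((ih (Q * q i ^ 2)).map₂ (ih (Q * q i)) (· + ·)).congr fun x => ?_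
    rw [← Finset.sum_add_distrib]
    refine Finset.sum_congr rfl fun t _ => ?_
    rw [Finset.prod_insert hi]
    simp [sign_mul, sign_pow]
    ring

theorem Det.exists_root {ι : Type*} (P : A[X]) (s : Finset ι) (q : ι → A[X]) :
    Det ev (fun x => P.map (ev x) ≠ 0 ∧ ∃ t, (P.map (ev x)).eval t = 0 ∧
      ∀ i ∈ s, 0 < ((q i).map (ev x)).eval t) := by
  classical
  have h1 : Det ev (fun x => P.map (ev x) = 0) := by
    have := (Det.lead (ev := ev) P).comp (fun p => p.2 = 0)
    simpa using this
  refine (h1.not.and ((Det.count P s q 1).comp (fun k => k ≠ 0))).congr fun x => ?_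
  rw [eq_iff_iff]
  refine and_congr_right fun hP => ?_
  have hnn : ∀ t, 0 ≤ ((SignType.sign ((((1 : A[X])).map (ev x)).eval t) : SignType) : ℤ) *
        ∏ i ∈ s, (((SignType.sign (((q i).map (ev x)).eval t) : SignType) : ℤ) ^ 2 +
          ((SignType.sign (((q i).map (ev x)).eval t) : SignType) : ℤ)) := by
    intro t
    simp
    refine Finset.prod_nonneg fun i _ => ?_
    generalize SignType.sign (((q i).map (ev x)).eval t) = z
    revert z; decide
  rw [Ne, Finset.sum_eq_zero_iff_of_nonneg (fun t _ => hnn t)]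
  push Not
  refine exists_congr fun t => ?_
  have : t ∈ (P.map (ev x)).roots.toFinset ↔ (P.map (ev x)).eval t = 0 := by
    simp [hP]
  rw [this]
  refine and_congr_right fun _ => ?_
  simp [Finset.prod_ne_zero_iff]
  refine forall₂_congr fun i _ => ?_
  rw [← sign_eq_one_iff]
  generalize SignType.sign (((q i).map (ev x)).eval t) = z
  revert z; decide

end QE

end

section
open Polynomial

namespace QE

theorem poly_bound (Q : ℝ[X]) (M : ℕ) (hM : Q.natDegree ≤ M) :
    ∃ K : ℝ, 0 ≤ K ∧ ∀ t : ℝ, |Q.eval t| ≤ K * (1 + t ^ 2) ^ M := by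
  refine ⟨∑ i ∈ Finset.range (Q.natDegree + 1), |Q.coeff i|,
    Finset.sum_nonneg fun _ _ => abs_nonneg _, fun t => ?_⟩
  rw [eval_eq_sum_range, Finset.sum_mul]
  refine (Finset.abs_sum_le_sum_abs _ _).trans (Finset.sum_le_sum fun i hi => ?_)
  rw [abs_mul, abs_pow]
  have h1 : |t| ≤ 1 + t ^ 2 := by
    rw [← sq_abs]; nlinarith [sq_nonneg (|t| - 1), abs_nonneg t]
  have h2 : |t| ^ i ≤ (1 + t ^ 2) ^ M :=
    (pow_le_pow_left₀ (abs_nonneg t) h1 i).trans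
      (pow_le_pow_right₀ (by nlinarith) (by simp at hi; omega))
  exact mul_le_mul_of_nonneg_left h2 (abs_nonneg _)

/-- auxiliary polynomial whose roots are the critical points of `Q / (1 + t^2)^(M+1)` -/
noncomputable def crit {A : Type*} [CommRing A] (M : ℕ) (Q : A[X]) : A[X] :=
  derivative Q * (1 + X ^ 2) - C (2 * (M + 1 : A)) * X * Q

theorem crit_map {A : Type*} [CommRing A] (M : ℕ) (Q : A[X]) (f : A →+* ℝ) :
    (crit M Q).map f = crit M (Q.map f) := by
  simp [crit, derivative_map]
  exact Or.inl (Or.inl (map_ofNat f 2))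

theorem hasDerivAt_h (M : ℕ) (Q : ℝ[X]) (t : ℝ) :
    HasDerivAt (fun t => Q.eval t / (1 + t ^ 2) ^ (M + 1))
      ((crit M Q).eval t / (1 + t ^ 2) ^ (M + 2)) t := by
  have hp : (1 + t ^ 2) ≠ 0 := by positivity
  have h1 : HasDerivAt (fun t : ℝ => (1 + t ^ 2) ^ (M + 1))
      ((M + 1 : ℕ) * (1 + t ^ 2) ^ M * (2 * t)) t := by
    have h0 : HasDerivAt (fun t : ℝ => 1 + t ^ 2) (2 * t) t := by
      simpa using (hasDerivAt_pow 2 t).const_add 1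
    simpa using h0.fun_pow (M + 1)
  refine ((Q.hasDerivAt t).fun_div h1 (pow_ne_zero _ hp)).congr_deriv ?_
  simp [crit]
  field_simp
  ring

theorem exists_crit {ι : Type*} (s : Finset ι) (q : ι → ℝ[X]) (M : ℕ)
    (hM : (∏ i ∈ s, q i).natDegree ≤ M) (t₀ : ℝ) (h₀ : ∀ i ∈ s, 0 < (q i).eval t₀) :
    crit M (∏ i ∈ s, q i) ≠ 0 ∧ ∃ t, (crit M (∏ i ∈ s, q i)).eval t = 0 ∧
      ∀ i ∈ s, 0 < (q i).eval t := by
  set Q := ∏ i ∈ s, q i with hQ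
  obtain ⟨K, hK, hb⟩ := poly_bound Q M hM
  set h : ℝ → ℝ := fun t => Q.eval t / (1 + t ^ 2) ^ (M + 1) with hh
  have hcont : Continuous h := continuous_iff_continuousAt.2
    fun t => (hasDerivAt_h M Q t).continuousAt
  have hbd : ∀ t, h t ≤ K / (1 + t ^ 2) := by
    intro t
    simp only [hh]
    rw [div_le_div_iff₀ (by positivity) (by positivity)]
    have := (le_abs_self _).trans (hb t)
    calc Q.eval t * (1 + t ^ 2) ≤ K * (1 + t ^ 2) ^ M * (1 + t ^ 2) :=
          mul_le_mul_of_nonneg_right this (by positivity)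
      _ = _ := by ring
  have hpos : 0 < h t₀ := by
    have : 0 < Q.eval t₀ := by
      rw [hQ, eval_prod]; exact Finset.prod_pos h₀
    simp only [hh]; positivity
  have hsmall : ∀ᶠ t in Filter.cocompact ℝ, h t < h t₀ := by
    have h1 : Filter.Tendsto (fun t : ℝ => K / (1 + t ^ 2)) (Filter.cocompact ℝ) (nhds 0) := by
      refine Filter.Tendsto.div_atTop tendsto_const_nhds ?_
      refine Filter.tendsto_atTop_add_const_left _ _ ?_
      have := (Filter.tendsto_pow_atTop (α := ℝ) (n := 2) (by norm_num)).comp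
        (tendsto_norm_cocompact_atTop (E := ℝ))
      refine this.congr fun t => by simp
    filter_upwards [h1.eventually_lt_const hpos] with t ht using (hbd t).trans_lt ht
  constructor
  · intro h0
    have hd : ∀ t, deriv h t = 0 := by
      intro t
      rw [(hasDerivAt_h M Q t).deriv, h0]; simp
    have hc := is_const_of_deriv_eq_zero (f := h)
      (fun t => (hasDerivAt_h M Q t).differentiableAt) hd
    obtain ⟨t, ht⟩ := hsmall.exists
    exact absurd (hc t t₀) ht.ne
  · set S : Set ℝ := {t | ∀ i ∈ s, 0 ≤ (q i).eval t} with hS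
    have hSc : IsClosed S := by
      have : S = ⋂ i ∈ s, {t | 0 ≤ (q i).eval t} := by ext; simp [hS]
      rw [this]
      exact isClosed_biInter fun i _ => isClosed_le continuous_const (q i).continuous
    have ht₀ : t₀ ∈ S := fun i hi => (h₀ i hi).le
    obtain ⟨t, htS, htm⟩ := ContinuousOn.exists_isMaxOn' hcont.continuousOn hSc ht₀
      (Filter.Eventually.filter_mono inf_le_left (hsmall.mono fun _ h => h.le))
    have htp : 0 < h t := hpos.trans_le (htm ht₀)
    have hall : ∀ i ∈ s, 0 < (q i).eval t := by
      intro i hi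
      refine lt_of_le_of_ne (htS i hi) fun h0 => ?_
      have : Q.eval t = 0 := by
        rw [hQ, eval_prod]; exact Finset.prod_eq_zero hi h0.symm
      simp [hh, this] at htp
    refine ⟨t, ?_, hall⟩
    have hnhds : S ∈ nhds t := by
      have : ∀ᶠ y in nhds t, ∀ i ∈ s, 0 < (q i).eval y := by
        rw [Filter.eventually_all_finset]
        intro i hi
        exact (q i).continuous.continuousAt.eventually_const_lt (hall i hi)
      filter_upwards [this] with y hy i hi using (hy i hi).le
    have hloc : IsLocalMax h t := htm.isLocalMax hnhds
    have := hloc.hasDerivAt_eq_zero (hasDerivAt_h M Q t)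
    have hp : (1 + t ^ 2) ^ (M + 2) ≠ 0 := by positivity
    exact (div_eq_zero_iff.1 this).resolve_right hp

variable {Y A : Type*} [CommRing A] {ev : Y → A →+* ℝ}

theorem Det.map_eq_zero (P : A[X]) : Det ev (fun x => P.map (ev x) = 0) := by
  have := (Det.lead (ev := ev) P).comp (fun p => p.2 = 0)
  simpa using this

theorem Det.exists_pos {ι : Type*} (P : A[X]) (s : Finset ι) (q : ι → A[X]) :
    Det ev (fun x => ∃ t, (P.map (ev x)).eval t = 0 ∧
      ∀ i ∈ s, 0 < ((q i).map (ev x)).eval t) := by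
  refine ((Det.exists_root P s q).or ((Det.map_eq_zero P).and
    (Det.exists_root (crit (∏ i ∈ s, q i).natDegree (∏ i ∈ s, q i)) s q))).congr fun x => ?_
  rw [eq_iff_iff]
  constructor
  · rintro ⟨t, h1, h2⟩
    by_cases hP : P.map (ev x) = 0
    · right
      refine ⟨hP, ?_⟩
      rw [crit_map, Polynomial.map_prod]
      exact exists_crit s (fun i => (q i).map (ev x)) _
        (by rw [← Polynomial.map_prod]; exact natDegree_map_le) t h2
    · exact Or.inl ⟨hP, t, h1, h2⟩
  · rintro (⟨_, h⟩ | ⟨h0, _, t, _, h⟩)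
    · exact h
    · exact ⟨t, by simp [h0], h⟩

/-- Tarski–Seidenberg, abstract form -/
theorem Det.exists_real {Y' A' : Type*} [CommRing A'] {ev' : Y' → A' →+* ℝ} (Φ : A' → A[X])
    (c : Y → ℝ → Y') (hΦ : ∀ x t a, ev' (c x t) a = ((Φ a).map (ev x)).eval t)
    {p : Y' → Prop} (hp : Det ev' p) : Det ev (fun x => ∃ t, p (c x t)) := by
  classical
  obtain ⟨s, hs⟩ := hp
  -- sign vectors
  have key : ∀ ε : s → SignType, Det ev (fun x => ∃ t, ∀ a : s,
      SignType.sign (((Φ a).map (ev x)).eval t) = ε a) := by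
    intro ε
    refine (Det.exists_pos (ev := ev) (∑ a : s, if ε a = 0 then Φ a ^ 2 else 0)
      (Finset.univ.filter fun a : s => ε a ≠ 0)
      (fun a => if ε a = 1 then Φ a else - Φ a)).congr fun x => ?_
    rw [eq_iff_iff]
    refine exists_congr fun t => ?_
    have e1 : (Polynomial.map (ev x) (∑ a : s, if ε a = 0 then Φ a ^ 2 else 0)).eval t = 0 ↔
        ∀ a : s, ε a = 0 → ((Φ a).map (ev x)).eval t = 0 := by
      rw [Polynomial.map_sum, eval_finsetSum, Finset.sum_eq_zero_iff_of_nonneg]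
      · refine ⟨fun h a ha => ?_, fun h a _ => ?_⟩
        · have := h a (Finset.mem_univ _)
          simpa [ha] using this
        · split_ifs with ha
          · simp [h a ha]
          · simp
      · intro a _
        split_ifs
        · simp; positivity
        · simp
    rw [e1]
    simp only [Finset.mem_filter, Finset.mem_univ, true_and]
    rw [← forall_and]
    refine forall_congr' fun a => ?_
    generalize ε a = e
    cases e
    · simp [sign_eq_zero_iff]
    · simp [sign_eq_neg_one_iff]
    · simp [sign_eq_one_iff]
  -- realized sign vectors
  have hfin := Det.pi (ev := ev) (Finset.univ : Finset (s → SignType)) key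
  refine (hfin.comp (fun F => ∃ ε : (Finset.univ : Finset (s → SignType)), F ε ∧ ∃ y, p y ∧ ∀ a : s,
    SignType.sign (ev' y a) = (ε : s → SignType) a)).congr fun x => ?_
  rw [eq_iff_iff]
  constructor
  · rintro ⟨t, ht⟩
    refine ⟨⟨fun a => SignType.sign (((Φ a).map (ev x)).eval t), Finset.mem_univ _⟩, ⟨t, fun _ => rfl⟩,
      c x t, ht, fun a => ?_⟩
    rw [hΦ]
  · rintro ⟨ε, ⟨t, ht⟩, y, hy, hy2⟩
    refine ⟨t, ?_⟩
    rw [hs (c x t) y]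
    · exact hy
    · intro a ha
      rw [hΦ, hy2 ⟨a, ha⟩]
      exact ht ⟨a, ha⟩

end QE

end

section
open Polynomial

namespace QE

variable {σ : Type*}

/-- semialgebraic predicates -/
def SA (p : (σ → ℝ) → Prop) : Prop :=
  Det (fun x : σ → ℝ => (MvPolynomial.eval x : MvPolynomial σ ℝ →+* ℝ)) p

theorem SA.congr {p q : (σ → ℝ) → Prop} (h : SA p) (e : ∀ x, q x ↔ p x) : SA q :=
  Det.congr h fun x => propext (e x)

theorem SA.exists_var [DecidableEq σ] {p : (σ → ℝ) → Prop} (hp : SA p) (i : σ) :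
    SA (fun x => ∃ t, p (Function.update x i t)) := by
  refine Det.exists_real (ev' := fun x : σ → ℝ => (MvPolynomial.eval x : MvPolynomial σ ℝ →+* ℝ))
    (fun a => MvPolynomial.eval₂Hom (C.comp MvPolynomial.C)
      (fun j => if j = i then X else C (MvPolynomial.X j)) a)
    (fun x t => Function.update x i t) ?_ hp
  intro x t a
  have : (MvPolynomial.eval (Function.update x i t) : MvPolynomial σ ℝ →+* ℝ) =
      ((evalRingHom t).comp (mapRingHom (MvPolynomial.eval x))).comp
        (MvPolynomial.eval₂Hom (C.comp MvPolynomial.C)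
          (fun j => if j = i then X else C (MvPolynomial.X j))) := by
    apply MvPolynomial.ringHom_ext
    · intro r; simp
    · intro j
      by_cases h : j = i
      · subst h; simp
      · simp [h]
  exact congrArg (fun f => f a) this

theorem SA.exists_block [DecidableEq σ] {p : (σ → ℝ) → Prop} (hp : SA p) (s : Finset σ) :
    SA (fun x => ∃ u : σ → ℝ, (∀ j ∉ s, u j = x j) ∧ p u) := by
  induction s using Finset.induction_on with
  | empty =>
    refine hp.congr fun x => ?_
    constructor
    · rintro ⟨u, h, hu⟩
      rwa [show x = u from funext fun j => (h j (by simp)).symm]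
    · intro h; exact ⟨x, by simp, h⟩
  | insert i s hi ih =>
    refine (ih.exists_var i).congr fun x => ?_
    constructor
    · rintro ⟨u, h, hu⟩
      refine ⟨u i, u, fun j hj => ?_, hu⟩
      by_cases hji : j = i
      · subst hji; simp
      · simp [hji]; exact h j (by simp [hji, hj])
    · rintro ⟨t, u, h, hu⟩
      refine ⟨u, fun j hj => ?_, hu⟩
      simp at hj
      rw [h j hj.2]; simp [hj.1]

theorem root_bound (W : ℝ[X][X]) : ∃ (K : ℝ) (r : ℕ), 0 ≤ K ∧ ∀ᶠ t in Filter.atTop, ∀ a : ℝ,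
    W.map (evalRingHom t) ≠ 0 → (W.map (evalRingHom t)).eval a = 0 → a ≤ K * (1 + t ^ 2) ^ r := by
  by_cases hW : W = 0
  · subst hW
    exact ⟨0, 0, le_rfl, Filter.Eventually.of_forall fun t a h => by simp at h⟩
  set l := W.leadingCoeff with hl
  have hl0 : l ≠ 0 := leadingCoeff_ne_zero.2 hW
  have hc : ∃ c > 0, ∀ᶠ t in Filter.atTop, c ≤ |l.eval t| := by
    by_cases hd : 0 < l.degree
    · exact ⟨1, one_pos, (l.abs_tendsto_atTop hd).eventually_ge_atTop 1⟩
    · have h := eq_C_of_degree_le_zero (not_lt.1 hd)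
      refine ⟨|l.coeff 0|, ?_, Filter.Eventually.of_forall fun t => ?_⟩
      · rw [gt_iff_lt, abs_pos]; intro h0; rw [h0] at h; simp at h; exact hl0 h
      · rw [h]; simp
  obtain ⟨c, hc0, hc⟩ := hc
  set d := W.natDegree with hd
  have hb : ∀ j, ∃ K : ℝ, 0 ≤ K ∧ ∀ t : ℝ, |(W.coeff j).eval t| ≤
      K * (1 + t ^ 2) ^ (∑ j ∈ Finset.range d, (W.coeff j).natDegree + (W.coeff j).natDegree) :=
    fun j => poly_bound _ _ (by omega)
  set r := ∑ j ∈ Finset.range d, (W.coeff j).natDegree with hr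
  have hb : ∀ j, ∃ K : ℝ, 0 ≤ K ∧ ∀ t : ℝ, j < d → |(W.coeff j).eval t| ≤
      K * (1 + t ^ 2) ^ r := by
    intro j
    by_cases hj : j < d
    · obtain ⟨K, hK, h⟩ := poly_bound (W.coeff j) r (Finset.single_le_sum
        (f := fun j => (W.coeff j).natDegree) (fun _ _ => Nat.zero_le _) (Finset.mem_range.2 hj))
      exact ⟨K, hK, fun t _ => h t⟩
    · exact ⟨0, le_rfl, fun t h => absurd h hj⟩
  choose K hK hKb using hb
  have hKs : 0 ≤ ∑ j ∈ Finset.range d, K j := Finset.sum_nonneg fun j _ => hK j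
  refine ⟨1 + (∑ j ∈ Finset.range d, K j) / c, r, by positivity, ?_⟩
  filter_upwards [hc] with t ht a _ ha
  have hone : 1 ≤ (1 + t ^ 2) ^ r := one_le_pow₀ (by nlinarith [sq_nonneg t])
  by_cases ha1 : a ≤ 1
  · calc a ≤ 1 * 1 := by linarith
      _ ≤ _ := mul_le_mul (by linarith [div_nonneg hKs hc0.le]) hone zero_le_one (by positivity)
  push Not at ha1
  have hev : ∑ j ∈ Finset.range d, (W.coeff j).eval t * a ^ j + l.eval t * a ^ d = 0 := by
    rw [← ha, eval_map, eval₂_eq_sum_range, Finset.sum_range_succ]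
    rfl
  have h1 : |l.eval t| * a ^ d ≤ ∑ j ∈ Finset.range d, K j * (1 + t ^ 2) ^ r * a ^ j := by
    have : |l.eval t| * a ^ d = |∑ j ∈ Finset.range d, (W.coeff j).eval t * a ^ j| := by
      rw [show ∑ j ∈ Finset.range d, (W.coeff j).eval t * a ^ j = - (l.eval t * a ^ d) by linarith,
        abs_neg, abs_mul, abs_of_pos (a := a ^ d) (by positivity)]
    rw [this]
    refine (Finset.abs_sum_le_sum_abs _ _).trans (Finset.sum_le_sum fun j hj => ?_)
    rw [abs_mul, abs_of_pos (a := a ^ j) (by positivity)]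
    exact mul_le_mul_of_nonneg_right (hKb j t (Finset.mem_range.1 hj)) (by positivity)
  rcases Nat.eq_zero_or_pos d with h0 | h0
  · rw [h0] at h1
    simp at h1
    rw [h1] at ht
    simp at ht
    linarith
  obtain ⟨e, he⟩ : ∃ e, d = e + 1 := ⟨d - 1, by omega⟩
  have h2 : ∑ j ∈ Finset.range d, K j * (1 + t ^ 2) ^ r * a ^ j ≤
      (∑ j ∈ Finset.range d, K j) * (1 + t ^ 2) ^ r * a ^ e := by
    rw [Finset.sum_mul, Finset.sum_mul]
    refine Finset.sum_le_sum fun j hj => ?_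
    have := hK j
    refine mul_le_mul_of_nonneg_left (pow_le_pow_right₀ ha1.le ?_) (by positivity)
    simp at hj; omega
  have h3 : c * a * a ^ e ≤ (∑ j ∈ Finset.range d, K j) * (1 + t ^ 2) ^ r * a ^ e := by
    refine le_trans ?_ (h1.trans h2)
    rw [he, pow_succ, mul_assoc, mul_comm a]
    exact mul_le_mul_of_nonneg_right ht (by positivity)
  have h4 := le_of_mul_le_mul_right h3 (by positivity)
  have h5 : a ≤ (∑ j ∈ Finset.range d, K j) / c * (1 + t ^ 2) ^ r := by
    rw [div_mul_eq_mul_div, le_div_iff₀ hc0]; linarith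
  nlinarith

theorem growth [Fintype σ] [DecidableEq σ] {p : (σ → ℝ) → Prop} (hp : SA p) (s t : σ)
    (hst : s ≠ t) (hb : ∀ R, ∃ B, ∀ v, p v → v t ≤ R → v s ≤ B) :
    ∃ (K : ℝ) (r : ℕ), ∀ v, p v → v s ≤ K * (1 + (v t) ^ 2) ^ r := by
  classical
  set D : (σ → ℝ) → Prop := fun v => ∃ u, (∀ j ∉ Finset.univ \ {s, t}, u j = v j) ∧ p u with hD
  have hDSA : SA D := hp.exists_block _
  obtain ⟨P, hP⟩ := hDSA
  set Ψ : MvPolynomial σ ℝ →+* ℝ[X][X] := MvPolynomial.eval₂Hom (C.comp C)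
    (fun j => if j = s then X else if j = t then C X else 0) with hΨ
  set w : ℝ → ℝ → σ → ℝ := fun b a j => if j = s then a else if j = t then b else 0 with hw
  have hΨe : ∀ (b a : ℝ) (Q : MvPolynomial σ ℝ),
      MvPolynomial.eval (w b a) Q = ((Ψ Q).map (evalRingHom b)).eval a := by
    intro b a Q
    have : (MvPolynomial.eval (w b a) : MvPolynomial σ ℝ →+* ℝ) =
        ((evalRingHom a).comp (mapRingHom (evalRingHom b))).comp Ψ := by
      apply MvPolynomial.ringHom_ext
      · intro r; simp [hΨ]
      · intro j
        by_cases h : j = s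
        · simp [hΨ, hw, h]
        · by_cases h' : j = t
          · simp [hΨ, hw, h, h']
            rw [if_neg (fun h => hst h.symm), if_neg (fun h => hst h.symm)]; simp
          · simp [hΨ, hw, h, h']
    exact congrArg (fun f => f Q) this
  have hDp : ∀ v, p v → D (w (v t) (v s)) := by
    intro v hv
    refine ⟨v, fun j hj => ?_, hv⟩
    simp at hj
    by_cases h : j = s
    · simp [hw, h]
    · have := hj h; simp [hw, h, this]; intro h'; exact absurd h' (this ▸ h)
  have hDb : ∀ b a, D (w b a) → ∃ v, p v ∧ v t = b ∧ v s = a := by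
    rintro b a ⟨u, hu, hpu⟩
    refine ⟨u, hpu, ?_, ?_⟩
    · rw [hu t (by simp)]; simp [hw, hst.symm]
    · rw [hu s (by simp)]; simp [hw]
  choose K r hK hroot using fun Q : P => root_bound (Ψ Q)
  have hev := Filter.eventually_all.2 hroot
  obtain ⟨T, hT⟩ := Filter.eventually_atTop.1 hev
  obtain ⟨B, hB⟩ := hb T
  refine ⟨∑ Q : P, K Q + |B|, ∑ Q : P, r Q, fun v hv => ?_⟩
  have hKs : 0 ≤ ∑ Q : P, K Q := Finset.sum_nonneg fun Q _ => hK Q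
  have hone : 1 ≤ (1 + (v t) ^ 2) ^ (∑ Q : P, r Q) := one_le_pow₀ (by nlinarith [sq_nonneg (v t)])
  by_cases hvt : v t ≤ T
  · have := hB v hv hvt
    have h2 := le_abs_self B
    nlinarith [abs_nonneg B]
  push Not at hvt
  set b := v t with hbdef
  set S : Set ℝ := {a | D (w b a)} with hS
  have hvS : v s ∈ S := hDp v hv
  have hSb : BddAbove S := by
    obtain ⟨B', hB'⟩ := hb b
    refine ⟨B', fun a ha => ?_⟩
    obtain ⟨u, h1, h2, h3⟩ := hDb b a ha
    rw [← h3]; exact hB' u h1 h2.le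
  set M := sSup S with hM
  have hvM : v s ≤ M := le_csSup hSb hvS
  have hex : ∃ Q : P, (Ψ Q).map (evalRingHom b) ≠ 0 ∧ ((Ψ Q).map (evalRingHom b)).eval M = 0 := by
    by_contra hcon
    push Not at hcon
    have hloc : ∀ᶠ a in nhds M, ∀ Q : P, SignType.sign (((Ψ Q).map (evalRingHom b)).eval a) =
        SignType.sign (((Ψ Q).map (evalRingHom b)).eval M) := by
      rw [Filter.eventually_all]
      intro Q
      by_cases h0 : (Ψ Q).map (evalRingHom b) = 0
      · simp [h0]
      · have h1 := hcon Q h0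
        have hc := ((Ψ Q).map (evalRingHom b)).continuous.continuousAt (x := M)
        rcases lt_or_gt_of_ne h1 with h2 | h2
        · filter_upwards [hc.eventually_lt_const h2] with a ha
          rw [sign_neg ha, sign_neg h2]
        · filter_upwards [hc.eventually_const_lt h2] with a ha
          rw [sign_pos ha, sign_pos h2]
    have hloc2 : ∀ᶠ a in nhds M, (a ∈ S ↔ M ∈ S) := by
      filter_upwards [hloc] with a ha
      have := hP (w b a) (w b M) (fun Q hQ => by
        simp only [hΨe]; exact ha ⟨Q, hQ⟩)
      exact iff_of_eq this
    have hMS : M ∉ S := by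
      intro hMS
      obtain ⟨a, ha, ha2⟩ := ((hloc2.filter_mono nhdsWithin_le_nhds).and
        (self_mem_nhdsWithin : Set.Ioi M ∈ nhdsWithin M (Set.Ioi M))).exists
      exact absurd (le_csSup hSb (ha.2 hMS)) (not_le.2 ha2)
    have hcl : M ∈ closure S := csSup_mem_closure ⟨_, hvS⟩ hSb
    obtain ⟨a, ha, haS⟩ := (mem_closure_iff_frequently.1 hcl).and_eventually hloc2 |>.exists
    exact hMS (haS.1 ha)
  obtain ⟨Q, hQ1, hQ2⟩ := hex
  have h1 := hT b hvt.le Q M hQ1 hQ2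
  have h2 : (1 + b ^ 2) ^ r Q ≤ (1 + b ^ 2) ^ (∑ Q : P, r Q) :=
    pow_le_pow_right₀ (by nlinarith [sq_nonneg b])
      (Finset.single_le_sum (f := r) (fun _ _ => Nat.zero_le _) (Finset.mem_univ Q))
  have h3 : K Q ≤ ∑ Q : P, K Q := Finset.single_le_sum (fun Q _ => hK Q) (Finset.mem_univ Q)
  calc v s ≤ K Q * (1 + b ^ 2) ^ r Q := hvM.trans h1
    _ ≤ (∑ Q : P, K Q + |B|) * (1 + b ^ 2) ^ (∑ Q : P, r Q) := by
      refine mul_le_mul (by linarith [abs_nonneg B]) h2 (by positivity) (by positivity)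

end QE

end

section

open Filter Topology

namespace QE

theorem dense_ne_zero {n : ℕ} {q : MvPolynomial (Fin n) ℝ} (hq : q ≠ 0) :
    Dense {x : Fin n → ℝ | MvPolynomial.eval x q ≠ 0} := by
  intro x
  rw [Metric.mem_closure_iff]
  intro ε hε
  by_contra hc
  push Not at hc
  apply hq
  apply MvPolynomial.funext_set (fun i => Metric.ball (x i) ε)
  · intro i
    exact infinite_of_mem_nhds (x i) (Metric.ball_mem_nhds _ hε)
  · intro y hy
    by_contra h
    have h2 := hc y (by simpa using h)
    have : dist x y < ε := by
      rw [dist_pi_lt_iff hε]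
      intro i
      have := hy i (Set.mem_univ i)
      rwa [Metric.mem_ball, dist_comm] at this
    linarith

variable {σ τ : Type*}

theorem SA.rename {p : (τ → ℝ) → Prop} (hp : SA p) (e : τ → σ) :
    SA (fun x : σ → ℝ => p (fun i => x (e i))) := by
  classical
  obtain ⟨s, hs⟩ := hp
  refine ⟨s.image (MvPolynomial.rename e), fun x y h => hs _ _ fun a ha => ?_⟩
  have := h _ (Finset.mem_image_of_mem _ ha)
  simp only [MvPolynomial.eval_rename] at this
  exact this

/-- polynomial functions -/
def IsPoly (f : (σ → ℝ) → ℝ) : Prop := ∃ P : MvPolynomial σ ℝ, ∀ v, MvPolynomial.eval v P = f v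

theorem IsPoly.const (c : ℝ) : IsPoly (fun _ : σ → ℝ => c) := ⟨MvPolynomial.C c, by simp⟩
theorem IsPoly.coord (i : σ) : IsPoly (fun v : σ → ℝ => v i) := ⟨MvPolynomial.X i, by simp⟩
theorem IsPoly.add {f g : (σ → ℝ) → ℝ} (hf : IsPoly f) (hg : IsPoly g) :
    IsPoly (fun v => f v + g v) := by
  obtain ⟨P, hP⟩ := hf; obtain ⟨Q, hQ⟩ := hg
  exact ⟨P + Q, by simp [hP, hQ]⟩
theorem IsPoly.sub {f g : (σ → ℝ) → ℝ} (hf : IsPoly f) (hg : IsPoly g) :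
    IsPoly (fun v => f v - g v) := by
  obtain ⟨P, hP⟩ := hf; obtain ⟨Q, hQ⟩ := hg
  exact ⟨P - Q, by simp [hP, hQ]⟩
theorem IsPoly.mul {f g : (σ → ℝ) → ℝ} (hf : IsPoly f) (hg : IsPoly g) :
    IsPoly (fun v => f v * g v) := by
  obtain ⟨P, hP⟩ := hf; obtain ⟨Q, hQ⟩ := hg
  exact ⟨P * Q, by simp [hP, hQ]⟩
theorem IsPoly.pow {f : (σ → ℝ) → ℝ} (hf : IsPoly f) (k : ℕ) :
    IsPoly (fun v => f v ^ k) := by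
  obtain ⟨P, hP⟩ := hf
  exact ⟨P ^ k, by simp [hP]⟩
theorem IsPoly.sum {ι : Type*} (s : Finset ι) {f : ι → (σ → ℝ) → ℝ} (hf : ∀ i, IsPoly (f i)) :
    IsPoly (fun v => ∑ i ∈ s, f i v) := by
  choose P hP using hf
  exact ⟨∑ i ∈ s, P i, by simp [hP]⟩
theorem IsPoly.eval (P : MvPolynomial τ ℝ) (e : τ → σ) :
    IsPoly (fun v : σ → ℝ => MvPolynomial.eval (fun i => v (e i)) P) :=
  ⟨MvPolynomial.rename e P, fun v => by rw [MvPolynomial.eval_rename]; rfl⟩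

theorem IsPoly.sa_eq {f g : (σ → ℝ) → ℝ} (hf : IsPoly f) (hg : IsPoly g) :
    SA (fun v => f v = g v) := by
  obtain ⟨P, hP⟩ := hf.sub hg
  refine SA.congr (Det.eq_zero P) fun v => ?_
  rw [hP, sub_eq_zero]
theorem IsPoly.sa_le {f g : (σ → ℝ) → ℝ} (hf : IsPoly f) (hg : IsPoly g) :
    SA (fun v => f v ≤ g v) := by
  obtain ⟨P, hP⟩ := hf.sub hg
  refine SA.congr (Det.not (Det.pos P)) fun v => ?_
  rw [hP, sub_pos, not_lt]

/-- the semialgebraic family used for the growth estimate -/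
def Fam {n : ℕ} (F : Set (Fin n → ℝ)) (q p qg pg : MvPolynomial (Fin n) ℝ)
    (x : Fin n → ℝ) (y z s t : ℝ) : Prop :=
  (∀ w ∈ F, 1 ≤ z ^ 2 * ∑ i, (x i - w i) ^ 2) ∧ MvPolynomial.eval x q ≠ 0 ∧
  MvPolynomial.eval x qg ≠ 0 ∧ y * MvPolynomial.eval x pg = MvPolynomial.eval x qg ∧
  s * MvPolynomial.eval x q ^ 2 = MvPolynomial.eval x p ^ 2 ∧
  t = 1 + ∑ i, x i ^ 2 + y ^ 2 + z ^ 2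

abbrev Vars (n : ℕ) := Fin n ⊕ Fin n ⊕ Fin 4

theorem sa_fam {n : ℕ} {F : Set (Fin n → ℝ)} (hF : SA (fun x => x ∈ F))
    (q p qg pg : MvPolynomial (Fin n) ℝ) :
    SA (fun v : Vars n → ℝ => Fam F q p qg pg (fun i => v (.inl i)) (v (.inr (.inr 0)))
      (v (.inr (.inr 1))) (v (.inr (.inr 2))) (v (.inr (.inr 3)))) := by
  classical
  have e0 := IsPoly.eval (σ := Vars n) q (fun i => .inl i)
  have e1 := IsPoly.eval (σ := Vars n) p (fun i => .inl i)
  have e2 := IsPoly.eval (σ := Vars n) qg (fun i => .inl i)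
  have e3 := IsPoly.eval (σ := Vars n) pg (fun i => .inl i)
  have c (i) := IsPoly.coord (σ := Vars n) i
  refine Det.and ?_ (Det.and (Det.not ?_) (Det.and (Det.not ?_) (Det.and ?_ (Det.and ?_ ?_))))
  · have h1 : SA (fun v : Vars n → ℝ => (fun i => v (.inr (.inl i))) ∈ F ∧
        ¬ (1 ≤ v (.inr (.inr 1)) ^ 2 * ∑ i, (v (.inl i) - v (.inr (.inl i))) ^ 2)) := by
      refine Det.and (SA.rename (σ := Vars n) hF fun i => Sum.inr (Sum.inl i)) (Det.not ?_)
      exact (IsPoly.const 1).sa_le (((c _).pow 2).mul (IsPoly.sum _ fun i => ((c _).sub (c _)).pow 2))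
    have h2 := h1.exists_block (Finset.univ.image fun i => .inr (.inl i))
    refine SA.congr (Det.not h2) fun v => ?_
    constructor
    · rintro h ⟨u, hu, h3, h4⟩
      apply h4
      have := h _ h3
      rw [hu _ (by simp)]
      simpa [hu (.inl _)] using this
    · intro h w hw
      by_contra h4
      refine h ⟨fun j => match j with | .inr (.inl i) => w i | .inl i => v (.inl i) | .inr (.inr i) => v (.inr (.inr i)), ?_, ?_, ?_⟩
      · rintro (j | j | j) hj
        · rfl
        · simp at hj
        · rfl
      · exact hw
      · exact h4
  · exact e0.sa_eq (IsPoly.const 0)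
  · exact e2.sa_eq (IsPoly.const 0)
  · exact ((c _).mul e3).sa_eq e2
  · exact ((c _).mul (e0.pow 2)).sa_eq (e1.pow 2)
  · exact (c _).sa_eq ((((IsPoly.const 1).add (IsPoly.sum _ fun i => (c _).pow 2)).add ((c _).pow 2)).add ((c _).pow 2))

theorem fam_growth {n : ℕ} {F : Set (Fin n → ℝ)} (hF : SA (fun x => x ∈ F))
    (q p qg pg : MvPolynomial (Fin n) ℝ)
    (hb : ∀ R : ℝ, ∃ B : ℝ, ∀ x y z s t, Fam F q p qg pg x y z s t → t ≤ R → s ≤ B) :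
    ∃ (K : ℝ) (r : ℕ), ∀ x y z s t, Fam F q p qg pg x y z s t → s ≤ K * (1 + t ^ 2) ^ r := by
  classical
  obtain ⟨K, r, h⟩ := growth (sa_fam hF q p qg pg) (.inr (.inr 2)) (.inr (.inr 3)) (by simp)
    (fun R => by
      obtain ⟨B, hB⟩ := hb R
      exact ⟨B, fun v hv ht => hB _ _ _ _ _ hv ht⟩)
  refine ⟨K, r, fun x y z s t hf => ?_⟩
  exact h (fun j => match j with | .inl i => x i | .inr (.inl i) => 0 | .inr (.inr i) => ![y, z, s, t] i) hf

theorem fam_spec {n : ℕ} {F : Set (Fin n → ℝ)} {q p qg pg : MvPolynomial (Fin n) ℝ}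
    {g h : (Fin n → ℝ) → ℝ}
    (hgr : ∀ x ∈ Fᶜ, MvPolynomial.eval x qg * g x = MvPolynomial.eval x pg)
    (hhr : ∀ x ∈ Fᶜ ∩ {x | g x ≠ 0}, MvPolynomial.eval x q * h x = MvPolynomial.eval x p)
    {x : Fin n → ℝ} {y z s t : ℝ} (hf : Fam F q p qg pg x y z s t) :
    x ∈ Fᶜ ∧ y * g x = 1 ∧ s = h x ^ 2 := by
  obtain ⟨h1, h2, h3, h4, h5, h6⟩ := hf
  have hx : x ∈ Fᶜ := by
    intro hx
    have := h1 x hx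
    simp at this
    linarith
  have h7 := hgr x hx
  have h8 : y * g x = 1 := by
    apply mul_left_cancel₀ h3
    rw [← h7] at h4
    linarith
  have hg : g x ≠ 0 := right_ne_zero_of_mul_eq_one h8
  refine ⟨hx, h8, ?_⟩
  have h9 := hhr x ⟨hx, hg⟩
  apply mul_right_cancel₀ (pow_ne_zero 2 h2)
  rw [h5, ← h9]; ring

theorem sq_le_sum {n : ℕ} (x : Fin n → ℝ) (i : Fin n) : x i ^ 2 ≤ ∑ i, x i ^ 2 :=
  Finset.single_le_sum (f := fun i => x i ^ 2) (fun _ _ => sq_nonneg _) (Finset.mem_univ i)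

theorem fam_bound {n : ℕ} {F : Set (Fin n → ℝ)} {q p qg pg : MvPolynomial (Fin n) ℝ}
    {g h : (Fin n → ℝ) → ℝ} (hg : ContinuousOn g Fᶜ)
    (hh : ContinuousOn h (Fᶜ ∩ {x | g x ≠ 0}))
    (hgr : ∀ x ∈ Fᶜ, MvPolynomial.eval x qg * g x = MvPolynomial.eval x pg)
    (hhr : ∀ x ∈ Fᶜ ∩ {x | g x ≠ 0}, MvPolynomial.eval x q * h x = MvPolynomial.eval x p) :
    ∀ R : ℝ, ∃ B : ℝ, ∀ x y z s t, Fam F q p qg pg x y z s t → t ≤ R → s ≤ B := by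
  intro R
  set K : Set (Fin n → ℝ) := {x | ∑ i, x i ^ 2 ≤ R} ∩ {x | ∀ w ∈ F, 1 ≤ R * ∑ i, (x i - w i) ^ 2} with hK
  have hKc : IsClosed K := by
    refine (isClosed_le (by fun_prop) (by fun_prop)).inter ?_
    simp only [Set.ofPred_forall]
    exact isClosed_iInter fun w => isClosed_iInter fun _ => isClosed_le (by fun_prop) (by fun_prop)
  have hKb : Bornology.IsBounded K := by
    refine Metric.isBounded_closedBall (x := (0 : Fin n → ℝ)) (r := Real.sqrt R) |>.subset ?_
    intro x hx
    rw [mem_closedBall_zero_iff, pi_norm_le_iff_of_nonneg (Real.sqrt_nonneg _)]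
    intro i
    exact Real.abs_le_sqrt ((sq_le_sum x i).trans hx.1)
  have hKU : K ⊆ Fᶜ := by
    intro x hx hxF
    have := hx.2 x hxF
    simp at this
    linarith
  have hK' : IsCompact (K ∩ g ⁻¹' {a | 1 ≤ R * a ^ 2}) := by
    refine (Metric.isCompact_of_isClosed_isBounded ?_ (hKb.subset Set.inter_subset_left))
    exact (hg.mono hKU).preimage_isClosed_of_isClosed hKc (isClosed_le (by fun_prop) (by fun_prop))
  obtain ⟨B, hB⟩ := hK'.exists_bound_of_continuousOn (f := h) (hh.mono (by
    intro x hx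
    refine ⟨hKU hx.1, ?_⟩
    intro h0
    have := hx.2
    simp [h0] at this
    linarith))
  refine ⟨B ^ 2, fun x y z s t hf ht => ?_⟩
  obtain ⟨h1, h2, h3⟩ := fam_spec hgr hhr hf
  obtain ⟨f1, -, -, -, -, f6⟩ := hf
  have hS : 0 ≤ ∑ i, x i ^ 2 := Finset.sum_nonneg fun _ _ => sq_nonneg _
  rw [h3]
  have := hB x ⟨⟨?_, ?_⟩, ?_⟩
  · exact sq_le_sq' (abs_le.1 this).1 (abs_le.1 this).2
  · show _ ≤ R
    nlinarith [sq_nonneg y, sq_nonneg z]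
  · intro w hw
    refine (f1 w hw).trans (mul_le_mul_of_nonneg_right ?_ (Finset.sum_nonneg fun _ _ => sq_nonneg _))
    nlinarith [sq_nonneg y, sq_nonneg z]
  · show 1 ≤ R * g x ^ 2
    have : y ^ 2 * g x ^ 2 = 1 := by rw [← mul_pow, h2, one_pow]
    rw [← this]
    refine mul_le_mul_of_nonneg_right ?_ (sq_nonneg _)
    nlinarith [sq_nonneg y, sq_nonneg z]

theorem local_growth {n : ℕ} {F : Set (Fin n → ℝ)} (hFc : IsClosed F) (hF : SA (fun x => x ∈ F))
    {q p qg pg : MvPolynomial (Fin n) ℝ} (hq : q ≠ 0) (hqg : qg ≠ 0)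
    {g h : (Fin n → ℝ) → ℝ} (hg : ContinuousOn g Fᶜ)
    (hh : ContinuousOn h (Fᶜ ∩ {x | g x ≠ 0}))
    (hgr : ∀ x ∈ Fᶜ, MvPolynomial.eval x qg * g x = MvPolynomial.eval x pg)
    (hhr : ∀ x ∈ Fᶜ ∩ {x | g x ≠ 0}, MvPolynomial.eval x q * h x = MvPolynomial.eval x p) :
    ∃ r : ℕ, ∀ x₀ ∈ Fᶜ, ∃ C : ℝ, ∀ᶠ x in 𝓝 x₀, g x ≠ 0 → h x ^ 2 * g x ^ (2 * r) ≤ C := by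
  obtain ⟨K, r, hK⟩ := fam_growth hF q p qg pg (fam_bound hg hh hgr hhr)
  refine ⟨2 * r, fun x₀ hx₀ => ?_⟩
  have hU : IsOpen Fᶜ := hFc.isOpen_compl
  have hV : IsOpen (Fᶜ ∩ {x | g x ≠ 0}) :=
    hg.isOpen_inter_preimage hU isOpen_ne
  obtain ⟨ρ, hρ, hball⟩ := Metric.isOpen_iff.1 hU x₀ hx₀
  set z : ℝ := 2 / ρ with hz
  set Φ : (Fin n → ℝ) → ℝ := fun x => |K| * (g x ^ 4 + ((1 + ∑ i, x i ^ 2 + z ^ 2) * g x ^ 2 + 1) ^ 2) ^ r with hΦ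
  have hgc : ContinuousAt g x₀ := hg.continuousAt (hU.mem_nhds hx₀)
  have hsc : ContinuousAt (fun x : Fin n → ℝ => ∑ i, x i ^ 2) x₀ :=
    (show Continuous (fun x : Fin n → ℝ => ∑ i, x i ^ 2) by fun_prop).continuousAt
  have hΦc : ContinuousAt Φ x₀ := by
    simp only [hΦ]
    exact continuousAt_const.mul (((hgc.pow 4).add ((((continuousAt_const.add hsc).add
      continuousAt_const).mul (hgc.pow 2)).add continuousAt_const |>.pow 2)).pow r)
  refine ⟨Φ x₀ + 1, ?_⟩
  have ev1 : ∀ᶠ x in 𝓝 x₀, Φ x < Φ x₀ + 1 := hΦc.eventually_lt_const (by linarith)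
  have ev2 : ∀ᶠ x in 𝓝 x₀, x ∈ Metric.ball x₀ (ρ / 2) := Metric.ball_mem_nhds _ (by linarith)
  filter_upwards [(ev1.and ev2).eventually_nhds, hU.mem_nhds hx₀] with x hx hxU hgx
  have hxV : x ∈ Fᶜ ∩ {x | g x ≠ 0} := ⟨hxU, hgx⟩
  have hVn := hV.mem_nhds hxV
  have hcont : ContinuousAt (fun x => h x ^ 2 * g x ^ (2 * (2 * r))) x := by
    have h1 : ContinuousAt h x := hh.continuousAt hVn
    have h2 : ContinuousAt g x := hg.continuousAt (hU.mem_nhds hxU)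
    fun_prop
  have hd : ∃ᶠ y in 𝓝 x, MvPolynomial.eval y (q * qg) ≠ 0 :=
    mem_closure_iff_frequently.1 (dense_ne_zero (mul_ne_zero hq hqg) x)
  refine le_of_tendsto_of_frequently hcont ?_
  refine (hd.and_eventually (hx.and hVn)).mono ?_
  rintro y ⟨hy, ⟨hy1, hy2⟩, hyU, hyg⟩
  simp only [map_mul, mul_ne_zero_iff] at hy
  have hyg' : g y ≠ 0 := hyg
  have hfam : Fam F q p qg pg y (1 / g y) z (h y ^ 2) (1 + ∑ i, y i ^ 2 + (1 / g y) ^ 2 + z ^ 2) := by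
    refine ⟨fun w hw => ?_, hy.1, hy.2, ?_, ?_, rfl⟩
    · have : ρ / 2 ≤ dist y w := by
        by_contra hc
        refine hball (?_ : w ∈ _) hw
        rw [Metric.mem_ball] at hy2 ⊢
        calc dist w x₀ ≤ dist w y + dist y x₀ := dist_triangle _ _ _
          _ < ρ := by rw [dist_comm w y]; linarith
      have h2 : ∃ i, ρ / 2 ≤ dist (y i) (w i) := by
        by_contra hc
        push Not at hc
        exact absurd ((dist_pi_lt_iff (by positivity)).2 hc) (by linarith)
      obtain ⟨i, hi⟩ := h2
      rw [Real.dist_eq] at hi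
      have h3 := sq_le_sum (fun i => y i - w i) i
      have h4 : (ρ / 2) ^ 2 ≤ (y i - w i) ^ 2 := by
        rw [← sq_abs (y i - w i)]; gcongr
      calc (1 : ℝ) = z ^ 2 * (ρ / 2) ^ 2 := by rw [hz]; field_simp
        _ ≤ _ := mul_le_mul_of_nonneg_left (h4.trans h3) (sq_nonneg _)
    · rw [← hgr y hyU]; field_simp
    · rw [← hhr y ⟨hyU, hyg⟩]; ring
  have h1 := hK _ _ _ _ _ hfam
  have hg4 : 0 ≤ g y ^ (2 * (2 * r)) := by rw [pow_mul]; positivity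
  calc h y ^ 2 * g y ^ (2 * (2 * r)) ≤ (K * (1 + (1 + ∑ i, y i ^ 2 + (1 / g y) ^ 2 + z ^ 2) ^ 2) ^ r) * g y ^ (2 * (2 * r)) :=
        mul_le_mul_of_nonneg_right h1 hg4
    _ ≤ (|K| * (1 + (1 + ∑ i, y i ^ 2 + (1 / g y) ^ 2 + z ^ 2) ^ 2) ^ r) * g y ^ (2 * (2 * r)) := by
        gcongr
        exact le_abs_self K
    _ = Φ y := by
        rw [hΦ]
        simp only
        rw [show 2 * (2 * r) = 4 * r by ring, pow_mul, mul_assoc, ← mul_pow]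
        congr 2
        field_simp
        ring
    _ ≤ _ := hy1.le

end QE

end

section

open Filter Topology

namespace QE

theorem segment_bound {E : Type*} [NormedAddCommGroup E] [NormedSpace ℝ E] {G : E → ℝ}
    {L : E → E →L[ℝ] ℝ} {x₀ : E} {δ ε : ℝ} (hG : ContinuousOn G (Metric.ball x₀ δ)) (h0 : G x₀ = 0)
    (hL : ∀ x ∈ Metric.ball x₀ δ, G x ≠ 0 → HasFDerivAt G (L x) x ∧ ‖L x‖ ≤ ε) {x : E}
    (hx : x ∈ Metric.ball x₀ δ) (hε : 0 ≤ ε) : |G x| ≤ ε * ‖x - x₀‖ := by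
  by_cases hGx : G x = 0
  · rw [hGx]; simp; positivity
  set γ : ℝ → E := fun t => x₀ + t • (x - x₀) with hγ
  have hγc : Continuous γ := by fun_prop
  have hγm : ∀ t ∈ Set.Icc (0:ℝ) 1, γ t ∈ Metric.ball x₀ δ := by
    intro t ht
    rw [Metric.mem_ball, dist_eq_norm] at *
    simp only [hγ, add_sub_cancel_left, norm_smul, Real.norm_eq_abs, abs_of_nonneg ht.1]
    nlinarith [norm_nonneg (x - x₀), ht.2]
  have hφ : ContinuousOn (fun t => G (γ t)) (Set.Icc 0 1) := hG.comp hγc.continuousOn hγm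
  have hT : IsCompact (Set.Icc (0:ℝ) 1 ∩ (fun t => G (γ t)) ⁻¹' {0}) :=
    isCompact_Icc.of_isClosed_subset (hφ.preimage_isClosed_of_isClosed isClosed_Icc isClosed_singleton)
      Set.inter_subset_left
  obtain ⟨a, ⟨ha, hGa⟩, hmax⟩ := hT.exists_isGreatest ⟨0, ⟨by simp, by simp [hγ, h0]⟩⟩
  have hGa : G (γ a) = 0 := hGa
  have hγ1 : γ 1 = x := by simp [hγ]
  have ha1 : a < 1 := by
    refine lt_of_le_of_ne ha.2 ?_
    rintro rfl
    rw [hγ1] at hGa; exact hGx hGa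
  have hnz : ∀ t ∈ Set.Ioo a 1, G (γ t) ≠ 0 := by
    intro t ht h
    have := hmax (a := t) ⟨⟨ha.1.trans ht.1.le, ht.2.le⟩, h⟩
    linarith [ht.1]
  have hd : ∀ t ∈ Set.Ioo a 1, HasDerivAt (fun t => G (γ t)) (L (γ t) (x - x₀)) t := by
    intro t ht
    have h1 := (hL (γ t) (hγm t ⟨ha.1.trans ht.1.le, ht.2.le⟩) (hnz t ht)).1
    have h2 : HasDerivAt γ (x - x₀) t := by
      have h3 := ((hasDerivAt_id t).smul_const (x - x₀)).const_add x₀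
      rw [one_smul] at h3
      exact h3
    exact h1.comp_hasDerivAt t h2
  obtain ⟨c, hc, hs⟩ := exists_hasDerivAt_eq_slope _ _ ha1 (hφ.mono (Set.Icc_subset_Icc_left ha.1)) hd
  simp only [hγ1, hGa, sub_zero] at hs
  have h1 : ‖L (γ c)‖ ≤ ε := (hL (γ c) (hγm c ⟨ha.1.trans hc.1.le, hc.2.le⟩) (hnz c hc)).2
  have h2 := (L (γ c)).le_opNorm (x - x₀)
  rw [eq_div_iff (by linarith)] at hs
  rw [← hs, abs_mul, abs_of_pos (by linarith : 0 < 1 - a)]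
  rw [Real.norm_eq_abs] at h2
  have h3 : |(L (γ c)) (x - x₀)| ≤ ε * ‖x - x₀‖ :=
    h2.trans (mul_le_mul_of_nonneg_right h1 (norm_nonneg _))
  nlinarith [abs_nonneg ((L (γ c)) (x - x₀)), ha.1]

variable {n : ℕ}

/-- `f` is rational on `S` -/
def RatOn (S : Set (Fin n → ℝ)) (f : (Fin n → ℝ) → ℝ) : Prop :=
  ∃ p q : MvPolynomial (Fin n) ℝ, q ≠ 0 ∧ ∀ x ∈ S, MvPolynomial.eval x q * f x = MvPolynomial.eval x p

theorem RatOn.mul {S : Set (Fin n → ℝ)} {f g : (Fin n → ℝ) → ℝ} (hf : RatOn S f) (hg : RatOn S g) :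
    RatOn S (fun x => f x * g x) := by
  obtain ⟨p, q, hq, h⟩ := hf
  obtain ⟨p', q', hq', h'⟩ := hg
  refine ⟨p * p', q * q', mul_ne_zero hq hq', fun x hx => ?_⟩
  simp only [map_mul, ← h x hx, ← h' x hx]; ring

theorem RatOn.mono {S T : Set (Fin n → ℝ)} {f : (Fin n → ℝ) → ℝ} (hf : RatOn S f) (h : T ⊆ S) :
    RatOn T f := by
  obtain ⟨p, q, hq, h'⟩ := hf
  exact ⟨p, q, hq, fun x hx => h' x (h hx)⟩

theorem contDiff_eval (p : MvPolynomial (Fin n) ℝ) {k : WithTop ℕ∞} :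
    ContDiff ℝ k (fun x : Fin n → ℝ => MvPolynomial.eval x p) := by
  induction p using MvPolynomial.induction_on with
  | C a => simp only [MvPolynomial.eval_C]; fun_prop
  | add p q hp hq => simp only [map_add]; exact hp.add hq
  | mul_X p i hp => simp only [map_mul, MvPolynomial.eval_X]; exact hp.mul (by fun_prop)

theorem exists_pderiv (p : MvPolynomial (Fin n) ℝ) (v : Fin n → ℝ) :
    ∃ p' : MvPolynomial (Fin n) ℝ, ∀ x,
      fderiv ℝ (fun x : Fin n → ℝ => MvPolynomial.eval x p) x v = MvPolynomial.eval x p' := by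
  have hdiff : ∀ (p : MvPolynomial (Fin n) ℝ) x,
      DifferentiableAt ℝ (fun x : Fin n → ℝ => MvPolynomial.eval x p) x :=
    fun p x => ((contDiff_eval p (k := 1)).differentiable (by simp)) x
  induction p using MvPolynomial.induction_on with
  | C a => exact ⟨0, by simp⟩
  | add p q hp hq =>
    obtain ⟨p', hp'⟩ := hp
    obtain ⟨q', hq'⟩ := hq
    refine ⟨p' + q', fun x => ?_⟩
    simp only [map_add]
    rw [fderiv_fun_add (hdiff _ _) (hdiff _ _), ← hp', ← hq']; rfl
  | mul_X p i hp =>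
    obtain ⟨p', hp'⟩ := hp
    refine ⟨p' * MvPolynomial.X i + p * MvPolynomial.C (v i), fun x => ?_⟩
    simp only [map_mul, map_add, MvPolynomial.eval_X, MvPolynomial.eval_C]
    have hX : HasFDerivAt (fun x : Fin n → ℝ => x i)
        (ContinuousLinearMap.proj (R := ℝ) (φ := fun _ : Fin n => ℝ) i) x := hasFDerivAt_apply i x
    rw [fderiv_fun_mul (hdiff _ _) hX.differentiableAt, ← hp', hX.fderiv]
    simp
    ring

theorem RatOn.fderiv {S : Set (Fin n → ℝ)} (hS : IsOpen S) {f : (Fin n → ℝ) → ℝ} (hf : RatOn S f)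
    (hd : ∀ x ∈ S, DifferentiableAt ℝ f x) (v : Fin n → ℝ) :
    RatOn S (fun x => fderiv ℝ f x v) := by
  obtain ⟨p, q, hq, h⟩ := hf
  obtain ⟨p', hp'⟩ := exists_pderiv p v
  obtain ⟨q', hq'⟩ := exists_pderiv q v
  refine ⟨q * p' - p * q', q ^ 2, pow_ne_zero 2 hq, fun x hx => ?_⟩
  have h1 : (fun x : Fin n → ℝ => MvPolynomial.eval x q * f x) =ᶠ[𝓝 x]
      (fun x : Fin n → ℝ => MvPolynomial.eval x p) := by
    filter_upwards [hS.mem_nhds hx] with y hy using h y hy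
  have h2 := h1.fderiv_eq (𝕜 := ℝ)
  rw [fderiv_fun_mul (((contDiff_eval q (k := 1)).differentiable (by simp)) x) (hd x hx)] at h2
  have h3 := congrArg (fun L => L v) h2
  simp only [add_apply, smul_apply, hp', hq', smul_eq_mul] at h3
  simp only [map_sub, map_mul, map_pow, ← h3, ← h x hx]
  ring

theorem base_claim {F : Set (Fin n → ℝ)} (hFc : IsClosed F) (hF : SA (fun x => x ∈ F))
    {g h : (Fin n → ℝ) → ℝ} (hg : ContinuousOn g Fᶜ) (hgr : RatOn Fᶜ g)
    (hh : ContinuousOn h (Fᶜ ∩ {x | g x ≠ 0})) (hhr : RatOn (Fᶜ ∩ {x | g x ≠ 0}) h) :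
    ∃ M₀, ∀ M ≥ M₀, ContinuousOn (fun x => g x ^ M * h x) Fᶜ := by
  obtain ⟨pg, qg, hqg, hgr⟩ := hgr
  obtain ⟨p, q, hq, hhr⟩ := hhr
  obtain ⟨r, hr⟩ := local_growth hFc hF hq hqg hg hh hgr hhr
  have hU : IsOpen Fᶜ := hFc.isOpen_compl
  refine ⟨r + 1, fun M hM x hx => ContinuousAt.continuousWithinAt ?_⟩
  have hgx : ContinuousAt g x := hg.continuousAt (hU.mem_nhds hx)
  by_cases h0 : g x = 0
  · obtain ⟨C, hC⟩ := hr x hx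
    obtain ⟨m, rfl⟩ := Nat.exists_eq_add_of_le hM
    have key : Tendsto (fun x => (g x ^ (r + 1 + m) * h x) ^ 2) (𝓝 x) (𝓝 0) := by
      have hlim : Tendsto (fun x => (g x ^ (m + 1)) ^ 2 * |C|) (𝓝 x) (𝓝 0) := by
        have : ContinuousAt (fun x => (g x ^ (m + 1)) ^ 2 * |C|) x := by fun_prop
        simpa [ContinuousAt, h0] using this
      refine tendsto_of_tendsto_of_tendsto_of_le_of_le' tendsto_const_nhds hlim
        (Eventually.of_forall fun _ => sq_nonneg _) ?_
      filter_upwards [hC] with y hy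
      by_cases hgy : g y = 0
      · simp [hgy]
      · calc (g y ^ (r + 1 + m) * h y) ^ 2 = (g y ^ (m + 1)) ^ 2 * (h y ^ 2 * g y ^ (2 * r)) := by ring
          _ ≤ _ := mul_le_mul_of_nonneg_left ((hy hgy).trans (le_abs_self _)) (sq_nonneg _)
    have h2 := (Real.continuous_sqrt.tendsto 0).comp key
    rw [ContinuousAt, h0, zero_pow (by omega), zero_mul, tendsto_zero_iff_abs_tendsto_zero]
    rw [Real.sqrt_zero] at h2
    refine h2.congr fun y => ?_
    simp [Real.sqrt_sq_eq_abs]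
  · have hV : IsOpen (Fᶜ ∩ {x | g x ≠ 0}) := hg.isOpen_inter_preimage hU isOpen_ne
    have : ContinuousAt h x := hh.continuousAt (hV.mem_nhds ⟨hx, h0⟩)
    fun_prop

theorem clm_ext_single {L L' : (Fin n → ℝ) →L[ℝ] ℝ}
    (h : ∀ i, L (Pi.single i 1) = L' (Pi.single i 1)) : L = L' := by
  apply ContinuousLinearMap.coe_injective
  apply LinearMap.pi_ext'
  intro i
  ext
  simpa using h i

theorem claim {F : Set (Fin n → ℝ)} (hFc : IsClosed F) (hF : SA (fun x => x ∈ F))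
    {g : (Fin n → ℝ) → ℝ} (hg : ContinuousOn g Fᶜ) (hgr : RatOn Fᶜ g) (k : ℕ) :
    ContDiffOn ℝ k g (Fᶜ ∩ {x | g x ≠ 0}) → ∀ h : (Fin n → ℝ) → ℝ,
      ContDiffOn ℝ k h (Fᶜ ∩ {x | g x ≠ 0}) → RatOn (Fᶜ ∩ {x | g x ≠ 0}) h →
      ∃ M₀, ∀ M ≥ M₀, ContDiffOn ℝ k (fun x => g x ^ M * h x) Fᶜ := by
  have hU : IsOpen Fᶜ := hFc.isOpen_compl
  have hV : IsOpen (Fᶜ ∩ {x | g x ≠ 0}) := hg.isOpen_inter_preimage hU isOpen_ne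
  have hgrV := hgr.mono (T := Fᶜ ∩ {x | g x ≠ 0}) Set.inter_subset_left
  induction k with
  | zero =>
    intro _ h hh hhr
    simp only [Nat.cast_zero, contDiffOn_zero] at hh ⊢
    exact base_claim hFc hF hg hgr hh hhr
  | succ k ih =>
    intro hgk h hh hhr
    have hgk' : ContDiffOn ℝ k g (Fᶜ ∩ {x | g x ≠ 0}) := hgk.of_le (by norm_cast; omega)
    have hhk' : ContDiffOn ℝ k h (Fᶜ ∩ {x | g x ≠ 0}) := hh.of_le (by norm_cast; omega)
    have hgd : ∀ x ∈ Fᶜ ∩ {x | g x ≠ 0}, DifferentiableAt ℝ g x := fun x hx =>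
      (hgk.differentiableOn (by simp)).differentiableAt (hV.mem_nhds hx)
    have hhd : ∀ x ∈ Fᶜ ∩ {x | g x ≠ 0}, DifferentiableAt ℝ h x := fun x hx =>
      (hh.differentiableOn (by simp)).differentiableAt (hV.mem_nhds hx)
    have hgD (i : Fin n) : ContDiffOn ℝ k (fun x => fderiv ℝ g x (Pi.single i 1)) (Fᶜ ∩ {x | g x ≠ 0}) :=
      (hgk.fderiv_of_isOpen hV (by norm_cast)).clm_apply contDiffOn_const
    have hhD (i : Fin n) : ContDiffOn ℝ k (fun x => fderiv ℝ h x (Pi.single i 1)) (Fᶜ ∩ {x | g x ≠ 0}) :=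
      (hh.fderiv_of_isOpen hV (by norm_cast)).clm_apply contDiffOn_const
    obtain ⟨M₀, hM₀⟩ := base_claim hFc hF hg hgr hh.continuousOn hhr
    choose M₁ hM₁ using fun i => ih hgk' _ (hhD i) (hhr.fderiv hV hhd _)
    choose M₂ hM₂ using fun i => ih hgk' _ (hhk'.mul (hgD i)) (hhr.mul (hgrV.fderiv hV hgd _))
    refine ⟨M₀ + ∑ i, M₁ i + ∑ i, M₂ i + 2, fun M hM => ?_⟩
    have hG := hM₀ M (by omega)
    have hD1 (i) := hM₁ i M (by
      have := Finset.single_le_sum (f := M₁) (fun _ _ => Nat.zero_le _) (Finset.mem_univ i)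
      omega)
    have hD2 (i) := hM₂ i (M - 1) (by
      have := Finset.single_le_sum (f := M₂) (fun _ _ => Nat.zero_le _) (Finset.mem_univ i)
      omega)
    set D : Fin n → (Fin n → ℝ) → ℝ := fun i x => g x ^ M * fderiv ℝ h x (Pi.single i 1) +
      M * (g x ^ (M - 1) * (h x * fderiv ℝ g x (Pi.single i 1))) with hD
    have hDk : ∀ i, ContDiffOn ℝ k (D i) Fᶜ := fun i =>
      (hD1 i).add (contDiffOn_const.mul (hD2 i))
    set L : (Fin n → ℝ) → (Fin n → ℝ) →L[ℝ] ℝ := fun x =>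
      ∑ i, D i x • ContinuousLinearMap.proj (R := ℝ) (φ := fun _ : Fin n => ℝ) i with hL
    have hLk : ContDiffOn ℝ k L Fᶜ := ContDiffOn.sum fun i _ => (hDk i).smul contDiffOn_const
    have hLi : ∀ x i, L x (Pi.single i 1) = D i x := by
      intro x i
      simp [hL, Pi.single_apply]
    have hder : ∀ x ∈ Fᶜ, HasFDerivAt (fun x => g x ^ M * h x) (L x) x := by
      have hne : ∀ x ∈ Fᶜ, g x ≠ 0 → HasFDerivAt (fun x => g x ^ M * h x) (L x) x := by
        intro x hx hgx
        have h1 := (hgd x ⟨hx, hgx⟩).hasFDerivAt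
        have h2 := (hhd x ⟨hx, hgx⟩).hasFDerivAt
        have h3 := (h1.pow M).mul h2
        refine h3.congr_fderiv ?_
        symm
        apply clm_ext_single
        intro i
        rw [hLi]
        simp [hD]
        ring
      intro x hx
      by_cases hgx : g x = 0
      · have hL0 : L x = 0 := by
          apply clm_ext_single
          intro i
          rw [hLi]
          have h1 : M ≠ 0 := by omega
          have h2 : M - 1 ≠ 0 := by omega
          simp [hD, hgx, h1, h2]
        have hLc : ContinuousAt L x := hLk.continuousOn.continuousAt (hU.mem_nhds hx)
        have hG0 : g x ^ M * h x = 0 := by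
          rw [hgx, zero_pow (by omega), zero_mul]
        rw [hL0]
        rw [hasFDerivAt_iff_isLittleO_nhds_zero]
        rw [Asymptotics.isLittleO_iff]
        intro ε hε
        have ev : ∀ᶠ y in 𝓝 x, ‖L y‖ < ε ∧ y ∈ Fᶜ := by
          refine Filter.Eventually.and ?_ (hU.mem_nhds hx)
          refine hLc.norm.eventually_lt_const ?_
          simp only [hL0]; simpa using hε
        obtain ⟨δ, hδ, hball⟩ := Metric.eventually_nhds_iff_ball.1 ev
        filter_upwards [Metric.ball_mem_nhds (0 : Fin n → ℝ) hδ] with y hy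
        have := segment_bound (G := fun x => g x ^ M * h x) (L := L) (x₀ := x) (δ := δ) (ε := ε)
          (hG.mono fun y hy => (hball y hy).2) hG0 (fun z hz hGz => ⟨hne z (hball z hz).2 (by
            intro h0
            apply hGz
            simp only [h0]
            rw [zero_pow (by omega), zero_mul]), (hball z hz).1.le⟩) (x := x + y)
            (by simpa [Metric.mem_ball, dist_eq_norm] using hy) hε.le
        simp only [hG0]
        simpa using this
      · exact hne x hx hgx
    push_cast
    rw [contDiffOn_succ_iff_fderiv_of_isOpen hU]
    refine ⟨fun x hx => (hder x hx).differentiableAt.differentiableWithinAt, by simp, ?_⟩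
    exact hLk.congr fun x hx => (hder x hx).fderiv

end QE

end

section

open Filter Topology

namespace QE

variable {n : ℕ}

theorem sa_of_constructible {m : ℕ} (a b : Fin m → MvPolynomial (Fin n) ℝ) :
    SA (fun x : Fin n → ℝ => x ∈ ⋃ i : Fin m,
      ({x : Fin n → ℝ | MvPolynomial.eval x (a i) = 0} \ {x : Fin n → ℝ | MvPolynomial.eval x (b i) = 0})) := by
  classical
  refine ⟨Finset.univ.image a ∪ Finset.univ.image b, fun x y h => ?_⟩
  have ha : ∀ i, MvPolynomial.eval x (a i) = 0 ↔ MvPolynomial.eval y (a i) = 0 := by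
    intro i
    have := h (a i) (by simp)
    rw [← sign_eq_zero_iff, this, sign_eq_zero_iff]
  have hb : ∀ i, MvPolynomial.eval x (b i) = 0 ↔ MvPolynomial.eval y (b i) = 0 := by
    intro i
    have := h (b i) (by simp)
    rw [← sign_eq_zero_iff, this, sign_eq_zero_iff]
  simp [ha, hb]

theorem part_one_aux (k : ℕ) {F : Set (Fin n → ℝ)} (hFc : IsClosed F) {m : ℕ}
    (a b : Fin m → MvPolynomial (Fin n) ℝ) (hab : ∀ i, b i = 0 → a i = 1)
    (hF : F = ⋃ i : Fin m,
      ({x : Fin n → ℝ | MvPolynomial.eval x (a i) = 0} \ {x : Fin n → ℝ | MvPolynomial.eval x (b i) = 0})) :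
    ∃ f : (Fin n → ℝ) → ℝ, ContDiff ℝ k f ∧ (∃ p q : MvPolynomial (Fin n) ℝ, q ≠ 0 ∧
      ∀ x, MvPolynomial.eval x q * f x = MvPolynomial.eval x p) ∧ {x | f x = 0} = F := by
  classical
  have hSA : SA (fun x => x ∈ F) := by rw [hF]; exact sa_of_constructible a b
  have hmem : ∀ x, x ∈ F ↔ ∃ i, MvPolynomial.eval x (a i) = 0 ∧ MvPolynomial.eval x (b i) ≠ 0 := by
    intro x; rw [hF]; simp
  have hU : IsOpen Fᶜ := hFc.isOpen_compl
  have hane : ∀ i, ∀ x ∈ Fᶜ, MvPolynomial.eval x (b i) ≠ 0 → MvPolynomial.eval x (a i) ≠ 0 := by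
    intro i x hx hb ha
    exact hx ((hmem x).2 ⟨i, ha, hb⟩)
  have hex : ∀ i, ∃ M, 1 ≤ M ∧ ContDiffOn ℝ k
      (fun x => MvPolynomial.eval x (b i) ^ M * (MvPolynomial.eval x (a i))⁻¹) Fᶜ := by
    intro i
    obtain ⟨M₀, h⟩ := claim hFc hSA (g := fun x => MvPolynomial.eval x (b i))
      (contDiff_eval (b i) (k := 0)).continuous.continuousOn
      ⟨b i, 1, one_ne_zero, fun x _ => by simp⟩ k (contDiff_eval _).contDiffOn
      (fun x => (MvPolynomial.eval x (a i))⁻¹)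
      ((contDiff_eval _).contDiffOn.inv fun x hx => hane i x hx.1 hx.2) (by
        by_cases h0 : a i = 0
        · refine ⟨0, 1, one_ne_zero, fun x hx => ?_⟩
          exact absurd (by simp [h0]) (hane i x hx.1 hx.2)
        · refine ⟨1, a i, h0, fun x hx => ?_⟩
          simp [hane i x hx.1 hx.2])
    exact ⟨M₀ + 1, by omega, h _ (by omega)⟩
  choose M hM1 hM using hex
  set u : Fin m → (Fin n → ℝ) → ℝ := fun i x =>
    MvPolynomial.eval x (b i) ^ M i * (MvPolynomial.eval x (a i))⁻¹ with hu
  set φ : Fin m → (Fin n → ℝ) → ℝ := fun i x => (1 + u i x ^ 2)⁻¹ with hφ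
  have hφpos : ∀ i x, 0 < φ i x := fun i x => by simp only [hφ]; positivity
  have hφle : ∀ i x, φ i x ≤ 1 := fun i x => by
    simp only [hφ]; exact inv_le_one_of_one_le₀ (by nlinarith [sq_nonneg (u i x)])
  have hφd : ∀ i, ContDiffOn ℝ k (φ i) Fᶜ := fun i =>
    (contDiffOn_const.add ((hM i).pow 2)).inv fun x _ => by positivity
  set q : Fin m → MvPolynomial (Fin n) ℝ := fun i => a i ^ 2 + b i ^ (2 * M i) with hq
  have hqe : ∀ i x, MvPolynomial.eval x (q i) = MvPolynomial.eval x (a i) ^ 2 +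
      (MvPolynomial.eval x (b i) ^ M i) ^ 2 := by
    intro i x; simp [hq, pow_mul']
  have hq0 : ∀ i, q i ≠ 0 := by
    intro i h0
    by_cases hb : b i = 0
    · have := hqe i 0
      have h1 := hM1 i
      rw [h0, hb, hab i hb] at this
      simp at this
      rw [zero_pow (by omega)] at this
      norm_num at this
    · obtain ⟨x, hx⟩ := (dense_ne_zero hb).nonempty
      have := hqe i x
      rw [h0, map_zero] at this
      have hx : MvPolynomial.eval x (b i) ≠ 0 := hx
      have : 0 < MvPolynomial.eval x (a i) ^ 2 + (MvPolynomial.eval x (b i) ^ M i) ^ 2 := by positivity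
      linarith
  have hqφ : ∀ i, ∀ x ∈ Fᶜ, MvPolynomial.eval x (q i) * φ i x = MvPolynomial.eval x (a i) ^ 2 := by
    intro i x hx
    rw [hqe]
    by_cases ha : MvPolynomial.eval x (a i) = 0
    · have hb : MvPolynomial.eval x (b i) = 0 := by
        by_contra hb; exact hane i x hx hb ha
      have h1 := hM1 i
      rw [ha, hb, zero_pow (by omega : M i ≠ 0)]; simp
    · simp only [hφ, hu]
      field_simp
  set f : (Fin n → ℝ) → ℝ := fun x => if x ∈ F then 0 else ∏ i, φ i x with hf
  have hfF : ∀ x ∈ F, f x = 0 := fun x hx => by simp [hf, hx]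
  have hfU : ∀ x ∈ Fᶜ, f x = ∏ i, φ i x := fun x hx => by
    have : x ∉ F := hx
    simp [hf, this]
  have hfpos : ∀ x ∈ Fᶜ, 0 < f x := fun x hx => by
    rw [hfU x hx]; exact Finset.prod_pos fun i _ => hφpos i x
  have hfnn : ∀ x, 0 ≤ f x := fun x => by
    by_cases hx : x ∈ F
    · rw [hfF x hx]
    · exact (hfpos x hx).le
  have hfd : ContDiffOn ℝ k f Fᶜ :=
    (contDiffOn_prod fun i _ => hφd i).congr fun x hx => hfU x hx
  have hfc : Continuous f := by
    rw [continuous_iff_continuousAt]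
    intro x
    by_cases hx : x ∈ F
    · obtain ⟨i, ha, hb⟩ := (hmem x).1 hx
      have hac : Continuous fun x => MvPolynomial.eval x (a i) := (contDiff_eval (a i) (k := 0)).continuous
      have hbc : Continuous fun x => MvPolynomial.eval x (b i) := (contDiff_eval (b i) (k := 0)).continuous
      have hqc : Continuous fun x => MvPolynomial.eval x (q i) := (contDiff_eval (q i) (k := 0)).continuous
      have hlim : Tendsto (fun x => MvPolynomial.eval x (a i) ^ 2 / MvPolynomial.eval x (q i)) (𝓝 x) (𝓝 0) := by
        have : ContinuousAt (fun x => MvPolynomial.eval x (a i) ^ 2 / MvPolynomial.eval x (q i)) x := by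
          refine (hac.pow 2).continuousAt.div hqc.continuousAt ?_
          rw [hqe]; positivity
        simpa [ContinuousAt, ha] using this
      rw [ContinuousAt, hfF x hx]
      refine tendsto_of_tendsto_of_tendsto_of_le_of_le' tendsto_const_nhds hlim
        (Eventually.of_forall hfnn) ?_
      filter_upwards [hbc.continuousAt.eventually_ne hb] with y hy
      have hqpos : 0 < MvPolynomial.eval y (q i) := by rw [hqe]; positivity
      by_cases hyF : y ∈ F
      · rw [hfF y hyF]; positivity
      · rw [le_div_iff₀ hqpos, ← hqφ i y hyF, mul_comm, hfU y hyF]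
        refine mul_le_mul_of_nonneg_left ?_ hqpos.le
        rw [← Finset.mul_prod_erase _ _ (Finset.mem_univ i)]
        exact mul_le_of_le_one_right (hφpos i y).le
          (Finset.prod_le_one (fun j _ => (hφpos j y).le) fun j _ => hφle j y)
    · exact hfd.continuousOn.continuousAt (hU.mem_nhds hx)
  have hrat : ∀ x, MvPolynomial.eval x (∏ i, q i) * f x = MvPolynomial.eval x (∏ i, a i ^ 2) := by
    intro x
    by_cases hx : x ∈ F
    · obtain ⟨i, ha, hb⟩ := (hmem x).1 hx
      rw [hfF x hx, mul_zero, map_prod]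
      symm
      exact Finset.prod_eq_zero (Finset.mem_univ i) (by simp [ha])
    · rw [hfU x hx, map_prod, map_prod, ← Finset.prod_mul_distrib]
      exact Finset.prod_congr rfl fun i _ => by rw [hqφ i x hx, map_pow]
  have hqq : ∏ i, q i ≠ 0 := Finset.prod_ne_zero_iff.2 fun i _ => hq0 i
  obtain ⟨M₀, hM₀⟩ := claim (F := ∅) isClosed_empty (Det.const _) (g := f) hfc.continuousOn
    ⟨_, _, hqq, fun x _ => hrat x⟩ k (hfd.mono (by
      rintro x ⟨-, hx⟩ hxF
      exact hx (hfF x hxF))) (fun _ => 1) contDiffOn_const ⟨1, 1, one_ne_zero, fun x _ => by simp⟩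
  refine ⟨fun x => f x ^ (M₀ + 1), ?_, ⟨(∏ i, a i ^ 2) ^ (M₀ + 1), (∏ i, q i) ^ (M₀ + 1),
    pow_ne_zero _ hqq, fun x => ?_⟩, ?_⟩
  · have := hM₀ (M₀ + 1) (by omega)
    simpa [contDiffOn_univ] using this
  · rw [map_pow, map_pow, ← mul_pow, hrat]
  · ext x
    simp only [Set.mem_ofPred_eq]
    constructor
    · intro h
      by_contra hx
      exact (pow_ne_zero _ (hfpos x hx).ne') h
    · intro hx
      rw [hfF x hx]; simp

theorem part_one (k : ℕ) {F : Set (Fin n → ℝ)} (hFc : IsClosed F) {m : ℕ}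
    (a b : Fin m → MvPolynomial (Fin n) ℝ)
    (hF : F = ⋃ i : Fin m,
      ({x : Fin n → ℝ | MvPolynomial.eval x (a i) = 0} \ {x : Fin n → ℝ | MvPolynomial.eval x (b i) = 0})) :
    ∃ f : (Fin n → ℝ) → ℝ, ContDiff ℝ k f ∧ (∃ p q : MvPolynomial (Fin n) ℝ, q ≠ 0 ∧
      ∀ x, MvPolynomial.eval x q * f x = MvPolynomial.eval x p) ∧ {x | f x = 0} = F := by
  classical
  refine part_one_aux k hFc (fun i => if b i = 0 then 1 else a i) b (fun i h => by simp [h]) ?_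
  rw [hF]
  refine Set.iUnion_congr fun i => ?_
  by_cases h : b i = 0 <;> simp [h]

end QE

end

section

open Filter Topology Polynomial

namespace QE

section
variable {A : Type*} [CommRing A]

theorem exists_min_lead {I : Ideal A} {K : Ideal A[X]} (hIK : I.map C ≤ K)
    (hne : ∃ f ∈ K, f ∉ I.map C) :
    ∃ m ∈ K, m.leadingCoeff ∉ I ∧ ∀ R ∈ K, R.degree < m.natDegree → R ∈ I.map C := by
  classical
  have hex : ∃ d, ∃ f ∈ K, f ∉ I.map C ∧ f.natDegree = d := by
    obtain ⟨f, hf, hf'⟩ := hne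
    exact ⟨_, f, hf, hf', rfl⟩
  obtain ⟨m, hmK, hmN, hmd⟩ := Nat.find_spec hex
  have hmin : ∀ R ∈ K, R.natDegree < m.natDegree → R ∈ I.map C := by
    intro R hR hd
    by_contra hc
    exact Nat.find_min hex (hmd ▸ hd) ⟨R, hR, hc, rfl⟩
  refine ⟨m, hmK, fun hl => ?_, fun R hR hd => ?_⟩
  · have h1 : monomial m.natDegree m.leadingCoeff ∈ I.map C := by
      rw [Ideal.mem_map_C_iff]
      intro j
      rw [coeff_monomial]
      split_ifs
      · exact hl
      · exact I.zero_mem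
    have h2 : m.eraseLead = m - monomial m.natDegree m.leadingCoeff := by
      rw [← self_sub_monomial_natDegree_leadingCoeff]
    have h3 : m.eraseLead ∉ I.map C := by
      intro h
      apply hmN
      have := (I.map C).add_mem h h1
      rwa [h2, sub_add_cancel] at this
    have h4 : m.eraseLead ∈ K := by
      rw [h2]; exact K.sub_mem hmK (hIK h1)
    rcases eraseLead_natDegree_lt_or_eraseLead_eq_zero m with h | h
    · exact h3 (hmin _ h4 h)
    · exact h3 (h ▸ Ideal.zero_mem _)
  · by_cases h0 : R = 0
    · rw [h0]; exact Ideal.zero_mem _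
    · exact hmin R hR (by rwa [degree_eq_natDegree h0, Nat.cast_lt] at hd)

theorem pseudo_ideal {I : Ideal A} {K : Ideal A[X]} {m : A[X]}
    (hm : m ∈ K) (hmin : ∀ R ∈ K, R.degree < m.natDegree → R ∈ I.map C) {f : A[X]} (hf : f ∈ K) :
    ∃ (e : ℕ) (S R : A[X]), C m.leadingCoeff ^ e * f = m * S + R ∧ R ∈ I.map C ∧
      R.degree < m.natDegree := by
  obtain ⟨e, S, R, h, hd⟩ := pseudo m m.natDegree
    (degree_le_natDegree.trans_lt (by exact_mod_cast Nat.lt_succ_self _)) (f.natDegree + 1) f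
    (degree_le_natDegree.trans_lt (by exact_mod_cast Nat.lt_succ_self _))
  refine ⟨e, S, R, h, hmin R ?_ hd, hd⟩
  have : R = C m.leadingCoeff ^ e * f - m * S := by
    rw [leadingCoeff, h]; ring
  rw [this]
  exact K.sub_mem (K.mul_mem_left _ hf) (K.mul_mem_right _ hm)

theorem exists_elim [IsDomain A] {J : Ideal A[X]} (hJ : J.IsPrime) {m : A[X]}
    (hm : m ∈ J) (hlc : m.leadingCoeff ∉ J.comap C)
    (hmin : ∀ R ∈ J, R.degree < m.natDegree → R ∈ (J.comap C).map C) {c : A[X]} (hc : c ∉ J) :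
    ∃ r ∉ J.comap C, ∃ u, ∃ w ∈ J, C r = c * u + w := by
  have hNJ : (J.comap C).map C ≤ J := Ideal.map_comap_le
  have hIp : (J.comap (C : A →+* A[X])).IsPrime := Ideal.IsPrime.comap C
  have hlcp : ∀ (l : A) (e : ℕ), l ∉ J.comap C → C l ^ e ∉ J := by
    intro l e hl h
    exact hl (hJ.mem_of_pow_mem _ h)
  have hmN : m ∉ (J.comap C).map C := by
    intro h
    exact hlc (Ideal.mem_map_C_iff.1 h _)
  obtain ⟨k, hk, hkl, hkmin⟩ := exists_min_lead (I := J.comap C) (K := J ⊔ Ideal.span {c})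
    (hNJ.trans le_sup_left) ⟨m, Ideal.mem_sup_left hm, hmN⟩
  by_cases hk0 : k.natDegree = 0
  · refine ⟨k.leadingCoeff, hkl, ?_⟩
    have hkC : k = C k.leadingCoeff := by
      rw [leadingCoeff, hk0]; exact eq_C_of_natDegree_eq_zero hk0
    obtain ⟨w, hw, v, hv, hwv⟩ := Submodule.mem_sup.1 hk
    obtain ⟨u, rfl⟩ := Ideal.mem_span_singleton'.1 hv
    refine ⟨u, w, hw, ?_⟩
    rw [← hkC, ← hwv]; ring
  exfalso
  obtain ⟨e, S, R, h1, hR, hRd⟩ := pseudo_ideal hk hkmin (Ideal.mem_sup_left hm)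
  obtain ⟨e', S', R', h1', hR', -⟩ := pseudo_ideal hk hkmin (f := c)
    (Ideal.mem_sup_right (Ideal.mem_span_singleton_self c))
  have hkS : k * S ∈ J := by
    have : k * S = C k.leadingCoeff ^ e * m - R := by rw [h1]; ring
    rw [this]
    exact J.sub_mem (J.mul_mem_left _ hm) (hNJ hR)
  rcases hJ.mem_or_mem hkS with hkJ | hSJ
  · have : C k.leadingCoeff ^ e' * c ∈ J := by
      rw [h1']; exact J.add_mem (J.mul_mem_right _ hkJ) (hNJ hR')
    rcases hJ.mem_or_mem this with h | h
    · exact hlcp _ _ hkl h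
    · exact hc h
  · have hSN : S ∈ (J.comap C).map C := by
      by_cases hS0 : S = 0
      · rw [hS0]; exact Ideal.zero_mem _
      apply hmin S hSJ
      rw [degree_eq_natDegree hS0, Nat.cast_lt]
      have hkne : k ≠ 0 := by rintro rfl; simp at hk0
      have h2 : (k * S).natDegree = k.natDegree + S.natDegree := natDegree_mul hkne hS0
      have h3 : k * S = C (k.leadingCoeff ^ e) * m - R := by rw [C_pow, h1]; ring
      have h4 : (C (k.leadingCoeff ^ e) * m).natDegree ≤ m.natDegree := natDegree_C_mul_le _ _
      have h5 := natDegree_sub_le (C (k.leadingCoeff ^ e) * m) R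
      have h6 : R.natDegree < k.natDegree := by
        by_cases hR0 : R = 0
        · rw [hR0, natDegree_zero]; omega
        · rwa [degree_eq_natDegree hR0, Nat.cast_lt] at hRd
      rw [← h3, h2] at h5
      rcases le_max_iff.1 h5 with h | h <;> omega
    have : C (k.leadingCoeff ^ e) * m ∈ (J.comap C).map C := by
      rw [C_pow, h1]; exact Ideal.add_mem _ (Ideal.mul_mem_left _ _ hSN) hR
    have h7 := Ideal.mem_map_C_iff.1 this m.natDegree
    rw [coeff_C_mul] at h7
    rcases hIp.mem_or_mem h7 with h | h
    · exact hkl (hIp.mem_of_pow_mem _ h)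
    · exact hlc h

end

theorem exists_sign_change {P : ℝ[X]} {y : ℝ} (h0 : P.eval y = 0) (h1 : P.derivative.eval y ≠ 0)
    {ε : ℝ} (hε : 0 < ε) :
    ∃ y₁ ∈ Metric.ball y ε, ∃ y₂ ∈ Metric.ball y ε, P.eval y₁ < 0 ∧ 0 < P.eval y₂ := by
  have h2 : ∃ y₁ ∈ Metric.ball y ε, P.eval y₁ < 0 := by
    by_contra hc
    push Not at hc
    apply h1
    refine IsLocalMin.hasDerivAt_eq_zero (f := fun t => P.eval t) (a := y) ?_ (P.hasDerivAt y)
    filter_upwards [Metric.ball_mem_nhds y hε] with t ht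
    rw [h0]; exact hc t ht
  have h3 : ∃ y₁ ∈ Metric.ball y ε, 0 < P.eval y₁ := by
    by_contra hc
    push Not at hc
    apply h1
    refine IsLocalMax.hasDerivAt_eq_zero (f := fun t => P.eval t) (a := y) ?_ (P.hasDerivAt y)
    filter_upwards [Metric.ball_mem_nhds y hε] with t ht
    rw [h0]; exact hc t ht
  obtain ⟨y₁, hy₁, h⟩ := h2
  obtain ⟨y₂, hy₂, h'⟩ := h3
  exact ⟨y₁, hy₁, y₂, hy₂, h, h'⟩

variable {n : ℕ}

/-- density property of the zero set of an ideal away from a hypersurface -/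
def Good (I : Ideal (MvPolynomial (Fin n) ℝ)) : Prop :=
  ∃ b ∉ I, ∀ z, (∀ f ∈ I, MvPolynomial.eval z f = 0) → MvPolynomial.eval z b ≠ 0 →
    ∀ c ∉ I, ∀ ε > 0, ∃ z', (∀ f ∈ I, MvPolynomial.eval z' f = 0) ∧ dist z' z < ε ∧
      MvPolynomial.eval z' c ≠ 0

theorem good_step (J : Ideal (MvPolynomial (Fin n) ℝ)[X]) (hJ : J.IsPrime)
    (hI : Good (J.comap C)) :
    ∃ b ∉ J, ∀ (s : Fin n → ℝ) (y : ℝ), (∀ f ∈ J, (f.map (MvPolynomial.eval s)).eval y = 0) →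
      (b.map (MvPolynomial.eval s)).eval y ≠ 0 → ∀ c ∉ J, ∀ ε > 0, ∃ (s' : Fin n → ℝ) (y' : ℝ),
        (∀ f ∈ J, (f.map (MvPolynomial.eval s')).eval y' = 0) ∧ dist s' s < ε ∧ dist y' y < ε ∧
        (c.map (MvPolynomial.eval s')).eval y' ≠ 0 := by
  classical
  obtain ⟨bn, hbn, hbn'⟩ := hI
  have hNJ : (J.comap C).map C ≤ J := Ideal.map_comap_le
  have hIp : (J.comap (C : _ →+* (MvPolynomial (Fin n) ℝ)[X])).IsPrime := Ideal.IsPrime.comap C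
  have hres : ∀ s y, (∀ f ∈ J, (f.map (MvPolynomial.eval s)).eval y = 0) →
      ∀ f ∈ J.comap C, MvPolynomial.eval s f = 0 := by
    intro s y h f hf
    have := h (C f) hf
    simpa using this
  have hN0 : ∀ s, (∀ f ∈ J.comap C, MvPolynomial.eval s f = 0) → ∀ f ∈ (J.comap C).map C,
      f.map (MvPolynomial.eval s) = 0 := by
    intro s h f hf
    ext j
    rw [coeff_map, coeff_zero]
    exact h _ (Ideal.mem_map_C_iff.1 hf j)
  by_cases hcase : ∀ f ∈ J, f ∈ (J.comap C).map C
  · refine ⟨C bn, hbn, fun s y hz hb c hc ε hε => ?_⟩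
    have hcN : ∃ j, c.coeff j ∉ J.comap C := by
      by_contra h
      push Not at h
      exact hc (hNJ (Ideal.mem_map_C_iff.2 h))
    obtain ⟨j, hj⟩ := hcN
    obtain ⟨s', hs', hd, hne⟩ := hbn' s (hres s y hz) (by simpa using hb) _ hj ε hε
    have hc0 : c.map (MvPolynomial.eval s') ≠ 0 := by
      intro h
      apply hne
      rw [← coeff_map, h, coeff_zero]
    have hinf := infinite_of_mem_nhds y (Metric.ball_mem_nhds y hε)
    obtain ⟨y', hy', hroot⟩ := (hinf.sdiff (c.map (MvPolynomial.eval s')).roots.toFinset.finite_toSet).nonempty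
    refine ⟨s', y', fun f hf => ?_, hd, hy', fun h => hroot ?_⟩
    · rw [hN0 s' hs' f (hcase f hf), eval_zero]
    · simp [hc0, h]
  · push Not at hcase
    obtain ⟨m, hm, hlc, hmin⟩ := exists_min_lead hNJ hcase
    have hd0 : m.natDegree ≠ 0 := by
      intro h0
      apply hlc
      have : m = C m.leadingCoeff := by
        rw [leadingCoeff, h0]; exact eq_C_of_natDegree_eq_zero h0
      rw [Ideal.mem_comap, ← this]; exact hm
    have hm' : derivative m ∉ J := by
      intro h
      have h1 := hmin _ h (by
        have hm0 : m ≠ 0 := by rintro rfl; simp at hd0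
        rw [← degree_eq_natDegree hm0]
        exact degree_derivative_lt hm0)
      have h2 := Ideal.mem_map_C_iff.1 h1 (m.natDegree - 1)
      rw [coeff_derivative, Nat.sub_add_cancel (by omega)] at h2
      rcases hIp.mem_or_mem h2 with h3 | h3
      · exact hlc h3
      · apply hIp.ne_top
        refine Ideal.eq_top_of_isUnit_mem _ h3 ?_
        have h4 : (((m.natDegree - 1 : ℕ) : MvPolynomial (Fin n) ℝ) + 1) =
            MvPolynomial.C (((m.natDegree - 1 : ℕ) : ℝ) + 1) := by simp
        rw [h4]
        refine IsUnit.map _ (IsUnit.mk0 _ (by positivity))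
    refine ⟨C bn * C m.leadingCoeff * derivative m, ?_, fun s y hz hb c hc ε hε => ?_⟩
    · intro h
      rcases hJ.mem_or_mem h with h | h
      · rcases hJ.mem_or_mem h with h | h
        · exact hbn h
        · exact hlc h
      · exact hm' h
    simp only [Polynomial.map_mul, eval_mul, map_C, eval_C, mul_ne_zero_iff] at hb
    obtain ⟨⟨hb1, hb2⟩, hb3⟩ := hb
    obtain ⟨r, hr, u, w, hw, hru⟩ := exists_elim hJ hm hlc hmin hc
    obtain ⟨y₁, hy₁, y₂, hy₂, hs1, hs2⟩ := exists_sign_change (P := m.map (MvPolynomial.eval s))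
      (hz m hm) (by rwa [derivative_map]) hε
    have hcont : ∀ t : ℝ, Continuous fun s : Fin n → ℝ => (m.map (MvPolynomial.eval s)).eval t := by
      intro t
      have : (fun s : Fin n → ℝ => (m.map (MvPolynomial.eval s)).eval t) =
          fun s => MvPolynomial.eval s (m.eval (MvPolynomial.C t)) := by
        funext s
        rw [eval_map, ← eval₂_at_apply, MvPolynomial.eval_C]
      rw [this]
      exact (contDiff_eval _ (k := 0)).continuous
    have ev : ∀ᶠ s' in 𝓝 s, (m.map (MvPolynomial.eval s')).eval y₁ < 0 ∧
        0 < (m.map (MvPolynomial.eval s')).eval y₂ :=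
      ((hcont y₁).continuousAt.eventually_lt_const hs1).and
        ((hcont y₂).continuousAt.eventually_const_lt hs2)
    obtain ⟨δ, hδ, hball⟩ := Metric.eventually_nhds_iff_ball.1 ev
    obtain ⟨s', hs', hd, hne⟩ := hbn' s (hres s y hz) hb1 (r * m.leadingCoeff) (by
      intro h
      rcases hIp.mem_or_mem h with h | h
      · exact hr h
      · exact hlc h) (min ε δ) (lt_min hε hδ)
    rw [map_mul, mul_ne_zero_iff] at hne
    obtain ⟨hp1, hp2⟩ := hball s' (hd.trans_le (min_le_right _ _))
    obtain ⟨y', hy', hroot⟩ := intermediate_value_uIcc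
      (f := fun t => (m.map (MvPolynomial.eval s')).eval t) (a := y₁) (b := y₂)
      (by fun_prop) (show (0:ℝ) ∈ _ from Set.mem_uIcc.2 (Or.inl ⟨hp1.le, hp2.le⟩))
    have hroot : (m.map (MvPolynomial.eval s')).eval y' = 0 := hroot
    have hy'' : y' ∈ Metric.ball y ε := (convex_ball y ε).ordConnected.uIcc_subset hy₁ hy₂ hy'
    have hzero : ∀ f ∈ J, (f.map (MvPolynomial.eval s')).eval y' = 0 := by
      intro f hf
      obtain ⟨e, S, R, h1, hR, -⟩ := pseudo_ideal hm hmin hf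
      have h2 := congrArg (fun P => (P.map (MvPolynomial.eval s')).eval y') h1
      simp only [Polynomial.map_mul, Polynomial.map_add, Polynomial.map_pow, map_C, eval_mul, eval_add, eval_pow, eval_C, hroot, hN0 s' hs' R hR,
        zero_mul, add_zero] at h2
      exact (mul_eq_zero.1 h2).resolve_left (pow_ne_zero _ hne.2)
    refine ⟨s', y', hzero, hd.trans_le (min_le_left _ _), hy'', fun h0 => hne.1 ?_⟩
    have h2 := congrArg (fun P => (P.map (MvPolynomial.eval s')).eval y') hru
    simpa [h0, hzero w hw] using h2

theorem good_of_prime : ∀ (n : ℕ) (I : Ideal (MvPolynomial (Fin n) ℝ)), I.IsPrime → Good I := by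
  intro n
  induction n with
  | zero =>
    intro I hI
    refine ⟨1, fun h => hI.ne_top ((Ideal.eq_top_iff_one _).2 h), fun z hz _ c hc ε hε =>
      ⟨z, hz, by simpa using hε, fun h => hc ?_⟩⟩
    rw [MvPolynomial.eq_C_of_isEmpty c] at h ⊢
    rw [MvPolynomial.eval_C] at h
    rw [h]; simp
  | succ n ih =>
    intro I hI
    set e := MvPolynomial.finSuccEquiv ℝ n with he
    set J : Ideal (MvPolynomial (Fin n) ℝ)[X] := I.comap (e.symm : _ →+* MvPolynomial (Fin (n+1)) ℝ) with hJ
    have hJp : J.IsPrime := Ideal.IsPrime.comap _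
    have hmem : ∀ f, e f ∈ J ↔ f ∈ I := by
      intro f; simp [hJ, Ideal.mem_comap]
    have hev : ∀ (z : Fin (n+1) → ℝ) f, MvPolynomial.eval z f =
        ((e f).map (MvPolynomial.eval (Fin.tail z))).eval (z 0) := by
      intro z f
      rw [← MvPolynomial.eval_eq_eval_mv_eval', Fin.cons_self_tail]
    have hev' : ∀ s y f, MvPolynomial.eval (Fin.cons y s : Fin (n+1) → ℝ) f =
        ((e f).map (MvPolynomial.eval s)).eval y := by
      intro s y f
      rw [← MvPolynomial.eval_eq_eval_mv_eval']
    obtain ⟨b, hb, h⟩ := good_step J hJp (ih _ (Ideal.IsPrime.comap _))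
    refine ⟨e.symm b, by rwa [← hmem, AlgEquiv.apply_symm_apply], fun z hz hbz c hc ε hε => ?_⟩
    obtain ⟨s', y', h1, h2, h3, h4⟩ := h (Fin.tail z) (z 0) (fun f hf => by
      obtain ⟨f, rfl⟩ := e.surjective f
      rw [← hev]; exact hz f ((hmem f).1 hf)) (by
      rwa [hev, AlgEquiv.apply_symm_apply] at hbz) (e c) (by rwa [hmem]) ε hε
    refine ⟨Fin.cons y' s', fun f hf => ?_, ?_, ?_⟩
    · rw [hev']; exact h1 _ ((hmem f).2 hf)
    · rw [dist_pi_lt_iff hε] at h2 ⊢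
      intro i
      refine Fin.cases ?_ (fun j => ?_) i
      · simpa using h3
      · simpa [Fin.tail] using h2 j
    · rwa [hev']

end QE

end

open MvPolynomial


open Filter Topology

namespace QE

variable {n : ℕ}

theorem line_coeff : ∀ (j : ℕ) (Q P : Polynomial ℝ) (φ : ℝ → ℝ), Continuous φ →
    (∀ s, Q.eval s * φ s = P.eval s) → (∀ i < j, Q.coeff i = 0) →
    P.coeff j = Q.coeff j * φ 0 := by
  intro j
  induction j with
  | zero =>
    intro Q P φ _ h _
    have := h 0
    rw [Polynomial.coeff_zero_eq_eval_zero, Polynomial.coeff_zero_eq_eval_zero, this]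
  | succ j ih =>
    intro Q P φ hφ h hQ
    have hQ0 : Q.coeff 0 = 0 := hQ 0 (by omega)
    have hP0 : P.coeff 0 = 0 := by
      have := h 0
      rw [← Polynomial.coeff_zero_eq_eval_zero, ← Polynomial.coeff_zero_eq_eval_zero, hQ0, zero_mul] at this
      exact this.symm
    have hQ1 : Q = Q.divX * Polynomial.X := by
      conv_lhs => rw [← Polynomial.divX_mul_X_add Q, hQ0]
      simp
    have hP1 : P = P.divX * Polynomial.X := by
      conv_lhs => rw [← Polynomial.divX_mul_X_add P, hP0]
      simp
    have key : (fun s => Q.divX.eval s * φ s) = fun s => P.divX.eval s := by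
      refine Continuous.ext_on (dense_compl_singleton (0 : ℝ)) (by fun_prop) (by fun_prop) ?_
      intro s hs
      have h1 := h s
      rw [hQ1, hP1, Polynomial.eval_mul, Polynomial.eval_mul, Polynomial.eval_X] at h1
      have hs : s ≠ 0 := hs
      apply mul_right_cancel₀ hs
      simp only
      linarith
    have := ih Q.divX P.divX φ hφ (fun s => congrFun key s) (fun i hi => by
      rw [Polynomial.coeff_divX]; exact hQ _ (by omega))
    rwa [Polynomial.coeff_divX, Polynomial.coeff_divX] at this

/-- expansion of a polynomial along lines of direction `v` -/
noncomputable def lineExp (v : Fin n → ℝ) (q : MvPolynomial (Fin n) ℝ) :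
    Polynomial (MvPolynomial (Fin n) ℝ) :=
  MvPolynomial.aeval (fun i => Polynomial.C (MvPolynomial.X i) +
    Polynomial.C (MvPolynomial.C (v i)) * Polynomial.X) q

theorem lineExp_eval (v : Fin n → ℝ) (q : MvPolynomial (Fin n) ℝ) (z : Fin n → ℝ) (s : ℝ) :
    ((lineExp v q).map (MvPolynomial.eval z)).eval s = MvPolynomial.eval (z + s • v) q := by
  unfold lineExp
  induction q using MvPolynomial.induction_on with
  | C a =>
    rw [MvPolynomial.aeval_C, MvPolynomial.eval_C]
    rw [IsScalarTower.algebraMap_apply ℝ (MvPolynomial (Fin n) ℝ) (Polynomial (MvPolynomial (Fin n) ℝ))]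
    simp [MvPolynomial.algebraMap_eq]
  | add p q hp hq => simp only [map_add, Polynomial.map_add, Polynomial.eval_add, hp, hq]
  | mul_X p i hp =>
    simp only [map_mul, Polynomial.map_mul, Polynomial.eval_mul, hp]
    congr 1
    simp
    ring

theorem con_empty : ZariskiConstructible n ∅ := ⟨0, Fin.elim0, Fin.elim0, by simp⟩

theorem con_diff (a b : MvPolynomial (Fin n) ℝ) :
    ZariskiConstructible n ({x | MvPolynomial.eval x a = 0} \ {x | MvPolynomial.eval x b = 0}) :=
  ⟨1, fun _ => a, fun _ => b, by ext x; simp⟩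

theorem con_union {S T : Set (Fin n → ℝ)} (hS : ZariskiConstructible n S)
    (hT : ZariskiConstructible n T) : ZariskiConstructible n (S ∪ T) := by
  obtain ⟨m, a, b, rfl⟩ := hS
  obtain ⟨m', a', b', rfl⟩ := hT
  refine ⟨m + m', Fin.append a a', Fin.append b b', ?_⟩
  ext x
  simp only [Set.mem_union, Set.mem_iUnion]
  constructor
  · rintro (⟨i, hi⟩ | ⟨i, hi⟩)
    · exact ⟨Fin.castAdd m' i, by simpa using hi⟩
    · exact ⟨Fin.natAdd m i, by simpa using hi⟩
  · rintro ⟨i, hi⟩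
    induction i using Fin.addCases with
    | left i => exact Or.inl ⟨i, by simpa using hi⟩
    | right i => exact Or.inr ⟨i, by simpa using hi⟩

/-- zero set of an ideal -/
def ZI (I : Ideal (MvPolynomial (Fin n) ℝ)) : Set (Fin n → ℝ) :=
  {z | ∀ f ∈ I, MvPolynomial.eval z f = 0}

theorem mem_ZI_sup {I : Ideal (MvPolynomial (Fin n) ℝ)} {a : MvPolynomial (Fin n) ℝ} {z : Fin n → ℝ} :
    z ∈ ZI (I ⊔ Ideal.span {a}) ↔ z ∈ ZI I ∧ MvPolynomial.eval z a = 0 := by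
  constructor
  · intro h
    exact ⟨fun f hf => h f (Ideal.mem_sup_left hf),
      h a (Ideal.mem_sup_right (Ideal.mem_span_singleton_self a))⟩
  · rintro ⟨h, ha⟩ f hf
    obtain ⟨w, hw, v, hv, rfl⟩ := Submodule.mem_sup.1 hf
    obtain ⟨u, rfl⟩ := Ideal.mem_span_singleton'.1 hv
    simp [h w hw, ha]

theorem ZI_eq (I : Ideal (MvPolynomial (Fin n) ℝ)) :
    ∃ a : MvPolynomial (Fin n) ℝ, ZI I = {x | MvPolynomial.eval x a = 0} := by
  obtain ⟨s, hs⟩ := (isNoetherianRing_iff_ideal_fg _).1 inferInstance I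
  refine ⟨∑ f ∈ s, f ^ 2, ?_⟩
  ext z
  have h1 : MvPolynomial.eval z (∑ f ∈ s, f ^ 2) = 0 ↔ ∀ f ∈ s, MvPolynomial.eval z f = 0 := by
    rw [map_sum, Finset.sum_eq_zero_iff_of_nonneg (fun f _ => by rw [map_pow]; positivity)]
    simp
  have h2 : z ∈ {x | MvPolynomial.eval x (∑ f ∈ s, f ^ 2) = 0} ↔ ∀ f ∈ s, MvPolynomial.eval z f = 0 := h1
  rw [h2]
  constructor
  · intro h f hf
    exact h f (hs ▸ Ideal.subset_span hf)
  · intro h f hf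
    have : I ≤ RingHom.ker (MvPolynomial.eval z) := by
      rw [← hs]
      exact Ideal.span_le.2 fun f hf => h f hf
    exact this hf

theorem lt_sup {I : Ideal (MvPolynomial (Fin n) ℝ)} {a : MvPolynomial (Fin n) ℝ} (ha : a ∉ I) :
    I < I ⊔ Ideal.span {a} :=
  lt_of_le_of_ne le_sup_left fun h =>
    ha (h ▸ Ideal.mem_sup_right (Ideal.mem_span_singleton_self a))

theorem con_inter (E : Set ((Fin n → ℝ) → ℝ)) (hE : ∀ g ∈ E, Continuous g ∧
      ∃ p q : MvPolynomial (Fin n) ℝ, q ≠ 0 ∧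
        ∀ x, MvPolynomial.eval x q * g x = MvPolynomial.eval x p)
    (I : Ideal (MvPolynomial (Fin n) ℝ)) :
    ZariskiConstructible n ({x | ∀ g ∈ E, g x = 0} ∩ ZI I) := by
  classical
  induction I using (wellFounded_gt (α := Ideal (MvPolynomial (Fin n) ℝ))).induction with
  | _ I ih =>
  by_cases hI : I.IsPrime
  · obtain ⟨b, hb, hgood⟩ := good_of_prime n I hI
    by_cases hA : ∀ g ∈ E, ∀ z ∈ ZI I, MvPolynomial.eval z b ≠ 0 → g z = 0
    · obtain ⟨a, ha⟩ := ZI_eq I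
      have h1 := con_union (con_diff a b) (ih _ (lt_sup hb))
      convert h1 using 1
      rw [← ha]
      ext z
      constructor
      · rintro ⟨hz1, hz2⟩
        by_cases hbz : MvPolynomial.eval z b = 0
        · exact Or.inr ⟨hz1, mem_ZI_sup.2 ⟨hz2, hbz⟩⟩
        · exact Or.inl ⟨hz2, hbz⟩
      · rintro (⟨hz2, hbz⟩ | ⟨hz1, hz2⟩)
        · exact ⟨fun g hg => hA g hg z hz2 hbz, hz2⟩
        · exact ⟨hz1, (mem_ZI_sup.1 hz2).1⟩
    · push Not at hA
      obtain ⟨g, hg, z, hz, hbz, hgz⟩ := hA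
      obtain ⟨hgc, p, q, hq, hpq⟩ := hE g hg
      obtain ⟨x, hx⟩ := (dense_ne_zero hq).nonempty
      have hx : MvPolynomial.eval x q ≠ 0 := hx
      set v := x - z with hv
      set Q := lineExp v q with hQ
      set P := lineExp v p with hP
      have hex : ∃ j, Q.coeff j ∉ I := by
        by_contra hc
        push Not at hc
        apply hx
        have h1 : Q.map (MvPolynomial.eval z) = 0 := by
          ext j
          rw [Polynomial.coeff_map, Polynomial.coeff_zero]
          exact hz _ (hc j)
        have h2 := lineExp_eval v q z 1
        rw [← hQ, h1, hv] at h2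
        simpa using h2.symm
      set j := Nat.find hex with hj
      have hjn : Q.coeff j ∉ I := Nat.find_spec hex
      have hjl : ∀ i < j, Q.coeff i ∈ I := fun i hi => by
        by_contra h; exact Nat.find_min hex hi h
      have hline : ∀ w ∈ ZI I, MvPolynomial.eval w (P.coeff j) = MvPolynomial.eval w (Q.coeff j) * g w := by
        intro w hw
        have := line_coeff j (Q.map (MvPolynomial.eval w)) (P.map (MvPolynomial.eval w))
          (fun s => g (w + s • v)) (by fun_prop) (fun s => by
            rw [hQ, hP, lineExp_eval, lineExp_eval]; exact hpq _) (fun i hi => by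
            rw [Polynomial.coeff_map]; exact hw _ (hjl i hi))
        simpa [Polynomial.coeff_map] using this
      have hPj : P.coeff j ∉ I := by
        intro hPj
        obtain ⟨ε, hε, hball⟩ := Metric.eventually_nhds_iff_ball.1 (hgc.continuousAt.eventually_ne hgz)
        obtain ⟨z', hz', hd, hne⟩ := hgood z hz hbz _ hjn ε hε
        have h1 := hline z' hz'
        rw [hz' _ hPj] at h1
        exact (mul_ne_zero hne (hball z' hd)) h1.symm
      have h1 := ih _ (lt_sup hPj)
      convert h1 using 1
      ext w
      constructor
      · rintro ⟨hw1, hw2⟩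
        refine ⟨hw1, mem_ZI_sup.2 ⟨hw2, ?_⟩⟩
        rw [hline w hw2, hw1 g hg, mul_zero]
      · rintro ⟨hw1, hw2⟩
        exact ⟨hw1, (mem_ZI_sup.1 hw2).1⟩
  · rcases Ideal.not_isPrime_iff.1 hI with rfl | ⟨a, ha, b, hb, hab⟩
    · convert con_empty (n := n) using 1
      ext z
      simp only [Set.mem_inter_iff, Set.mem_empty_iff_false, iff_false]
      rintro ⟨-, hz⟩
      have := hz 1 (by simp)
      simp at this
    · have h1 := con_union (ih _ (lt_sup ha)) (ih _ (lt_sup hb))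
      convert h1 using 1
      ext z
      constructor
      · rintro ⟨hz1, hz2⟩
        have := hz2 _ hab
        rw [map_mul] at this
        rcases mul_eq_zero.1 this with h | h
        · exact Or.inl ⟨hz1, mem_ZI_sup.2 ⟨hz2, h⟩⟩
        · exact Or.inr ⟨hz1, mem_ZI_sup.2 ⟨hz2, h⟩⟩
      · rintro (⟨hz1, hz2⟩ | ⟨hz1, hz2⟩)
        · exact ⟨hz1, (mem_ZI_sup.1 hz2).1⟩
        · exact ⟨hz1, (mem_ZI_sup.1 hz2).1⟩

end QE


/-- **Regulous functions, Théorème `const`**: every Euclidean-closed Zariski constructible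
subset of `ℝⁿ` is the zero set of a `k`-regulous function; consequently the `k`-regulously
closed subsets of `ℝⁿ` are exactly the Euclidean-closed Zariski constructible ones. -/
theorem regulously_closed_iff_closed_constructible (n k : ℕ) :
    (∀ F : Set (Fin n → ℝ), IsClosed F → ZariskiConstructible n F →
      ∃ f : (Fin n → ℝ) → ℝ, IsRegulous n k f ∧ {x : Fin n → ℝ | f x = 0} = F) ∧
    (∀ F : Set (Fin n → ℝ),
      RegulouslyClosed n k F ↔ (IsClosed F ∧ ZariskiConstructible n F)) := by
  have part1 : ∀ F : Set (Fin n → ℝ), IsClosed F → ZariskiConstructible n F →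
      ∃ f : (Fin n → ℝ) → ℝ, IsRegulous n k f ∧ {x : Fin n → ℝ | f x = 0} = F := by
    rintro F hF ⟨m, a, b, hab⟩
    obtain ⟨f, h1, h2, h3⟩ := QE.part_one k hF a b hab
    exact ⟨f, ⟨h1, h2⟩, h3⟩
  refine ⟨part1, fun F => ⟨?_, ?_⟩⟩
  · rintro ⟨E, hE, rfl⟩
    have hc : ∀ g ∈ E, Continuous g := fun g hg => (hE g hg).1.continuous
    refine ⟨isClosed_biInter fun g hg => isClosed_eq (hc g hg) continuous_const, ?_⟩
    have h := QE.con_inter E (fun g hg => ⟨hc g hg, (hE g hg).2⟩) ⊥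
    convert h using 1
    ext x
    simp [QE.ZI]
  · rintro ⟨hF, hcon⟩
    obtain ⟨f, hf, hfF⟩ := part1 F hF hcon
    refine ⟨{f}, ?_, ?_⟩
    · rintro g rfl
      exact hf
    · simp [hfF]
end

section
/- Let n, k be natural numbers and let E be an arbitrary set of k-regulous functions on ℝⁿ. Then there exists a single k-regulous function f : ℝⁿ → ℝ such that ⋂_{g ∈ E} Z(g) = Z(f). -/
open MvPolynomial

/-! ### Algebra: ideals of `D[X]`, `D` a domain -/

theorem rg_pseudo {D : Type*} [CommRing D] [IsDomain D] (J : Ideal (Polynomial D))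
    (P : Polynomial D) (hP : P ∈ J) (hP0 : P ≠ 0)
    (hmin : ∀ R ∈ J, R ≠ 0 → P.natDegree ≤ R.natDegree) :
    ∀ (d : ℕ) (F : Polynomial D), F.degree < d → F ∈ J →
      ∃ (N : ℕ) (Q : Polynomial D), Polynomial.C (P.leadingCoeff ^ N) * F = Q * P := by
  intro d
  induction d with
  | zero =>
    intro F hd _
    have : F = 0 := by
      rw [← Polynomial.degree_eq_bot]
      rcases hdeg : F.degree with _ | m
      · rfl
      · rw [hdeg] at hd
        exact absurd hd (by
          change ¬ (((m : ℕ) : WithBot ℕ) < ((0 : ℕ) : WithBot ℕ))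
          rw [Nat.cast_lt]; omega)
    exact ⟨0, 0, by simp [this]⟩
  | succ d ih =>
    intro F hd hF
    by_cases hF0 : F = 0
    · exact ⟨0, 0, by simp [hF0]⟩
    have hle := hmin F hF hF0
    have hlP : P.leadingCoeff ≠ 0 := by simpa using hP0
    have hlF : F.leadingCoeff ≠ 0 := by simpa using hF0
    set k := F.natDegree - P.natDegree with hk
    set G : Polynomial D := Polynomial.C P.leadingCoeff * F with hG
    set H : Polynomial D := Polynomial.C F.leadingCoeff * Polynomial.X ^ k * P with hH
    have hG0 : G ≠ 0 := mul_ne_zero (by simpa using hP0) hF0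
    have hGd : G.degree = F.degree := by
      rw [hG, Polynomial.degree_C_mul hlP]
    have hHd : H.degree = F.degree := by
      rw [hH, mul_assoc, Polynomial.degree_C_mul hlF, Polynomial.degree_mul,
        Polynomial.degree_X_pow, Polynomial.degree_eq_natDegree hP0,
        Polynomial.degree_eq_natDegree hF0, ← Nat.cast_add]
      congr 1
      omega
    have hlt : (G - H).degree < F.degree := by
      rw [← hGd]
      apply Polynomial.degree_sub_lt_left (hGd.trans hHd.symm) hG0
      rw [hG, hH]
      simp only [Polynomial.leadingCoeff_mul, Polynomial.leadingCoeff_C,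
        Polynomial.leadingCoeff_X_pow, mul_one]
      ring
    have hd' : (G - H).degree < d := by
      rw [Polynomial.degree_eq_natDegree hF0] at hlt hd
      refine lt_of_lt_of_le hlt ?_
      rw [Nat.cast_lt] at hd
      rw [Nat.cast_le]; omega
    obtain ⟨N, Q, hQ⟩ := ih (G - H) hd' (J.sub_mem (J.mul_mem_left _ hF) (J.mul_mem_left _ hP))
    refine ⟨N + 1, Q + Polynomial.C (P.leadingCoeff ^ N) *
      (Polynomial.C F.leadingCoeff * Polynomial.X ^ k), ?_⟩
    rw [add_mul, ← hQ, hG, hH, pow_succ, Polynomial.C_mul]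
    ring

theorem rg_min {D : Type*} [CommRing D] [IsDomain D] (J : Ideal (Polynomial D)) (hJ : J ≠ ⊥) :
    ∃ P ∈ J, P ≠ 0 ∧ (∀ R ∈ J, R ≠ 0 → P.natDegree ≤ R.natDegree) ∧
      ∀ F ∈ J, ∃ (N : ℕ) (Q : Polynomial D),
        Polynomial.C (P.leadingCoeff ^ N) * F = Q * P := by
  obtain ⟨F, hF, hF0⟩ := Submodule.exists_mem_ne_zero_of_ne_bot hJ
  let S : Set (Polynomial D) := {R | R ∈ J ∧ R ≠ 0}
  obtain ⟨P, hP, hm⟩ := exists_minimalFor_of_wellFoundedLT (fun R => R ∈ J ∧ R ≠ 0)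
    (fun R : Polynomial D => R.natDegree) ⟨F, hF, hF0⟩
  have hmin : ∀ R ∈ J, R ≠ 0 → P.natDegree ≤ R.natDegree := by
    intro R hR hR0
    rcases le_total P.natDegree R.natDegree with h | h
    · exact h
    · exact hm ⟨hR, hR0⟩ h
  refine ⟨P, hP.1, hP.2, hmin, fun F hF => ?_⟩
  refine rg_pseudo J P hP.1 hP.2 hmin (F.natDegree + 1) F ?_ hF
  refine lt_of_le_of_lt Polynomial.degree_le_natDegree ?_
  rw [Nat.cast_lt]; omega

theorem rg_alg {D : Type*} [CommRing D] [IsDomain D] [CharZero D] (J : Ideal (Polynomial D))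
    (hp : J.IsPrime) (hJ : J ≠ ⊥) (hc : ∀ a : D, Polynomial.C a ∈ J → a = 0) :
    ∃ P ∈ J, P ≠ 0 ∧ P.derivative ∉ J ∧
      (∀ F ∈ J, ∃ (N : ℕ) (Q : Polynomial D),
        Polynomial.C (P.leadingCoeff ^ N) * F = Q * P) ∧
      ∀ b ∉ J, ∃ a : D, a ≠ 0 ∧ ∃ u : Polynomial D, Polynomial.C a - u * b ∈ J := by
  obtain ⟨P, hP, hP0, hmin, hdiv⟩ := rg_min J hJ
  have hpos : 0 < P.natDegree := by
    rw [Nat.pos_iff_ne_zero]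
    intro h
    obtain ⟨a, ha⟩ := Polynomial.natDegree_eq_zero.1 h
    rw [← ha] at hP hP0
    exact hP0 (by rw [hc a hP, Polynomial.C_0])
  refine ⟨P, hP, hP0, ?_, hdiv, ?_⟩
  · intro h
    have h1 := Polynomial.natDegree_derivative_lt hpos.ne'
    have h0 : P.derivative ≠ 0 := by
      intro h0
      exact hpos.ne' (Polynomial.derivative_eq_zero.1 h0)
    exact absurd (hmin _ h h0) (by omega)
  · intro b hb
    set K : Ideal (Polynomial D) := J ⊔ Ideal.span {b} with hK
    have hJK : J ≤ K := le_sup_left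
    have hbK : b ∈ K := (le_sup_right : Ideal.span {b} ≤ K) (Ideal.mem_span_singleton_self b)
    have hK0 : K ≠ ⊥ := fun h => hP0 (by simpa [h] using hJK hP)
    obtain ⟨B, hB, hB0, hBmin, hBdiv⟩ := rg_min K hK0
    have hlB : ∀ N, B.leadingCoeff ^ N ≠ 0 := fun N => pow_ne_zero _ (by simpa using hB0)
    have key : B.natDegree = 0 := by
      by_contra hne
      have hBJ : B ∉ J := by
        intro hBJ
        obtain ⟨N, Q, hQ⟩ := hBdiv b hbK
        have : Polynomial.C (B.leadingCoeff ^ N) * b ∈ J := hQ ▸ J.mul_mem_left _ hBJ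
        rcases hp.mem_or_mem this with h | h
        · exact hlB N (hc _ h)
        · exact hb h
      obtain ⟨N, Q, hQ⟩ := hBdiv P (hJK hP)
      have hQJ : Q ∈ J := by
        have : Q * B ∈ J := hQ ▸ J.mul_mem_left _ hP
        exact (hp.mem_or_mem this).resolve_right hBJ
      have hne0 : Polynomial.C (B.leadingCoeff ^ N) * P ≠ 0 :=
        mul_ne_zero (by simpa using hlB N) hP0
      have hQ0 : Q ≠ 0 := by
        rintro rfl
        exact hne0 (by rw [hQ, zero_mul])
      have h1 := hmin Q hQJ hQ0
      have h2 := congrArg Polynomial.natDegree hQ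
      rw [Polynomial.natDegree_C_mul (hlB N), Polynomial.natDegree_mul hQ0 hB0] at h2
      omega
    obtain ⟨a, ha⟩ := Polynomial.natDegree_eq_zero.1 key
    rw [← ha] at hB hB0
    refine ⟨a, fun h => hB0 (by rw [h, Polynomial.C_0]), ?_⟩
    obtain ⟨y, hy, z, hz, hyz⟩ := Submodule.mem_sup.1 hB
    obtain ⟨u, rfl⟩ := Ideal.mem_span_singleton'.1 hz
    exact ⟨u, by rw [← hyz]; simpa using hy⟩

/-! ### Restriction along a line -/

theorem rg_line (j : ℕ) : ∀ (Q P : Polynomial ℝ) (g : ℝ → ℝ), Continuous g →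
    (∀ t, Q.eval t * g t = P.eval t) → (∀ i < j, Q.coeff i = 0) →
    Q.coeff j * g 0 = P.coeff j := by
  induction j with
  | zero =>
    intro Q P g _ h _
    simpa [Polynomial.coeff_zero_eq_eval_zero] using h 0
  | succ j ih =>
    intro Q P g hg h hQ
    have hQ0 : Q.coeff 0 = 0 := hQ 0 (by omega)
    have hP0 : P.coeff 0 = 0 := by
      have := h 0
      rw [← Polynomial.coeff_zero_eq_eval_zero, ← Polynomial.coeff_zero_eq_eval_zero, hQ0] at this
      simpa using this.symm
    have hQX := Polynomial.divX_mul_X_add Q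
    have hPX := Polynomial.divX_mul_X_add P
    rw [hQ0, Polynomial.C_0, add_zero] at hQX
    rw [hP0, Polynomial.C_0, add_zero] at hPX
    have := ih Q.divX P.divX g hg ?_ ?_
    · simpa [Polynomial.coeff_divX] using this
    · have hfun : (fun t => Q.divX.eval t * g t) = fun t => P.divX.eval t := by
        refine Continuous.ext_on (dense_compl_singleton (0 : ℝ))
          (Q.divX.continuous.mul hg) P.divX.continuous ?_
        intro t ht
        have ht : t ≠ 0 := ht
        have h1 := h t
        rw [← hQX, ← hPX] at h1
        simp only [Polynomial.eval_mul, Polynomial.eval_X] at h1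
        apply mul_right_cancel₀ ht
        simp only
        rw [← h1]; ring
      exact fun t => congrFun hfun t
    · intro i hi
      rw [Polynomial.coeff_divX]
      exact hQ _ (by omega)

/-! ### Density near generic points -/

/-- Generic density property of a ring of continuous functions: for every prime `I` there is
`c ∉ I` such that every zero `v` of `I` with `c v ≠ 0` is a limit of zeros of `I` outside the
zero set of any given `b ∉ I`. -/
def RgDense (A Y : Type) [CommRing A] [TopologicalSpace Y] (ev : Y → A →+* ℝ) : Prop :=
  ∀ I : Ideal A, I.IsPrime → ∃ c, c ∉ I ∧ ∀ v, (∀ a ∈ I, ev v a = 0) → ev v c ≠ 0 →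
    ∀ b, b ∉ I → ∀ U ∈ nhds v, ∃ u ∈ U, (∀ a ∈ I, ev u a = 0) ∧ ev u b ≠ 0

/-- A simple root of a polynomial whose coefficients depend continuously on `y` persists. -/
theorem rg_root {A Y : Type} [CommRing A] [TopologicalSpace Y] (ev : Y → A →+* ℝ)
    (hev : ∀ a, Continuous fun y => ev y a) (P : Polynomial A) (v : Y) (s : ℝ)
    (h0 : P.eval₂ (ev v) s = 0) (h1 : P.derivative.eval₂ (ev v) s ≠ 0)
    (U : Set ℝ) (hU : U ∈ nhds s) :
    ∀ᶠ y in nhds v, ∃ t ∈ U, P.eval₂ (ev y) t = 0 := by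
  have hcont : ∀ t : ℝ, Continuous fun y => P.eval₂ (ev y) t := by
    intro t
    simp only [Polynomial.eval₂_eq_sum, Polynomial.sum_def]
    exact continuous_finsetSum _ fun i _ => (hev _).mul continuous_const
  have hroot : (P.map (ev v)).IsRoot s := by
    rw [Polynomial.IsRoot, Polynomial.eval_map, h0]
  obtain ⟨R, hR⟩ := Polynomial.dvd_iff_isRoot.2 hroot
  have hRs : R.eval s ≠ 0 := by
    rw [← Polynomial.eval_map, ← Polynomial.derivative_map, hR] at h1
    simpa [Polynomial.derivative_mul] using h1
  have hpos : {t | 0 < R.eval t * R.eval s} ∈ nhds s := by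
    apply (isOpen_lt continuous_const (R.continuous.mul continuous_const)).mem_nhds
    exact mul_self_pos.2 hRs
  obtain ⟨δ, hδ, hsub⟩ := Metric.nhds_basis_closedBall.mem_iff.1 (Filter.inter_mem hU hpos)
  have e1 : s - δ ∈ Metric.closedBall s δ := by
    rw [Real.closedBall_eq_Icc]; constructor <;> linarith
  have e2 : s + δ ∈ Metric.closedBall s δ := by
    rw [Real.closedBall_eq_Icc]; constructor <;> linarith
  have f1 : 0 < R.eval (s - δ) * R.eval s := (hsub e1).2
  have f2 : 0 < R.eval (s + δ) * R.eval s := (hsub e2).2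
  have hneg : P.eval₂ (ev v) (s - δ) * P.eval₂ (ev v) (s + δ) < 0 := by
    rw [← Polynomial.eval_map, ← Polynomial.eval_map, hR]
    simp only [Polynomial.eval_mul, Polynomial.eval_sub, Polynomial.eval_X, Polynomial.eval_C]
    have hs : 0 < R.eval s * R.eval s := mul_self_pos.2 hRs
    have f3 : 0 < R.eval (s - δ) * R.eval (s + δ) := by
      have := mul_pos f1 f2
      have h4 : 0 < (R.eval (s - δ) * R.eval (s + δ)) * (R.eval s * R.eval s) := by
        calc 0 < _ := this
          _ = _ := by ring
      exact (mul_pos_iff_of_pos_right hs).1 h4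
    have := mul_pos (mul_pos hδ hδ) f3
    nlinarith
  have hev2 : ∀ᶠ y in nhds v, P.eval₂ (ev y) (s - δ) * P.eval₂ (ev y) (s + δ) < 0 :=
    (isOpen_lt ((hcont _).mul (hcont _)) continuous_const).mem_nhds hneg
  filter_upwards [hev2] with y hy
  have hc : Continuous fun t => P.eval₂ (ev y) t := by
    simp only [← Polynomial.eval_map]
    exact Polynomial.continuous _
  have h00 : (0 : ℝ) ∈ Set.uIcc (P.eval₂ (ev y) (s - δ)) (P.eval₂ (ev y) (s + δ)) := by
    rw [Set.mem_uIcc]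
    rcases mul_neg_iff.1 hy with h | h
    · exact Or.inr ⟨h.2.le, h.1.le⟩
    · exact Or.inl ⟨h.1.le, h.2.le⟩
  obtain ⟨t, ht, htz⟩ := intermediate_value_uIcc hc.continuousOn h00
  refine ⟨t, (hsub ?_).1, htz⟩
  rw [Real.closedBall_eq_Icc]
  rwa [Set.uIcc_of_le (by linarith)] at ht

theorem rg_step {A Y : Type} [CommRing A] [TopologicalSpace Y] (ev : Y → A →+* ℝ)
    (hev : ∀ a, Continuous fun y => ev y a) (h : RgDense A Y ev) :
    RgDense (Polynomial A) (Y × ℝ) (fun z => Polynomial.eval₂RingHom (ev z.1) z.2) := by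
  intro I hI
  by_cases hne : ∃ v : Y × ℝ, ∀ a ∈ I, Polynomial.eval₂RingHom (ev v.1) v.2 a = 0
  swap
  · refine ⟨1, fun h1 => hI.ne_top ((Ideal.eq_top_iff_one I).2 h1), fun v hv => ?_⟩
    exact absurd ⟨v, hv⟩ hne
  obtain ⟨v0, hv0⟩ := hne
  set I' : Ideal A := I.comap Polynomial.C with hI'
  have hpI' : I'.IsPrime := Ideal.IsPrime.comap _
  obtain ⟨c, hcI, hc⟩ := h I' hpI'
  have hmapI : ∀ F : Polynomial A, (∀ i, F.coeff i ∈ I') → F ∈ I := fun F hF =>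
    Ideal.map_comap_le (Ideal.mem_map_C_iff.2 hF)
  have hZ : ∀ v : Y × ℝ, (∀ a ∈ I, Polynomial.eval₂RingHom (ev v.1) v.2 a = 0) →
      ∀ a ∈ I', ev v.1 a = 0 := by
    intro v hv a ha
    simpa using hv _ (Ideal.mem_comap.1 ha)
  by_cases hcase : ∀ F ∈ I, ∀ i, F.coeff i ∈ I'
  · refine ⟨Polynomial.C c, hcI, ?_⟩
    rintro ⟨v, s⟩ hv hcv b hb U hU
    obtain ⟨U1, hU1, U2, hU2, hsub⟩ := mem_nhds_prod_iff.1 hU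
    have : ∃ i, b.coeff i ∉ I' := by
      by_contra hcon
      push Not at hcon
      exact hb (hmapI b hcon)
    obtain ⟨i, hi⟩ := this
    obtain ⟨u, hu, huI, hub⟩ := hc v (hZ _ hv) (by simpa using hcv) _ hi U1 hU1
    have hb0 : b.map (ev u) ≠ 0 := by
      intro h0
      apply hub
      rw [← Polynomial.coeff_map, h0, Polynomial.coeff_zero]
    have hden : Dense ((b.map (ev u)).rootSet ℝ : Set ℝ)ᶜ :=
      ((Polynomial.rootSet_finite _ _).countable).dense_compl ℝ
    obtain ⟨t, ht, htU⟩ := hden.inter_nhds_nonempty hU2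
    refine ⟨(u, t), hsub ⟨hu, ?_⟩, ?_, ?_⟩
    · exact htU
    · intro F hF
      simp only [Polynomial.coe_eval₂RingHom, Polynomial.eval₂_eq_sum, Polynomial.sum_def]
      exact Finset.sum_eq_zero fun i _ => by rw [huI _ (hcase F hF i), zero_mul]
    · intro h0
      apply ht
      rw [Polynomial.mem_rootSet]
      refine ⟨hb0, ?_⟩
      rw [Polynomial.coe_aeval_eq_eval, Polynomial.eval_map]
      exact h0
  · push Not at hcase
    obtain ⟨F0, hF0, i0, hi0⟩ := hcase
    let mk := Ideal.Quotient.mk I'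
    have hmk0 : ∀ a, mk a = 0 ↔ a ∈ I' := fun a => Ideal.Quotient.eq_zero_iff_mem
    let φ : Polynomial A →+* Polynomial (A ⧸ I') := Polynomial.mapRingHom mk
    have hφs : Function.Surjective φ := Polynomial.map_surjective _ Ideal.Quotient.mk_surjective
    have hker : RingHom.ker φ ≤ I := by
      intro F hF
      apply hmapI
      intro i
      rw [← hmk0, ← Polynomial.coeff_map]
      have : F.map mk = 0 := hF
      rw [this, Polynomial.coeff_zero]
    have hmem : ∀ F, φ F ∈ I.map φ ↔ F ∈ I := by
      intro F
      rw [← Ideal.mem_comap, Ideal.comap_map_of_surjective' φ hφs, sup_eq_left.2 hker]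
    have hJp : (I.map φ).IsPrime := Ideal.map_isPrime_of_surjective hφs hker
    let ψ : A ⧸ I' →+* ℝ := Ideal.Quotient.lift I' (ev v0.1) (hZ v0 hv0)
    have : IsDomain (A ⧸ I') := Ideal.Quotient.isDomain I'
    have : CharZero (A ⧸ I') := ψ.charZero
    have hJ0 : I.map φ ≠ ⊥ := by
      intro h0
      have h1 : φ F0 = 0 := by
        have := (hmem F0).2 hF0
        rwa [h0] at this
      apply hi0
      rw [← hmk0, ← Polynomial.coeff_map]
      have : F0.map mk = 0 := h1
      rw [this, Polynomial.coeff_zero]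
    have hJC : ∀ a : A ⧸ I', Polynomial.C a ∈ I.map φ → a = 0 := by
      intro a ha
      obtain ⟨a, rfl⟩ := Ideal.Quotient.mk_surjective a
      have : φ (Polynomial.C a) ∈ I.map φ := by
        simpa [φ] using ha
      exact (hmk0 a).2 ((hmem _).1 this)
    obtain ⟨P', hP', hP0', hPd', hdiv, hres⟩ := rg_alg (I.map φ) hJp hJ0 hJC
    obtain ⟨P, rfl⟩ := hφs P'
    obtain ⟨l, hl⟩ := Ideal.Quotient.mk_surjective (φ P).leadingCoeff
    have hPI : P ∈ I := (hmem P).1 hP'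
    have hPd : P.derivative ∉ I := by
      intro hd
      apply hPd'
      have := (hmem _).2 hd
      simpa [φ, Polynomial.derivative_map] using this
    have hlI : l ∉ I' := by
      rw [← hmk0]
      intro h0
      apply hP0'
      rw [← Polynomial.leadingCoeff_eq_zero, ← hl]
      exact h0
    refine ⟨Polynomial.C c * P.derivative, fun hmm => ?_, ?_⟩
    · rcases hI.mem_or_mem hmm with h1 | h1
      · exact hcI h1
      · exact hPd h1
    rintro ⟨v, s⟩ hv hcv b hb U hU
    obtain ⟨U1, hU1, U2, hU2, hsub⟩ := mem_nhds_prod_iff.1 hU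
    rw [map_mul] at hcv
    have hcv1 : ev v c ≠ 0 := by simpa using left_ne_zero_of_mul hcv
    have hcv2 : P.derivative.eval₂ (ev v) s ≠ 0 := by simpa using right_ne_zero_of_mul hcv
    obtain ⟨a', ha0, u', hu'⟩ := hres (φ b) (fun hh => hb ((hmem b).1 hh))
    obtain ⟨a, rfl⟩ := Ideal.Quotient.mk_surjective a'
    obtain ⟨w, rfl⟩ := hφs u'
    have haI : a ∉ I' := fun hh => ha0 ((hmk0 a).2 hh)
    have hw : Polynomial.C a - w * b ∈ I := by
      rw [← hmem]
      simpa [φ] using hu'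
    have hroot := rg_root ev hev P v s (by simpa using hv P hPI) hcv2 U2 hU2
    obtain ⟨u, ⟨huU, t, htU, htz⟩, huI, hub⟩ := hc v (hZ _ hv) hcv1 (l * a)
      (fun hmm => (hpI'.mem_or_mem hmm).elim hlI haI) _ (Filter.inter_mem hU1 hroot)
    rw [map_mul] at hub
    have hul : ev u l ≠ 0 := left_ne_zero_of_mul hub
    have hua : ev u a ≠ 0 := right_ne_zero_of_mul hub
    have hZu : ∀ F ∈ I, F.eval₂ (ev u) t = 0 := by
      intro F hF
      obtain ⟨N, Q', hQ'⟩ := hdiv _ ((hmem F).2 hF)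
      obtain ⟨Q, rfl⟩ := hφs Q'
      have hk : φ (Polynomial.C (l ^ N) * F - Q * P) = 0 := by
        rw [map_sub, map_mul, map_mul, ← hQ', ← hl]
        simp [φ, mk]
      have hk2 : (Polynomial.C (l ^ N) * F - Q * P).eval₂ (ev u) t = 0 := by
        rw [Polynomial.eval₂_eq_sum, Polynomial.sum_def]
        refine Finset.sum_eq_zero fun i _ => ?_
        rw [huI _ ?_, zero_mul]
        rw [← hmk0, ← Polynomial.coeff_map]
        have : (Polynomial.C (l ^ N) * F - Q * P).map mk = 0 := hk
        rw [this, Polynomial.coeff_zero]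
      rw [Polynomial.eval₂_sub, Polynomial.eval₂_mul, Polynomial.eval₂_mul, htz, mul_zero,
        sub_zero, Polynomial.eval₂_C, map_pow] at hk2
      exact (mul_eq_zero.1 hk2).resolve_left (pow_ne_zero _ hul)
    refine ⟨(u, t), hsub ⟨huU, htU⟩, fun F hF => by simpa using hZu F hF, ?_⟩
    intro hb0
    have hb0 : b.eval₂ (ev u) t = 0 := by simpa using hb0
    have := hZu _ hw
    rw [Polynomial.eval₂_sub, Polynomial.eval₂_mul, hb0, mul_zero, sub_zero,
      Polynomial.eval₂_C] at this
    exact hua this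

theorem rg_dense (n : ℕ) :
    RgDense (MvPolynomial (Fin n) ℝ) (Fin n → ℝ) (fun x => eval x) := by
  induction n with
  | zero =>
    intro I hI
    refine ⟨1, fun h1 => hI.ne_top ((Ideal.eq_top_iff_one I).2 h1), ?_⟩
    intro v hv _ b hb U hU
    refine ⟨v, mem_of_mem_nhds hU, hv, fun h0 => hb ?_⟩
    rw [eq_C_of_isEmpty b] at h0 ⊢
    rw [eval_C] at h0
    rw [h0, C_0]
    exact I.zero_mem
  | succ n ih =>
    have hst := rg_step (fun x : Fin n → ℝ => (eval x : MvPolynomial (Fin n) ℝ →+* ℝ))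
      (fun a => MvPolynomial.continuous_eval a) ih
    intro I hI
    let e := (finSuccEquiv ℝ n).toRingEquiv
    have hee : ∀ (s : Fin n → ℝ) (y : ℝ) (f : MvPolynomial (Fin (n+1)) ℝ),
        eval (Fin.cons y s : Fin (n + 1) → ℝ) f =
          Polynomial.eval₂RingHom (eval s) y (e f) := by
      intro s y f
      rw [eval_eq_eval_mv_eval', Polynomial.eval_map]
      rfl
    have hp : (I.comap e.symm.toRingHom).IsPrime := Ideal.IsPrime.comap _
    have hmem : ∀ f, e f ∈ I.comap e.symm.toRingHom ↔ f ∈ I := by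
      intro f
      rw [Ideal.mem_comap]
      change e.symm (e f) ∈ I ↔ _
      rw [RingEquiv.symm_apply_apply]
    obtain ⟨c', hc', hc⟩ := hst _ hp
    obtain ⟨c, rfl⟩ := e.surjective c'
    refine ⟨c, fun h => hc' ((hmem c).2 h), ?_⟩
    intro v hv hcv b hb U hU
    obtain ⟨y, s, rfl⟩ : ∃ (y : ℝ) (s : Fin n → ℝ), v = Fin.cons y s :=
      ⟨v 0, Fin.tail v, (Fin.cons_self_tail v).symm⟩
    have hcont : Continuous fun z : (Fin n → ℝ) × ℝ => (Fin.cons z.2 z.1 : Fin (n+1) → ℝ) := by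
      refine continuous_pi fun i => ?_
      refine Fin.cases ?_ (fun j => ?_) i
      · simpa using continuous_snd
      · simp only [Fin.cons_succ]
        fun_prop
    obtain ⟨⟨u, t⟩, hu, huI, hub⟩ := hc (s, y) (fun a ha => by
      obtain ⟨a, rfl⟩ := e.surjective a
      have := hv a ((hmem a).1 ha)
      simpa only [hee] using this) (by simpa only [hee] using hcv) (e b)
      (fun h => hb ((hmem b).1 h)) _ (hcont.continuousAt.preimage_mem_nhds hU)
    refine ⟨Fin.cons t u, hu, fun a ha => ?_, ?_⟩
    · simp only [hee]
      exact huI _ ((hmem a).2 ha)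
    · simpa only [hee] using hub

/-! ### Restriction of a regulous function to a subvariety, and noetherianity -/

theorem rg_restrict (n k : ℕ) (g : (Fin n → ℝ) → ℝ) (hg : IsRegulous n k g)
    (I : Ideal (MvPolynomial (Fin n) ℝ)) (hne : ∃ v, ∀ a ∈ I, eval v a = 0) :
    ∃ a b : MvPolynomial (Fin n) ℝ, b ∉ I ∧
      ∀ v, (∀ f ∈ I, eval v f = 0) → eval v b * g v = eval v a := by
  classical
  obtain ⟨hcd, p, q, hq, hpq⟩ := hg
  obtain ⟨v0, hv0⟩ := hne
  obtain ⟨x, hx⟩ : ∃ x, eval x q ≠ 0 := by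
    by_contra hcon
    push Not at hcon
    exact hq (MvPolynomial.funext fun x => by simpa using hcon x)
  let w : Fin n → ℝ := x - v0
  let φ : MvPolynomial (Fin n) ℝ →+* Polynomial (MvPolynomial (Fin n) ℝ) :=
    eval₂Hom (Polynomial.C.comp C)
      (fun i => Polynomial.C (X i) + Polynomial.C (C (w i)) * Polynomial.X)
  have hφ : ∀ (v : Fin n → ℝ) (t : ℝ) (f : MvPolynomial (Fin n) ℝ),
      ((φ f).map (eval v)).eval t = eval (v + t • w) f := by
    intro v t f
    have : ((Polynomial.evalRingHom t).comp ((Polynomial.mapRingHom (eval v)).comp φ)) =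
        (eval (v + t • w) : MvPolynomial (Fin n) ℝ →+* ℝ) := by
      apply MvPolynomial.ringHom_ext
      · intro r; simp [φ]
      · intro i
        simp [φ]
        ring
    exact congrArg (fun h => h f) this
  have hex : ∃ j, (φ q).coeff j ∉ I := by
    by_contra hcon
    push Not at hcon
    have h0 : (φ q).map (eval v0) = 0 := by
      ext j
      rw [Polynomial.coeff_map, hv0 _ (hcon j), Polynomial.coeff_zero]
    have h1 := hφ v0 1 q
    rw [h0, Polynomial.eval_zero] at h1
    apply hx
    rw [h1]
    congr 2
    simp [w]
  refine ⟨(φ p).coeff (Nat.find hex), (φ q).coeff (Nat.find hex), Nat.find_spec hex, ?_⟩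
  intro v hv
  have := rg_line (Nat.find hex) ((φ q).map (eval v)) ((φ p).map (eval v))
    (fun t => g (v + t • w)) (hcd.continuous.comp (by fun_prop))
    (fun t => by rw [hφ, hφ]; exact hpq _)
    (fun i hi => by
      rw [Polynomial.coeff_map]
      exact hv _ (not_not.1 (Nat.find_min hex hi)))
  simpa [Polynomial.coeff_map] using this

theorem rg_noeth (n k : ℕ) (E : Set ((Fin n → ℝ) → ℝ)) (hE : ∀ g ∈ E, IsRegulous n k g)
    (I : Ideal (MvPolynomial (Fin n) ℝ)) :
    ∃ F : Finset ((Fin n → ℝ) → ℝ), (F : Set ((Fin n → ℝ) → ℝ)) ⊆ E ∧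
      ∀ x, (∀ f ∈ I, eval x f = 0) → (∀ g ∈ F, g x = 0) → ∀ g ∈ E, g x = 0 := by
  classical
  induction I using WellFoundedGT.induction with
  | ind I ih =>
  by_cases hne : ∃ v, ∀ a ∈ I, eval v a = 0
  swap
  · exact ⟨∅, by simp, fun x hx => absurd ⟨x, hx⟩ hne⟩
  have hlt : ∀ a ∉ I, I < I ⊔ Ideal.span {a} := by
    intro a ha
    refine lt_of_le_of_ne le_sup_left fun h => ha ?_
    rw [h]
    exact (le_sup_right : Ideal.span {a} ≤ _) (Ideal.mem_span_singleton_self a)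
  have hz : ∀ a x, (∀ f ∈ I, eval x f = 0) → eval x a = 0 →
      ∀ f ∈ I ⊔ Ideal.span {a}, eval x f = 0 := by
    intro a x hx ha f hf
    obtain ⟨y, hy, z, hz, rfl⟩ := Submodule.mem_sup.1 hf
    obtain ⟨u, rfl⟩ := Ideal.mem_span_singleton'.1 hz
    rw [map_add, map_mul, hx y hy, ha]; simp
  by_cases hI : I.IsPrime
  · choose! a b hb hab using fun g (hg : g ∈ E) => rg_restrict n k g (hE g hg) I hne
    by_cases hex : ∃ g ∈ E, a g ∉ I
    · obtain ⟨g, hg, hag⟩ := hex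
      obtain ⟨F, hFE, hF⟩ := ih _ (hlt _ hag)
      refine ⟨insert g F, ?_, fun x hx hgx => ?_⟩
      · rw [Finset.coe_insert]
        exact Set.insert_subset hg hFE
      · refine hF x (hz _ x hx ?_) fun g' hg' => hgx g' (Finset.mem_insert_of_mem hg')
        rw [← hab g hg x hx, hgx g (Finset.mem_insert_self _ _), mul_zero]
    · push Not at hex
      obtain ⟨c, hcI, hc⟩ := rg_dense n I hI
      obtain ⟨F, hFE, hF⟩ := ih _ (hlt _ hcI)
      refine ⟨F, hFE, fun x hx hgx => ?_⟩
      by_cases hcx : eval x c = 0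
      · exact hF x (hz _ x hx hcx) hgx
      · intro g hg
        by_contra hgne
        have hcont : Continuous g := (hE g hg).1.continuous
        obtain ⟨u, hu, huI, hub⟩ := hc x hx hcx (b g) (hb g hg) {y | g y ≠ 0}
          ((isOpen_ne_fun hcont continuous_const).mem_nhds hgne)
        have := hab g hg u huI
        rw [huI _ (hex g hg)] at this
        exact (mul_ne_zero hub hu) this
  · have hnt : I ≠ ⊤ := by
      rintro rfl
      obtain ⟨v, hv⟩ := hne
      simpa using hv 1 trivial
    rw [Ideal.isPrime_iff] at hI
    push Not at hI
    obtain ⟨a, b, hab, ha, hb⟩ := hI hnt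
    obtain ⟨F1, hF1E, hF1⟩ := ih _ (hlt _ ha)
    obtain ⟨F2, hF2E, hF2⟩ := ih _ (hlt _ hb)
    refine ⟨F1 ∪ F2, ?_, fun x hx hgx => ?_⟩
    · rw [Finset.coe_union]
      exact Set.union_subset hF1E hF2E
    · have := hx _ hab
      rw [map_mul] at this
      rcases mul_eq_zero.1 this with h | h
      · exact hF1 x (hz _ x hx h) fun g hg => hgx g (Finset.mem_union_left _ hg)
      · exact hF2 x (hz _ x hx h) fun g hg => hgx g (Finset.mem_union_right _ hg)

theorem rg_sum (n k : ℕ) (F : Finset ((Fin n → ℝ) → ℝ)) (hF : ∀ g ∈ F, IsRegulous n k g) :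
    IsRegulous n k (fun x => ∑ g ∈ F, g x ^ 2) := by
  classical
  induction F using Finset.induction_on with
  | empty => exact ⟨by simpa using contDiff_const, 0, 1, one_ne_zero, by simp⟩
  | insert g F hg ih =>
    obtain ⟨h1, p, q, hq, hpq⟩ := hF g (Finset.mem_insert_self _ _)
    obtain ⟨h2, p', q', hq', hpq'⟩ := ih fun g hg => hF g (Finset.mem_insert_of_mem hg)
    simp only [Finset.sum_insert hg]
    refine ⟨(h1.pow 2).add h2, p ^ 2 * q' + q ^ 2 * p', q ^ 2 * q',
      mul_ne_zero (pow_ne_zero _ hq) hq', fun x => ?_⟩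
    have e1 := hpq x
    have e2 := hpq' x
    simp only [map_mul, map_add, map_pow]
    rw [← e1, ← e2]
    ring

/-- **Regulous functions, Corollaire `cofkresthyp`**: every `k`-regulously closed subset
of `ℝⁿ`, i.e. every intersection of zero sets of an arbitrary family of `k`-regulous
functions, is the zero set of a single `k`-regulous function. -/
theorem regulous_closed_is_principal (n k : ℕ) (E : Set ((Fin n → ℝ) → ℝ))
    (hE : ∀ g ∈ E, IsRegulous n k g) :
    ∃ f : (Fin n → ℝ) → ℝ, IsRegulous n k f ∧
      (⋂ g ∈ E, {x : Fin n → ℝ | g x = 0}) = {x : Fin n → ℝ | f x = 0} := by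
  obtain ⟨F, hFE, hF⟩ := rg_noeth n k E hE ⊥
  refine ⟨fun x => ∑ g ∈ F, g x ^ 2, rg_sum n k F fun g hg => hE g (hFE hg), ?_⟩
  ext x
  simp only [Set.mem_iInter, Set.mem_ofPred_eq]
  constructor
  · intro h
    exact Finset.sum_eq_zero fun g hg => by rw [h g (hFE hg)]; simp
  · intro h
    rw [Finset.sum_eq_zero_iff_of_nonneg fun g _ => sq_nonneg _] at h
    refine hF x (fun f hf => ?_) fun g hg => by simpa using h g hg
    rw [(Submodule.mem_bot _).1 hf, map_zero]
end

section
/- Let n, k be natural numbers. The k-regulous topology on ℝⁿ is Noetherian: every decreasing sequence F₀ ⊇ F₁ ⊇ F₂ ⊇ … of subsets of ℝⁿ, in which each F_i is an intersection of zero sets of k-regulous functions, is eventually constant. -/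
open MvPolynomial

lemma rg_alg_elim {R : Type*} [CommRing R] (P : Ideal (Polynomial R)) [P.IsPrime]
    (g : Polynomial R) (hg : g ∈ P) (hg' : ∃ i, Polynomial.C (g.coeff i) ∉ P)
    (q : Polynomial R) (hq : q ∉ P) :
    ∃ q' : R, Polynomial.C q' ∉ P ∧ ∃ s, Polynomial.C q' - s * q ∈ P := by
  let P' : Ideal R := P.under R
  have hP' : ∀ r : R, r ∈ P' ↔ Polynomial.C r ∈ P := fun r => Iff.rfl
  have : P'.IsPrime := inferInstanceAs (P.under R).IsPrime
  have hmap : ∀ r : R, algebraMap (R ⧸ P') (Polynomial R ⧸ P) (Ideal.Quotient.mk P' r)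
      = Ideal.Quotient.mk P (Polynomial.C r) := fun r => rfl
  have hX : IsAlgebraic (R ⧸ P') (Ideal.Quotient.mk P Polynomial.X) := by
    refine ⟨g.map (Ideal.Quotient.mk P'), ?_, ?_⟩
    · intro h0
      obtain ⟨i, hi⟩ := hg'
      apply hi
      rw [← hP', ← Ideal.Quotient.eq_zero_iff_mem, ← Polynomial.coeff_map, h0,
        Polynomial.coeff_zero]
    · rw [Polynomial.aeval_def, Polynomial.eval₂_map]
      have : (algebraMap (R ⧸ P') (Polynomial R ⧸ P)).comp (Ideal.Quotient.mk P')
        = (Ideal.Quotient.mk P).comp Polynomial.C := rfl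
      rw [this, ← Polynomial.hom_eval₂, Polynomial.eval₂_C_X]
      exact Ideal.Quotient.eq_zero_iff_mem.2 hg
  have hall : ∀ w : Polynomial R, IsAlgebraic (R ⧸ P') (Ideal.Quotient.mk P w) := by
    intro w
    induction w using Polynomial.induction_on' with
    | add a b ha hb => rw [map_add]; exact ha.add hb
    | monomial n a =>
      rw [← Polynomial.C_mul_X_pow_eq_monomial, map_mul, map_pow, ← hmap]
      exact (isAlgebraic_algebraMap _).mul (hX.pow n)
  have hne := Ideal.comap_ne_bot_of_algebraic_mem (R := R ⧸ P')
    (I := Ideal.span {Ideal.Quotient.mk P q}) (x := Ideal.Quotient.mk P q)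
    (fun h => hq (Ideal.Quotient.eq_zero_iff_mem.1 h)) (Ideal.subset_span rfl) (hall q)
  obtain ⟨z, hz, hz0⟩ := (Submodule.ne_bot_iff _).1 hne
  obtain ⟨r, rfl⟩ := Ideal.Quotient.mk_surjective z
  rw [Ideal.mem_comap, hmap, Ideal.mem_span_singleton'] at hz
  obtain ⟨s, hs⟩ := hz
  obtain ⟨s, rfl⟩ := Ideal.Quotient.mk_surjective s
  refine ⟨r, fun h => hz0 (Ideal.Quotient.eq_zero_iff_mem.2 ((hP' r).2 h)), s, ?_⟩
  rw [← Ideal.Quotient.eq_zero_iff_mem, map_sub, map_mul, hs, sub_self]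

/-- points over the open set `c ≠ 0` with `g = 0` lie on `Z(P)`. -/
lemma rg_pseudo_s16 {R : Type*} [CommRing R] (P : Ideal (Polynomial R)) [P.IsPrime]
    (g : Polynomial R) (hg : g ∈ P) (hdeg : 1 ≤ g.natDegree)
    (hmin : ∀ u ∈ P, u.natDegree < g.natDegree → ∀ i, Polynomial.C (u.coeff i) ∈ P)
    (φ : Polynomial R →+* ℝ) (hφ : ∀ r, Polynomial.C r ∈ P → φ (Polynomial.C r) = 0)
    (hc : φ (Polynomial.C g.leadingCoeff) ≠ 0) (hg0 : φ g = 0) :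
    ∀ u ∈ P, φ u = 0 := by
  have key : ∀ d : ℕ, ∀ u ∈ P, u.natDegree = d → φ u = 0 := by
    intro d
    induction d using Nat.strong_induction_on with
    | _ d ih =>
      intro u hu hd
      by_cases hlt : u.natDegree < g.natDegree
      · have := hmin u hu hlt
        rw [u.as_sum_range_C_mul_X_pow, map_sum]
        exact Finset.sum_eq_zero fun i _ => by rw [map_mul, hφ _ (this i), zero_mul]
      · push Not at hlt
        set u1 := Polynomial.C g.leadingCoeff * u
          - Polynomial.C u.leadingCoeff * Polynomial.X ^ (u.natDegree - g.natDegree) * g with hu1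
        have h1 : u1 ∈ P := P.sub_mem (P.mul_mem_left _ hu) (P.mul_mem_left _ hg)
        have hdd : u1.natDegree < d := by
          have hle : u1.natDegree ≤ d := by
            refine (Polynomial.natDegree_sub_le _ _).trans (max_le ?_ ?_)
            · exact (Polynomial.natDegree_C_mul_le _ _).trans hd.le
            · refine (Polynomial.natDegree_mul_le).trans ?_
              have := Polynomial.natDegree_C_mul_X_pow_le u.leadingCoeff (u.natDegree - g.natDegree)
              omega
          refine lt_of_le_of_ne hle fun heq => ?_
          have hz : u1.coeff d = 0 := by
            rw [hu1, Polynomial.coeff_sub, Polynomial.coeff_C_mul, mul_assoc, Polynomial.coeff_C_mul,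
              Polynomial.coeff_X_pow_mul', if_pos (by omega)]
            rw [show d - (u.natDegree - g.natDegree) = g.natDegree by omega, ← hd]
            simp only [Polynomial.coeff_natDegree]; ring
          have : u1 = 0 := by
            rw [← Polynomial.leadingCoeff_eq_zero, Polynomial.leadingCoeff, heq, hz]
          rw [this, Polynomial.natDegree_zero] at heq
          omega
        have h2 := ih _ hdd u1 h1 rfl
        rw [hu1, map_sub, map_mul, map_mul, hg0, mul_zero, sub_zero] at h2
        exact (mul_eq_zero.1 h2).resolve_left hc
  exact fun u hu => key _ u hu rfl

lemma rg_ev {n : ℕ} (a : Fin n → ℝ) (b : ℝ) (w : Polynomial (MvPolynomial (Fin n) ℝ)) :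
    Polynomial.eval₂RingHom (eval a) b w
      = eval (Fin.cons b a : Fin (n+1) → ℝ) ((finSuccEquiv ℝ n).symm w) := by
  rw [eval_eq_eval_mv_eval', AlgEquiv.apply_symm_apply, Polynomial.eval_map]; rfl

lemma rg_ev_cont {n : ℕ} (w : Polynomial (MvPolynomial (Fin n) ℝ)) :
    Continuous fun z : (Fin n → ℝ) × ℝ => Polynomial.eval₂RingHom (eval z.1) z.2 w := by
  simp only [rg_ev]
  exact (MvPolynomial.continuous_eval _).comp (by fun_prop)

lemma rg_deriv {n : ℕ} (g : Polynomial (MvPolynomial (Fin n) ℝ)) (a : Fin n → ℝ) (b : ℝ) :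
    HasDerivAt (fun t => Polynomial.eval₂RingHom (eval a) t g)
      (Polynomial.eval₂RingHom (eval a) b g.derivative) b := by
  have h := (g.map (eval a)).hasDerivAt b
  have e1 : (fun t => Polynomial.eval₂RingHom (eval a) t g) =
      fun t => (g.map (eval a)).eval t := by
    funext t; rw [Polynomial.eval_map, Polynomial.coe_eval₂RingHom]
  have e2 : Polynomial.eval₂RingHom (eval a) b g.derivative =
      (g.map (eval a)).derivative.eval b := by
    rw [Polynomial.derivative_map, Polynomial.eval_map, Polynomial.coe_eval₂RingHom]
  rw [e1, e2]
  exact h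

/-- continuity of a simple root, abstract form. -/
lemma rg_root_aux {X : Type*} [TopologicalSpace X] (G : X → ℝ → ℝ)
    (hG : Continuous fun z : X × ℝ => G z.1 z.2) (a : X) (b d : ℝ) (h0 : G a b = 0)
    (hd : HasDerivAt (G a) d b) (h1 : d ≠ 0) (ε : ℝ) (hε : 0 < ε) :
    ∀ᶠ a' in nhds a, ∃ b' ∈ Metric.ball b ε, G a' b' = 0 := by
  have hb : Metric.ball b ε ∈ nhds b := Metric.ball_mem_nhds b hε
  obtain ⟨b1, hb1, hn1⟩ : ∃ b1 ∈ Metric.ball b ε, G a b1 < 0 := by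
    by_contra hcon
    push Not at hcon
    refine h1 (IsLocalMin.hasDerivAt_eq_zero ?_ hd)
    filter_upwards [hb] with t ht
    rw [h0]; exact hcon t ht
  obtain ⟨b2, hb2, hn2⟩ : ∃ b2 ∈ Metric.ball b ε, 0 < G a b2 := by
    by_contra hcon
    push Not at hcon
    refine h1 (IsLocalMax.hasDerivAt_eq_zero ?_ hd)
    filter_upwards [hb] with t ht
    rw [h0]; exact hcon t ht
  have c1 : Continuous fun a' : X => G a' b1 :=
    hG.comp (by fun_prop : Continuous fun a' : X => (a', b1))
  have c2 : Continuous fun a' : X => G a' b2 :=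
    hG.comp (by fun_prop : Continuous fun a' : X => (a', b2))
  filter_upwards [c1.continuousAt.eventually_lt continuousAt_const hn1,
    continuousAt_const.eventually_lt c2.continuousAt hn2] with a' e1 e2
  have c3 : Continuous (G a') :=
    hG.comp (by fun_prop : Continuous fun t : ℝ => (a', t))
  obtain ⟨t, ht, ht0⟩ := intermediate_value_uIcc (a := b1) (b := b2) c3.continuousOn
    (show (0:ℝ) ∈ _ from Set.mem_uIcc.2 (Or.inl ⟨e1.le, e2.le⟩))
  refine ⟨t, ?_, ht0⟩
  have := (convex_ball b ε).segment_subset hb1 hb2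
  rw [segment_eq_uIcc] at this
  exact this ht

/-- continuity of a simple root. -/
lemma rg_root_s16 {n : ℕ} (g : Polynomial (MvPolynomial (Fin n) ℝ)) (a : Fin n → ℝ) (b : ℝ)
    (h0 : Polynomial.eval₂RingHom (eval a) b g = 0)
    (h1 : Polynomial.eval₂RingHom (eval a) b g.derivative ≠ 0) (ε : ℝ) (hε : 0 < ε) :
    ∀ᶠ a' in nhds a, ∃ b' ∈ Metric.ball b ε, Polynomial.eval₂RingHom (eval a') b' g = 0 :=
  rg_root_aux (fun a' b' => Polynomial.eval₂RingHom (eval a') b' g) (rg_ev_cont g) a b _ h0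
    (rg_deriv g a b) h1 ε hε

/-- Density: in an irreducible `Z(P)`, off a proper closed subset `Z(h)`, every nonempty Zariski
open subset is Euclidean dense. -/
lemma rg_density (n : ℕ) : ∀ (P : Ideal (MvPolynomial (Fin n) ℝ)) [P.IsPrime],
    ∃ h, h ∉ P ∧ ∀ q, q ∉ P → ∀ x : Fin n → ℝ, (∀ u ∈ P, eval x u = 0) → eval x h ≠ 0 →
      ∃ᶠ y in nhds x, (∀ u ∈ P, eval y u = 0) ∧ eval y q ≠ 0 := by
  induction n with
  | zero =>
    intro P hP
    refine ⟨1, (Ideal.ne_top_iff_one P).1 hP.ne_top, fun q hq x hx _ => ?_⟩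
    have hxq : eval x q ≠ 0 := by
      intro h0
      apply hq
      have : q = 0 := MvPolynomial.funext fun y => by rw [Subsingleton.elim y x, h0, map_zero]
      rw [this]; exact P.zero_mem
    exact Filter.Eventually.frequently (by
      rw [nhds_discrete, Filter.eventually_pure]; exact ⟨hx, hxq⟩)
  | succ n ih =>
    intro P0 hP0
    let e := finSuccEquiv ℝ n
    let P : Ideal (Polynomial (MvPolynomial (Fin n) ℝ)) := P0.comap e.symm.toRingEquiv.toRingHom
    have : P.IsPrime := Ideal.comap_isPrime _ _
    have hPm : ∀ w, w ∈ P ↔ e.symm w ∈ P0 := fun w => Iff.rfl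
    let P' : Ideal (MvPolynomial (Fin n) ℝ) := P.comap Polynomial.C
    have : P'.IsPrime := Ideal.comap_isPrime _ _
    have hP' : ∀ r, r ∈ P' ↔ Polynomial.C r ∈ P := fun r => Iff.rfl
    -- reduce to polynomial form
    suffices H : ∃ h, h ∉ P ∧ ∀ q, q ∉ P → ∀ (a : Fin n → ℝ) (b : ℝ),
        (∀ u ∈ P, Polynomial.eval₂RingHom (eval a) b u = 0) →
        Polynomial.eval₂RingHom (eval a) b h ≠ 0 → ∀ ε > 0,
        ∃ a' b', a' ∈ Metric.ball a ε ∧ b' ∈ Metric.ball b ε ∧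
          (∀ u ∈ P, Polynomial.eval₂RingHom (eval a') b' u = 0) ∧
          Polynomial.eval₂RingHom (eval a') b' q ≠ 0 by
      obtain ⟨h, hh, H⟩ := H
      refine ⟨e.symm h, hh, fun q hq x hx hxh => ?_⟩
      have hxc : x = Fin.cons (x 0) (Fin.tail x) := (Fin.cons_self_tail x).symm
      have hu : ∀ y b a, y = (Fin.cons b a : Fin (n+1) → ℝ) → ∀ u, eval y u =
          Polynomial.eval₂RingHom (eval a) b (e u) := by
        rintro y b a rfl u
        rw [rg_ev]; simp [e]
      rw [(Metric.nhds_basis_ball (x := x)).frequently_iff]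
      intro ε hε
      obtain ⟨a', b', ha', hb', hz, hq'⟩ := H (e q) (by rw [hPm]; simpa [e] using hq)
        (Fin.tail x) (x 0) (fun u hu' => by
          rw [rg_ev, ← hxc]; exact hx _ hu') (by rw [rg_ev, ← hxc]; exact hxh) ε hε
      refine ⟨Fin.cons b' a', ?_, fun u hu' => ?_, ?_⟩
      · rw [Metric.mem_ball, dist_pi_lt_iff hε]
        intro i
        refine Fin.cases ?_ (fun j => ?_) i
        · simpa using hb'
        · rw [Metric.mem_ball, dist_pi_lt_iff hε] at ha'
          simpa [Fin.tail] using ha' j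
      · rw [hu _ _ _ rfl]; exact hz _ (by rw [hPm]; simpa [e] using hu')
      · rw [hu _ _ _ rfl]; exact hq'
    have hevC : ∀ (a : Fin n → ℝ) (b : ℝ) r,
        Polynomial.eval₂RingHom (eval a) b (Polynomial.C r) = eval a r := by
      intro a b r; simp
    obtain ⟨h', hh', IH⟩ := ih P'
    by_cases halg : ∃ g ∈ P, ∃ i, g.coeff i ∉ P'
    · -- algebraic case
      classical
      have hex : ∃ d, ∃ g ∈ P, (∃ i, g.coeff i ∉ P') ∧ g.natDegree = d := by
        obtain ⟨g, hg, hi⟩ := halg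
        exact ⟨_, g, hg, hi, rfl⟩
      obtain ⟨g, hg, hgi, hgd⟩ := Nat.find_spec hex
      have hmin : ∀ u ∈ P, u.natDegree < g.natDegree → ∀ i, Polynomial.C (u.coeff i) ∈ P := by
        intro u hu hlt i
        by_contra hcon
        exact Nat.find_min hex (hgd ▸ hlt) ⟨u, hu, ⟨i, hcon⟩, rfl⟩
      have hdeg : 1 ≤ g.natDegree := by
        by_contra hcon
        have h0 : g.natDegree = 0 := by omega
        obtain ⟨i, hi⟩ := hgi
        rw [Polynomial.eq_C_of_natDegree_eq_zero h0] at hi hg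
        apply hi
        rw [Polynomial.coeff_C]
        split_ifs
        · exact hg
        · exact P'.zero_mem
      have hc : g.leadingCoeff ∉ P' := by
        intro hcon
        have hel : g.eraseLead ∈ P := by
          rw [← Polynomial.self_sub_C_mul_X_pow]
          exact P.sub_mem hg (P.mul_mem_right _ hcon)
        have hlt : g.eraseLead.natDegree < g.natDegree := by
          have := Polynomial.eraseLead_natDegree_le g
          omega
        obtain ⟨i, hi⟩ := hgi
        apply hi
        by_cases hin : i = g.natDegree
        · rw [hin]; exact hcon
        · rw [← Polynomial.eraseLead_coeff_of_ne i hin]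
          exact hmin _ hel hlt i
      have hder : g.derivative ∉ P := by
        intro hcon
        have h1 := hmin _ hcon (Polynomial.natDegree_derivative_lt (by omega)) (g.natDegree - 1)
        rw [Polynomial.coeff_derivative, Nat.sub_add_cancel hdeg, Polynomial.coeff_natDegree,
          Polynomial.C_mul] at h1
        rcases (Ideal.IsPrime.mem_or_mem ‹P.IsPrime› h1) with h2 | h2
        · exact hc h2
        · have h3 : Polynomial.C (C (((g.natDegree - 1 : ℕ) : ℝ) + 1))
              ∈ P := by simpa using h2
          refine Ideal.IsPrime.ne_top ‹P.IsPrime› (Ideal.eq_top_of_isUnit_mem _ h3 ?_)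
          refine IsUnit.map _ (IsUnit.map _ (IsUnit.mk0 _ ?_))
          positivity
      refine ⟨Polynomial.C h' * Polynomial.C g.leadingCoeff * g.derivative, ?_, ?_⟩
      · intro hcon
        rcases Ideal.IsPrime.mem_or_mem ‹P.IsPrime› hcon with h1 | h1
        · rcases Ideal.IsPrime.mem_or_mem ‹P.IsPrime› h1 with h2 | h2
          · exact hh' h2
          · exact hc h2
        · exact hder h1
      · intro q hq a b hab hne ε hε
        rw [map_mul, map_mul, hevC, hevC] at hne
        obtain ⟨⟨hne1, hne2⟩, hne3⟩ : (eval a h' ≠ 0 ∧ eval a g.leadingCoeff ≠ 0) ∧ _ := by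
          simpa only [mul_ne_zero_iff] using hne
        obtain ⟨q', hq', s, hs⟩ := rg_alg_elim P g hg hgi q hq
        have hfr := IH q' hq' a (fun u hu => by rw [← hevC a b]; exact hab _ hu) hne1
        have hroot := rg_root_s16 g a b (hab g hg) hne3 ε hε
        have hlc : ∀ᶠ a' in nhds a, eval a' g.leadingCoeff ≠ 0 :=
          (MvPolynomial.continuous_eval _).continuousAt.eventually_ne hne2
        obtain ⟨a', ⟨hz, hqz⟩, ⟨b', hb', hr⟩, hl, hball⟩ :=
          (hfr.and_eventually (hroot.and (hlc.and (Metric.ball_mem_nhds a hε)))).exists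
        have hZ := rg_pseudo_s16 P g hg hdeg hmin (Polynomial.eval₂RingHom (eval a') b')
          (fun r hr => by rw [hevC]; exact hz r hr) (by rw [hevC]; exact hl) hr
        refine ⟨a', b', hball, hb', hZ, fun hcon => hqz ?_⟩
        have := hZ _ hs
        rw [map_sub, map_mul, hcon, mul_zero, sub_zero, hevC] at this
        exact this
    · -- transcendental case
      push Not at halg
      refine ⟨Polynomial.C h', hh', ?_⟩
      intro q hq a b hab hne ε hε
      rw [hevC] at hne
      obtain ⟨j, hj⟩ : ∃ j, q.coeff j ∉ P' := by
        by_contra hcon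
        push Not at hcon
        apply hq
        rw [q.as_sum_range_C_mul_X_pow]
        exact P.sum_mem fun i _ => P.mul_mem_right _ (hcon i)
      have hfr := IH _ hj a (fun u hu => by rw [← hevC a b]; exact hab _ hu) hne
      obtain ⟨a', ⟨hz, hqz⟩, hball⟩ := (hfr.and_eventually (Metric.ball_mem_nhds a hε)).exists
      have hq0 : q.map (eval a') ≠ 0 := by
        intro h0
        apply hqz
        rw [← Polynomial.coeff_map, h0, Polynomial.coeff_zero]
      have hfin : ((q.map (eval a')).roots.toFinset : Set ℝ).Finite := Finset.finite_toSet _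
      have hinf : (Metric.ball b ε).Infinite := by
        rw [Real.ball_eq_Ioo]; exact Set.Ioo_infinite (by linarith)
      obtain ⟨b', hb', hb''⟩ := hinf.exists_notMem_finite hfin
      refine ⟨a', b', hball, hb', fun u hu => ?_, fun hcon => hb'' ?_⟩
      · rw [u.as_sum_range_C_mul_X_pow, map_sum]
        exact Finset.sum_eq_zero fun i _ => by rw [map_mul, hevC, hz _ (halg u hu i), zero_mul]
      · simp only [Finset.mem_coe, Multiset.mem_toFinset]
        rw [Polynomial.mem_roots hq0, Polynomial.IsRoot, Polynomial.eval_map]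
        exact hcon

lemma rg_coeff (m : ℕ) : ∀ (A B : Polynomial ℝ) (g : ℝ → ℝ), Continuous g →
    (∀ t, A.eval t * g t = B.eval t) → (∀ j < m, A.coeff j = 0) →
    A.coeff m * g 0 = B.coeff m := by
  induction m with
  | zero =>
    intro A B g _ h _
    rw [Polynomial.coeff_zero_eq_eval_zero, Polynomial.coeff_zero_eq_eval_zero, h]
  | succ m ih =>
    intro A B g hg h hA
    have hA0 : A.coeff 0 = 0 := hA 0 (by omega)
    have hB0 : B.coeff 0 = 0 := by
      rw [Polynomial.coeff_zero_eq_eval_zero, ← h, ← Polynomial.coeff_zero_eq_eval_zero, hA0,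
        zero_mul]
    have eA : A = A.divX * Polynomial.X := by
      conv_lhs => rw [← A.divX_mul_X_add, hA0, Polynomial.C_0, add_zero]
    have eB : B = B.divX * Polynomial.X := by
      conv_lhs => rw [← B.divX_mul_X_add, hB0, Polynomial.C_0, add_zero]
    have hfun : (fun t => A.divX.eval t * g t) = fun t => B.divX.eval t := by
      refine Continuous.ext_on (dense_compl_singleton (0 : ℝ)) (by fun_prop) (by fun_prop) ?_
      intro t ht
      have ht : t ≠ 0 := ht
      have := h t
      rw [eA, eB, Polynomial.eval_mul, Polynomial.eval_mul, Polynomial.eval_X] at this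
      apply mul_right_cancel₀ ht
      linear_combination this
    have := ih A.divX B.divX g hg (fun t => congrFun hfun t) (fun j hj => by
      rw [Polynomial.coeff_divX]; exact hA _ (by omega))
    rwa [Polynomial.coeff_divX, Polynomial.coeff_divX] at this

/-- Continuous rational functions on `ℝⁿ` are hereditarily rational. -/
lemma rg_hered {n : ℕ} (f : (Fin n → ℝ) → ℝ) (hf : Continuous f) (p q : MvPolynomial (Fin n) ℝ)
    (hq : q ≠ 0) (h : ∀ x, eval x q * f x = eval x p) (S : Set (Fin n → ℝ)) (hS : S.Nonempty) :
    ∃ p' q' : MvPolynomial (Fin n) ℝ, (∃ x ∈ S, eval x q' ≠ 0) ∧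
      ∀ x ∈ S, eval x q' * f x = eval x p' := by
  classical
  obtain ⟨x0, hx0⟩ := hS
  obtain ⟨y, hy⟩ : ∃ y, eval y q ≠ 0 := by
    by_contra hcon
    push Not at hcon
    exact hq (MvPolynomial.funext fun y => by rw [hcon, map_zero])
  let v : Fin n → ℝ := y - x0
  let T : MvPolynomial (Fin n) ℝ → Polynomial (MvPolynomial (Fin n) ℝ) := fun w =>
    aeval (fun i => Polynomial.C (X i) + Polynomial.C (C (v i)) * Polynomial.X) w
  have hT : ∀ w x t, ((T w).map (eval x)).eval t = eval (x + t • v) w := by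
    intro w x t
    induction w using MvPolynomial.induction_on with
    | C a =>
      simp only [T, MvPolynomial.aeval_C, MvPolynomial.eval_C]
      rw [IsScalarTower.algebraMap_apply ℝ (MvPolynomial (Fin n) ℝ)
        (Polynomial (MvPolynomial (Fin n) ℝ))]
      simp
    | add a b ha hb =>
      simp only [T, map_add, Polynomial.map_add, Polynomial.eval_add] at ha hb ⊢
      rw [ha, hb]
    | mul_X a i ha =>
      simp only [T, map_mul, Polynomial.map_mul, Polynomial.eval_mul] at ha ⊢
      rw [ha]
      congr 1
      rw [aeval_X]
      simp only [Polynomial.map_add, Polynomial.map_mul, Polynomial.map_C, Polynomial.map_X,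
        Polynomial.eval_add, Polynomial.eval_mul, Polynomial.eval_C, Polynomial.eval_X, eval_X,
        eval_C, Pi.add_apply, Pi.smul_apply, smul_eq_mul]
      ring
  have hex : ∃ m, ∃ x ∈ S, eval x ((T q).coeff m) ≠ 0 := by
    by_contra hcon
    push Not at hcon
    apply hy
    have h1 : (T q).map (eval x0) = 0 := by
      ext m
      rw [Polynomial.coeff_map, hcon m x0 hx0, Polynomial.coeff_zero]
    have h2 := hT q x0 1
    rw [h1, Polynomial.eval_zero, one_smul] at h2
    have h3 : x0 + v = y := by simp [v]
    rw [← h3, ← h2]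
  refine ⟨(T p).coeff (Nat.find hex), (T q).coeff (Nat.find hex), Nat.find_spec hex, ?_⟩
  intro x hx
  have := rg_coeff (Nat.find hex) ((T q).map (eval x)) ((T p).map (eval x))
    (fun t => f (x + t • v)) (hf.comp (by fun_prop)) (fun t => by rw [hT, hT, h]) (fun j hj => by
      have := Nat.find_min hex hj
      push Not at this
      rw [Polynomial.coeff_map]; exact this x hx)
  simpa [Polynomial.coeff_map] using this

def rgZ {n : ℕ} (I : Ideal (MvPolynomial (Fin n) ℝ)) : Set (Fin n → ℝ) :=
  {x | ∀ u ∈ I, eval x u = 0}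

lemma rgZ_sup {n : ℕ} (I : Ideal (MvPolynomial (Fin n) ℝ)) (u : MvPolynomial (Fin n) ℝ)
    (x : Fin n → ℝ) : x ∈ rgZ (I ⊔ Ideal.span {u}) ↔ x ∈ rgZ I ∧ eval x u = 0 := by
  constructor
  · intro hx
    exact ⟨fun w hw => hx w (Ideal.mem_sup_left hw),
      hx u (Ideal.mem_sup_right (Ideal.subset_span rfl))⟩
  · rintro ⟨h1, h2⟩ w hw
    obtain ⟨a, ha, b, hb, rfl⟩ := Submodule.mem_sup.1 hw
    obtain ⟨c, rfl⟩ := Ideal.mem_span_singleton'.1 hb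
    rw [map_add, map_mul, h1 a ha, h2, mul_zero, add_zero]

lemma rg_lt_sup {n : ℕ} (I : Ideal (MvPolynomial (Fin n) ℝ)) (u : MvPolynomial (Fin n) ℝ)
    (hu : u ∉ I) : I < I ⊔ Ideal.span {u} :=
  lt_of_le_of_ne le_sup_left fun h => hu (by
    rw [h]; exact Ideal.mem_sup_right (Ideal.subset_span rfl))

lemma rg_main (n k : ℕ) (F : ℕ → Set (Fin n → ℝ))
    (hreg : ∀ i : ℕ, RegulouslyClosed n k (F i)) (hanti : ∀ i j, i ≤ j → F j ⊆ F i)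
    (I : Ideal (MvPolynomial (Fin n) ℝ)) :
    ∃ N : ℕ, ∀ i, N ≤ i → ∀ x ∈ rgZ I, x ∈ F i ↔ x ∈ F N := by
  induction I using WellFoundedGT.induction with
  | _ I ih =>
  by_cases hB : ∃ i u, u ∉ I ∧ ∀ x ∈ F i, x ∈ rgZ I → eval x u = 0
  · obtain ⟨i0, u, hu, hv⟩ := hB
    obtain ⟨N, hN⟩ := ih _ (rg_lt_sup I u hu)
    refine ⟨max i0 N, fun i hi x hx => ⟨fun hxi => hanti _ _ hi hxi, fun hxm => ?_⟩⟩
    have hxz : x ∈ rgZ (I ⊔ Ideal.span {u}) :=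
      (rgZ_sup I u x).2 ⟨hx, hv x (hanti _ _ (le_max_left _ _) hxm) hx⟩
    exact (hN i (le_trans (le_max_right _ _) hi) x hxz).2 (hanti _ _ (le_max_right _ _) hxm)
  push Not at hB
  have hreal : ∀ i u, (∀ x ∈ F i, x ∈ rgZ I → eval x u = 0) → u ∈ I := by
    intro i u h
    by_contra hu
    obtain ⟨x, hx, hxI, hne⟩ := hB i u hu
    exact hne (h x hx hxI)
  by_cases htop : I = ⊤
  · refine ⟨0, fun i _ x hx => ?_⟩
    have := hx 1 (by rw [htop]; trivial)
    simp at this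
  by_cases hprime : I.IsPrime
  · obtain ⟨h, hh, hdens⟩ := rg_density n I
    have hin : ∀ i, ∀ x ∈ rgZ I, eval x h ≠ 0 → x ∈ F i := by
      intro i x hx hxh
      obtain ⟨E, hE, hFE⟩ := hreg i
      rw [hFE]
      simp only [Set.mem_iInter]
      intro f hfE
      obtain ⟨hcd, p, q, hq, hpq⟩ := hE f hfE
      obtain ⟨p', q', ⟨z, hz, hzq⟩, hS⟩ := rg_hered f hcd.continuous p q hq hpq (rgZ I) ⟨x, hx⟩
      have hq' : q' ∉ I := fun hcon => hzq (hz _ hcon)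
      have hp' : p' ∈ I := hreal i p' fun w hw hwI => by
        have : f w = 0 := by
          rw [hFE] at hw
          simp only [Set.mem_iInter] at hw
          exact hw f hfE
        rw [← hS w hwI, this, mul_zero]
      have hfr := hdens q' hq' x hx hxh
      have hfr0 : ∃ᶠ w in nhds x, w ∈ {w | f w = 0} := hfr.mono fun w hw => by
        have := hS w hw.1
        rw [hw.1 p' hp'] at this
        exact (mul_eq_zero.1 this).resolve_left hw.2
      have hcl : IsClosed {w | f w = 0} := isClosed_eq hcd.continuous continuous_const
      exact hcl.closure_subset (mem_closure_iff_frequently.2 hfr0)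
    obtain ⟨N, hN⟩ := ih _ (rg_lt_sup I h hh)
    refine ⟨N, fun i hi x hx => ?_⟩
    by_cases hxh : eval x h = 0
    · exact hN i hi x ((rgZ_sup I h x).2 ⟨hx, hxh⟩)
    · exact ⟨fun _ => hin N x hx hxh, fun _ => hin i x hx hxh⟩
  · have : ∃ a b, a * b ∈ I ∧ a ∉ I ∧ b ∉ I := by
      by_contra hcon
      push Not at hcon
      exact hprime ⟨htop, fun {a b} hab => by
        by_cases ha : a ∈ I
        · exact Or.inl ha
        · exact Or.inr (hcon a b hab ha)⟩
    obtain ⟨a, b, hab, ha, hb⟩ := this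
    obtain ⟨N1, h1⟩ := ih _ (rg_lt_sup I a ha)
    obtain ⟨N2, h2⟩ := ih _ (rg_lt_sup I b hb)
    refine ⟨max N1 N2, fun i hi x hx => ?_⟩
    have := hx _ hab
    rw [map_mul] at this
    rcases mul_eq_zero.1 this with h0 | h0
    · have hz := (rgZ_sup I a x).2 ⟨hx, h0⟩
      rw [h1 i (by omega) x hz, h1 (max N1 N2) (by omega) x hz]
    · have hz := (rgZ_sup I b x).2 ⟨hx, h0⟩
      rw [h2 i (by omega) x hz, h2 (max N1 N2) (by omega) x hz]

/-- **Regulous functions, Corollaire `topregnoeth`**: the `k`-regulous topology on `ℝⁿ` is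
Noetherian: every decreasing sequence of `k`-regulously closed subsets of `ℝⁿ` is
eventually constant. -/
theorem regulous_topology_noetherian (n k : ℕ) (F : ℕ → Set (Fin n → ℝ))
    (hreg : ∀ i : ℕ, RegulouslyClosed n k (F i))
    (hdec : ∀ i : ℕ, F (i + 1) ⊆ F i) :
    ∃ N : ℕ, ∀ i : ℕ, N ≤ i → F i = F N := by
  have hanti : ∀ i j, i ≤ j → F j ⊆ F i := fun i j hij =>
    antitone_nat_of_succ_le (f := F) hdec hij
  obtain ⟨N, hN⟩ := rg_main n k F hreg hanti ⊥
  refine ⟨N, fun i hi => Set.ext fun x => hN i hi x ?_⟩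
  intro u hu
  rw [Ideal.mem_bot.1 hu, map_zero]
end

section
/- Let n, k be natural numbers. The Krull dimension of the ring R^k(ℝⁿ) of k-regulous functions on ℝⁿ equals n. -/
open MvPolynomial

/-- The ring `R^k(ℝⁿ)` of `k`-regulous functions, as a subring of the ring of all
functions `ℝⁿ → ℝ` with pointwise operations. -/
def regulousRing (n k : ℕ) : Subring ((Fin n → ℝ) → ℝ) where
  carrier := {f | IsRegulous n k f}
  one_mem' := ⟨contDiff_const, 1, 1, one_ne_zero, by simp⟩
  zero_mem' := ⟨contDiff_const, 0, 1, one_ne_zero, by simp⟩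
  mul_mem' := by
    rintro f g ⟨hf, p₁, q₁, hq₁, h₁⟩ ⟨hg, p₂, q₂, hq₂, h₂⟩
    refine ⟨hf.mul hg, p₁ * p₂, q₁ * q₂, mul_ne_zero hq₁ hq₂, fun x => ?_⟩
    simp only [eval_mul, Pi.mul_apply]
    linear_combination (eval x q₂ * g x) * h₁ x + eval x p₁ * h₂ x
  add_mem' := by
    rintro f g ⟨hf, p₁, q₁, hq₁, h₁⟩ ⟨hg, p₂, q₂, hq₂, h₂⟩
    refine ⟨hf.add hg, p₁ * q₂ + p₂ * q₁, q₁ * q₂, mul_ne_zero hq₁ hq₂, fun x => ?_⟩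
    simp only [eval_mul, eval_add, Pi.add_apply]
    linear_combination (eval x q₂) * h₁ x + (eval x q₁) * h₂ x
  neg_mem' := by
    rintro f ⟨hf, p, q, hq, h⟩
    refine ⟨hf.neg, -p, q, hq, fun x => ?_⟩
    simp only [map_neg, Pi.neg_apply]
    linear_combination -(h x)

/-! ### The Krull dimension of a domain over a field is at most its transcendence degree -/

theorem trdeg_add_one_le_of_surjective {F : Type} {B C : Type} [Field F] [CommRing B] [IsDomain B]
    [CommRing C] [IsDomain C] [Algebra F B] [Algebra F C] (φ : B →ₐ[F] C)
    (hφ : Function.Surjective φ) {f : B} (hf : f ≠ 0) (hf' : φ f = 0) :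
    Algebra.trdeg F C + 1 ≤ Algebra.trdeg F B := by
  obtain ⟨ι, x, hx⟩ := exists_isTranscendenceBasis' F C
  choose s hs using hφ
  have hcomp : φ ∘ (s ∘ x) = x := by ext i; simp [hs]
  have hy : AlgebraicIndependent F (s ∘ x) :=
    AlgebraicIndependent.of_comp φ (by rw [hcomp]; exact hx.1)
  have ht : Transcendental (Algebra.adjoin F (Set.range (s ∘ x))) f := by
    intro halg
    obtain ⟨q, hq0, hq⟩ := halg.exists_nonzero_coeff_and_aeval_eq_zero
      (mem_nonZeroDivisors_of_ne_zero hf)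
    have h1 : φ (algebraMap _ B (q.coeff 0)) = 0 := by
      obtain ⟨r, hr⟩ := Polynomial.X_dvd_sub_C (p := q)
      have h2 := congrArg (fun t => φ (Polynomial.aeval f t)) hr
      simp only [map_sub, map_mul, hq, Polynomial.aeval_X, hf', Polynomial.aeval_C, zero_mul,
        zero_sub, map_neg, neg_eq_zero] at h2
      exact h2
    have hmem := (q.coeff 0).2
    have hrange := Algebra.adjoin_range_eq_range_aeval F (s ∘ x)
    obtain ⟨P, hP⟩ := hrange.le hmem
    have h3 : aeval x P = 0 := by
      have : φ (aeval (s ∘ x) P) = aeval x P := by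
        rw [MvPolynomial.comp_aeval_apply]; exact congrArg (fun y => aeval y P) hcomp
      rw [← this]
      exact (congrArg φ hP).trans h1
    have h4 : P = 0 := (injective_iff_map_eq_zero _).1 hx.1 P h3
    apply hq0
    apply Subtype.ext
    rw [← hP, h4]; simp
  have := ((hy.option_iff_transcendental f).2 ht).cardinalMk_le_trdeg
  rw [Cardinal.mk_option] at this
  rwa [← hx.cardinalMk_eq_trdeg]

theorem length_le_of_trdeg {F A : Type} [Field F] [CommRing A] [Algebra F A]
    (l : LTSeries (PrimeSpectrum A)) : (l.length : Cardinal) ≤ Algebra.trdeg F A := by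
  have key : ∀ (i : ℕ) (hi : i < l.length + 1),
      Algebra.trdeg F (A ⧸ (l ⟨i, hi⟩).asIdeal) + i ≤ Algebra.trdeg F A := by
    intro i
    induction i with
    | zero =>
      intro hi
      simpa using trdeg_le_of_surjective (Ideal.Quotient.mkₐ F (l ⟨0, hi⟩).asIdeal)
        (Ideal.Quotient.mkₐ_surjective F _)
    | succ i ih =>
      intro hi
      refine le_trans ?_ (ih (by omega))
      have hlt : l ⟨i, by omega⟩ < l ⟨i + 1, hi⟩ := l.strictMono (by simp [Fin.lt_def])
      obtain ⟨hle, f, hf1, hf2⟩ := SetLike.lt_iff_le_and_exists.1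
        (show (l ⟨i, by omega⟩).asIdeal < (l ⟨i + 1, hi⟩).asIdeal from hlt)
      have := trdeg_add_one_le_of_surjective (Ideal.Quotient.factorₐ F hle)
        (Ideal.Quotient.factor_surjective hle) (f := Ideal.Quotient.mk _ f)
        (by rwa [Ne, Ideal.Quotient.eq_zero_iff_mem])
        (by simpa [Ideal.Quotient.eq_zero_iff_mem] using hf1)
      calc _ = (Algebra.trdeg F (A ⧸ (l ⟨i + 1, hi⟩).asIdeal) + 1) + i := by
            push_cast; rw [add_assoc, add_comm (1 : Cardinal)]
        _ ≤ _ := by gcongr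
  exact le_trans (by simp) (key l.length (by omega))

/-! ### Density -/

theorem dense_eval_ne_zero {n : ℕ} {q : MvPolynomial (Fin n) ℝ} (hq : q ≠ 0) :
    Dense {x : Fin n → ℝ | eval x q ≠ 0} := by
  rw [Metric.dense_iff]
  intro x r hr
  by_contra hcon
  apply hq
  refine MvPolynomial.funext_set (fun i => Metric.ball (x i) r) (fun i => ?_) ?_
  · rw [Real.ball_eq_Ioo]; exact Set.Ioo_infinite (by linarith)
  · intro y hy
    by_contra hne
    apply hcon
    refine ⟨y, ?_, by simpa using hne⟩
    rw [← ball_pi x hr] at *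
    exact hy

theorem eq_of_eq_off {n : ℕ} {q : MvPolynomial (Fin n) ℝ} (hq : q ≠ 0) {f g : (Fin n → ℝ) → ℝ}
    (hf : Continuous f) (hg : Continuous g) (h : ∀ x, eval x q * f x = eval x q * g x) : f = g :=
  Continuous.ext_on (dense_eval_ne_zero hq) hf hg fun x hx => mul_left_cancel₀ hx (h x)

theorem continuous_eval' {n : ℕ} (q : MvPolynomial (Fin n) ℝ) :
    Continuous fun x : Fin n → ℝ => eval x q := MvPolynomial.continuous_eval q

theorem contDiff_eval {n k : ℕ} (q : MvPolynomial (Fin n) ℝ) :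
    ContDiff ℝ k fun x : Fin n → ℝ => eval x q := by
  have := (AnalyticOnNhd.eval_mvPolynomial (𝕜 := ℝ) q).contDiff (n := k)
  exact this

instance regulous_isDomain (n k : ℕ) : IsDomain (regulousRing n k) := by
  have : NoZeroDivisors (regulousRing n k) := by
    constructor
    rintro ⟨f, hf, p₁, q₁, hq₁, h₁⟩ ⟨g, hg, p₂, q₂, hq₂, h₂⟩ hfg
    have hfg' : ∀ x, f x * g x = 0 := fun x => congrFun (congrArg Subtype.val hfg) x
    have hpp : p₁ * p₂ = 0 := by
      refine MvPolynomial.funext fun x => ?_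
      rw [eval_mul, ← h₁, ← h₂, map_zero]
      linear_combination (eval x q₁ * eval x q₂) * hfg' x
    rcases mul_eq_zero.1 hpp with h | h
    · left
      apply Subtype.ext
      exact eq_of_eq_off hq₁ hf.continuous continuous_const (g := fun _ => 0)
        (fun x => by rw [h₁, h]; simp)
    · right
      apply Subtype.ext
      exact eq_of_eq_off hq₂ hg.continuous continuous_const (g := fun _ => 0)
        (fun x => by rw [h₂, h]; simp)
  exact NoZeroDivisors.to_isDomain _

theorem eval_mem_regulous (n k : ℕ) (p : MvPolynomial (Fin n) ℝ) :
    (fun x => eval x p) ∈ regulousRing n k :=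
  ⟨contDiff_eval p, p, 1, one_ne_zero, fun x => by simp⟩

/-- Polynomials as regulous functions. -/
noncomputable def polyHom (n k : ℕ) : MvPolynomial (Fin n) ℝ →+* regulousRing n k :=
  RingHom.codRestrict
    (RingHom.pi fun x : Fin n → ℝ => (eval x : MvPolynomial (Fin n) ℝ →+* ℝ)) _ (eval_mem_regulous n k)

theorem polyHom_apply {n k : ℕ} (p : MvPolynomial (Fin n) ℝ) (x : Fin n → ℝ) :
    (polyHom n k p : (Fin n → ℝ) → ℝ) x = eval x p := rfl

noncomputable instance regulous_algebra (n k : ℕ) : Algebra ℝ (regulousRing n k) :=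
  ((polyHom n k).comp C).toAlgebra

theorem polyHom_eq_aeval (n k : ℕ) (p : MvPolynomial (Fin n) ℝ) :
    aeval (fun i => polyHom n k (X i)) p = polyHom n k p := by
  have : (aeval (R := ℝ) (fun i => polyHom n k (X i))).toRingHom = polyHom n k := by
    apply MvPolynomial.ringHom_ext
    · intro r
      simp; rfl
    · intro i; simp
  exact congrFun (congrArg DFunLike.coe this) p

theorem polyHom_injective (n k : ℕ) : Function.Injective (polyHom n k) := by
  intro p q h
  refine MvPolynomial.funext fun x => ?_
  rw [← polyHom_apply (k := k), h, polyHom_apply]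

theorem trdeg_regulous_le (n k : ℕ) : Algebra.trdeg ℝ (regulousRing n k) ≤ n := by
  set s : Set (regulousRing n k) := Set.range fun i : Fin n => polyHom n k (X i) with hs
  have hmem : ∀ p, polyHom n k p ∈ Algebra.adjoin ℝ s := by
    intro p
    rw [hs, Algebra.adjoin_range_eq_range_aeval]
    exact ⟨p, polyHom_eq_aeval n k p⟩
  have : Algebra.IsAlgebraic (Algebra.adjoin ℝ s) (regulousRing n k) := by
    constructor
    intro f
    obtain ⟨hf, p, q, hq, h⟩ := f.2
    let q' : Algebra.adjoin ℝ s := ⟨_, hmem q⟩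
    let p' : Algebra.adjoin ℝ s := ⟨_, hmem p⟩
    have hq' : q' ≠ 0 := by
      intro h0
      exact hq (polyHom_injective n k ((congrArg Subtype.val h0).trans (map_zero _).symm))
    refine ⟨Polynomial.C q' * Polynomial.X - Polynomial.C p', ?_, ?_⟩
    · intro h0
      have := congrArg (fun t => Polynomial.coeff t 1) h0
      simp [Polynomial.coeff_C] at this
      exact hq' this
    · simp only [map_sub, map_mul, Polynomial.aeval_C, Polynomial.aeval_X]
      rw [sub_eq_zero]
      apply Subtype.ext
      funext x
      exact h x
  refine (Algebra.IsAlgebraic.trdeg_le_cardinalMk ℝ s).trans ?_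
  refine Cardinal.mk_range_le.trans ?_
  simp

theorem krullDim_regulous_le (n k : ℕ) : ringKrullDim (regulousRing n k) ≤ n := by
  refine iSup_le fun l => ?_
  have := (length_le_of_trdeg (F := ℝ) l).trans (trdeg_regulous_le n k)
  exact_mod_cast this

/-! ### Restriction to a hyperplane -/

theorem eval_cons_zero {n : ℕ} (p : MvPolynomial (Fin (n + 1)) ℝ) (x : Fin n → ℝ) :
    eval (Fin.cons 0 x : Fin (n + 1) → ℝ) p = eval x ((finSuccEquiv ℝ n p).coeff 0) := by
  rw [eval_eq_eval_mv_eval', ← Polynomial.coeff_zero_eq_eval_zero, Polynomial.coeff_map]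

theorem X_zero_dvd_iff {n : ℕ} (p : MvPolynomial (Fin (n + 1)) ℝ) :
    X 0 ∣ p ↔ (finSuccEquiv ℝ n p).coeff 0 = 0 := by
  rw [← Polynomial.X_dvd_iff, ← finSuccEquiv_X_zero, map_dvd_iff]

theorem cancel_X {n : ℕ} {f : (Fin (n + 1) → ℝ) → ℝ} (hf : Continuous f)
    (q : MvPolynomial (Fin (n + 1)) ℝ) (m : ℕ) : ∀ p : MvPolynomial (Fin (n + 1)) ℝ,
    (∀ x, eval x (X 0 ^ m * q) * f x = eval x p) → ∃ p', ∀ x, eval x q * f x = eval x p' := by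
  induction m with
  | zero => intro p h; exact ⟨p, by simpa using h⟩
  | succ m ih =>
    intro p h
    have hd : X 0 ∣ p := by
      rw [X_zero_dvd_iff]
      refine MvPolynomial.funext fun x => ?_
      rw [← eval_cons_zero, ← h]
      simp
    obtain ⟨p', rfl⟩ := hd
    refine ih p' fun x => ?_
    refine congrFun (eq_of_eq_off (q := (X 0 : MvPolynomial (Fin (n + 1)) ℝ)) (X_ne_zero _)
      ((continuous_eval' _).mul hf) (continuous_eval' p') fun x => ?_) x
    have := h x
    simp only [eval_mul, eval_pow, eval_X, Pi.mul_apply] at this ⊢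
    linear_combination this

theorem restrict_mem {n k : ℕ} {f : (Fin (n + 1) → ℝ) → ℝ} (hf : f ∈ regulousRing (n + 1) k) :
    (fun x : Fin n → ℝ => f (Fin.cons 0 x)) ∈ regulousRing n k := by
  obtain ⟨hc, p, q, hq, h⟩ := hf
  have hfin : FiniteMultiplicity (X 0 : MvPolynomial (Fin (n + 1)) ℝ) q :=
    FiniteMultiplicity.of_prime_left (X_prime (i := 0)) hq
  obtain ⟨q', hqq, hq'⟩ := hfin.exists_eq_pow_mul_and_not_dvd
  rw [hqq] at h
  obtain ⟨p', hp'⟩ := cancel_X hc.continuous q' _ p h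
  refine ⟨?_, (finSuccEquiv ℝ n p').coeff 0, (finSuccEquiv ℝ n q').coeff 0, ?_, fun x => ?_⟩
  · refine hc.comp ?_
    rw [contDiff_pi]
    intro i
    refine Fin.cases ?_ (fun j => ?_) i
    · simpa using contDiff_const
    · simpa using contDiff_apply ℝ ℝ j
  · rwa [Ne, ← X_zero_dvd_iff]
  · rw [← eval_cons_zero, ← eval_cons_zero, hp']

/-- Restriction of regulous functions to the hyperplane `x₀ = 0`. -/
def restrictHom (n k : ℕ) : regulousRing (n + 1) k →+* regulousRing n k where
  toFun f := ⟨_, restrict_mem f.2⟩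
  map_one' := rfl
  map_zero' := rfl
  map_mul' _ _ := rfl
  map_add' _ _ := rfl

theorem extend_mem {n k : ℕ} {f : (Fin n → ℝ) → ℝ} (hf : f ∈ regulousRing n k) :
    (fun x : Fin (n + 1) → ℝ => f (fun i => x i.succ)) ∈ regulousRing (n + 1) k := by
  obtain ⟨hc, p, q, hq, h⟩ := hf
  refine ⟨?_, rename Fin.succ p, rename Fin.succ q, ?_, fun x => ?_⟩
  · refine hc.comp ?_
    rw [contDiff_pi]
    intro i
    exact contDiff_apply ℝ ℝ i.succ
  · rwa [Ne, map_eq_zero_iff _ (rename_injective _ (Fin.succ_injective n))]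
  · rw [eval_rename, eval_rename]; exact h _

theorem restrictHom_surjective (n k : ℕ) : Function.Surjective (restrictHom n k) := fun f =>
  ⟨⟨_, extend_mem f.2⟩, Subtype.ext (_root_.funext fun x => by simp [restrictHom])⟩

theorem le_krullDim_regulous (n k : ℕ) : (n : WithBot ℕ∞) ≤ ringKrullDim (regulousRing n k) := by
  induction n with
  | zero => simpa using ringKrullDim_nonneg_of_nontrivial
  | succ n ih =>
    have h := ringKrullDim_succ_le_of_surjective (restrictHom n k) (restrictHom_surjective n k)
      (r := polyHom (n + 1) k (X 0))
      (mem_nonZeroDivisors_of_ne_zero fun h0 => X_ne_zero (R := ℝ) (0 : Fin (n + 1))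
        (polyHom_injective (n + 1) k (h0.trans (map_zero _).symm)))
      (Subtype.ext (_root_.funext fun x => by simp [restrictHom, polyHom_apply]))
    refine le_trans ?_ h
    push_cast
    gcongr

/-- **Regulous functions, Proposition `dimensionregulue`**: the Krull dimension of the
ring `R^k(ℝⁿ)` of `k`-regulous functions on `ℝⁿ` equals `n`. -/
theorem krullDim_regulousRing (n k : ℕ) :
    ringKrullDim (regulousRing n k) = n := by
  exact le_antisymm (krullDim_regulous_le n k) (le_krullDim_regulous n k)
end
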